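/- Let k be a differential field of characteristic zero whose field of constants C is algebraically closed, and let K and M be finitely generated differential subfields of a common differential field extension of k, each containing k, such that K and M are free over k. Let C_K, C_M and C_{KM} denote the fields of constants of K, of M and of the compositum KM, respectively. If trdeg(C_{KM}|C_M) = l ≥ 1, then either C_K ≠ C, or there exist an intermediate differential field k ⊆ L ⊆ K with trdeg(L|k) ≥ l, a strongly normal extension F of k, and a differential field embedding of L into F fixing k pointwise. -/

import Mathlib

universe u

/-- A bundled differential field of characteristic zero: a field together with a derivation,
given as a raw function satisfying additivity and the Leibniz rule. -/
structure DFld : Type (u + 1) where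
  carrier : Type u
  [fieldInst : Field carrier]
  [charZeroInst : CharZero carrier]
  deriv : carrier → carrier
  deriv_add : ∀ a b, deriv (a + b) = deriv a + deriv b
  deriv_mul : ∀ a b, deriv (a * b) = deriv a * b + a * deriv b

attribute [instance] DFld.fieldInst DFld.charZeroInst

/-- The result of applying the monic linear differential operator
`∂^n + a_{n-1} ∂^{n-1} + ⋯ + a_1 ∂ + a_0` (with coefficients `a`) to `y`,
where the derivation is given by `D`. -/
def LApply {E : Type u} [Field E] (D : E → E) (n : ℕ) (a : Fin n → E) (y : E) : E :=
  D^[n] y + ∑ i : Fin n, a i * D^[(i : ℕ)] y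

/-- `diffGen D k S` is the smallest differential subfield (w.r.t. the derivation `D`)
containing the subfield `k` and the set `S`; i.e. the differential field `k⟨S⟩`. -/
def diffGen {E : Type u} [Field E] (D : E → E) (k : Subfield E) (S : Set E) : Subfield E :=
  sInf {F : Subfield E | k ≤ F ∧ S ⊆ ↑F ∧ ∀ x ∈ F, D x ∈ F}

/-- The subfield of constants of a differential subfield `k`: `{x ∈ k | D x = 0}`. -/
def constantsOf {E : Type u} [Field E] (D : Derivation ℤ E E) (k : Subfield E) : Subfield E where
  carrier := {x | x ∈ k ∧ D x = 0}
  zero_mem' := ⟨k.zero_mem, map_zero D⟩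
  one_mem' := ⟨k.one_mem, D.map_one_eq_zero⟩
  add_mem' := by
    rintro a b ⟨hak, ha0⟩ ⟨hbk, hb0⟩
    exact ⟨k.add_mem hak hbk, by rw [map_add, ha0, hb0, add_zero]⟩
  neg_mem' := by
    rintro a ⟨hak, ha0⟩
    exact ⟨k.neg_mem hak, by rw [map_neg, ha0, neg_zero]⟩
  mul_mem' := by
    rintro a b ⟨hak, ha0⟩ ⟨hbk, hb0⟩
    exact ⟨k.mul_mem hak hbk, by
      rw [Derivation.leibniz, ha0, hb0, smul_zero, smul_zero, add_zero]⟩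
  inv_mem' := by
    rintro x ⟨hxk, hx0⟩
    refine ⟨k.inv_mem hxk, ?_⟩
    by_cases h : x = 0
    · simp [h]
    · have h1 : D (x * x⁻¹) = 0 := by rw [mul_inv_cancel₀ h, D.map_one_eq_zero]
      rw [Derivation.leibniz, hx0, smul_zero, add_zero, smul_eq_mul] at h1
      exact (mul_eq_zero.mp h1).resolve_left h

/-- `F` is a Picard–Vessiot extension of `k` (inside a common differential field) for the
monic linear differential operator of order `n` with (lower-order) coefficients `a`:
both are differential subfields, the constants of `F` equal the constants of `k`,
the coefficients lie in `k`, and `F` is differentially generated over `k` by an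
`n`-dimensional vector space (over the constants) of solutions. -/
def IsPVWith {E : Type u} [Field E] (D : E → E) (k F : Subfield E) (n : ℕ)
    (a : Fin n → E) : Prop :=
  k ≤ F ∧ (∀ x ∈ k, D x ∈ k) ∧ (∀ x ∈ F, D x ∈ F) ∧
  (∀ x ∈ F, D x = 0 → x ∈ k) ∧
  (∀ i, a i ∈ k) ∧
  ∃ y : Fin n → E,
    (∀ i, y i ∈ F) ∧
    (∀ i, LApply D n a (y i) = 0) ∧
    (∀ c : Fin n → E, (∀ i, c i ∈ k ∧ D (c i) = 0) → (∑ i, c i * y i) = 0 → ∀ i, c i = 0) ∧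
    diffGen D k (Set.range y) = F

/-- `F` is a Picard–Vessiot extension of `k` for some monic linear differential operator. -/
def IsPV {E : Type u} [Field E] (D : E → E) (k F : Subfield E) : Prop :=
  ∃ (n : ℕ) (a : Fin n → E), IsPVWith D k F n a

/-- Relative version: the differential subfield `F` is a Picard–Vessiot extension
of the differential subfield `kb ≤ F`. -/
def IsPVRel {E : Type u} [Field E] (D : E → E) (kb F : Subfield E)
    (hF : ∀ x ∈ F, D x ∈ F) : Prop :=
  IsPV (fun x : ↥F => (⟨D ↑x, hF ↑x x.2⟩ : ↥F)) (Subfield.comap F.subtype kb) ⊤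

/-- The ambient differential field (with derivation `D`) is a strongly normal extension of
its differential subfield `k`: it is finitely generated as a field extension of `k`, has no
new constants, and every differential embedding over `k` into a differential field extension
`M` lands in the compositum of the image of the base copy with the constants of `M`. -/
def IsSN {E : Type u} [Field E] (D : E → E) (k : Subfield E) : Prop :=
  (∀ x ∈ k, D x ∈ k) ∧
  (∃ s : Finset E, Subfield.closure (↑k ∪ ↑s) = (⊤ : Subfield E)) ∧
  (∀ x : E, D x = 0 → x ∈ k) ∧
  ∀ (M : DFld.{u}) (ι σ : E →+* M.carrier),
    (∀ x, ι (D x) = M.deriv (ι x)) →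
    (∀ x, σ (D x) = M.deriv (σ x)) →
    (∀ x ∈ k, σ x = ι x) →
    ∀ e : E, σ e ∈ Subfield.closure (Set.range ι ∪ {m : M.carrier | M.deriv m = 0})

/-- Relative version: the differential subfield `F` is a strongly normal extension of the
differential subfield `kb ≤ F`. -/
def IsSNRel {E : Type u} [Field E] (D : E → E) (kb F : Subfield E)
    (hF : ∀ x ∈ F, D x ∈ F) : Prop :=
  IsSN (fun x : ↥F => (⟨D ↑x, hF ↑x x.2⟩ : ↥F)) (Subfield.comap F.subtype kb)

/-- `K` is a finite field extension of the subfield `M`. -/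
def FinExt {E : Type u} [Field E] (M K : Subfield E) : Prop :=
  ∃ h : M ≤ K,
    letI : Algebra ↥M ↥K := (Subfield.inclusion h).toAlgebra
    Module.Finite ↥M ↥K

/-- The transcendence degree of the subfield `K` over the subfield `k`, as the supremum of the
cardinalities of subsets of `K` that are algebraically independent over `k`. -/
noncomputable def trdegOf {E : Type u} [Field E] (k K : Subfield E) : Cardinal.{u} :=
  ⨆ s : {s : Set E // s ⊆ (K : Set E) ∧ AlgebraicIndependent ↥k (fun x : ↥s => (x : E))},
    Cardinal.mk ↥(s.1)

/-- `K` and `M` are free over `k`: every finite subset of `K` that is algebraically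
independent over `k` remains algebraically independent over `M`. -/
def FreeOver {E : Type u} [Field E] (k K M : Subfield E) : Prop :=
  ∀ s : Finset E, (↑s : Set E) ⊆ (K : Set E) →
    AlgebraicIndependent ↥k (fun x : ↥(↑s : Set E) => (x : E)) →
    AlgebraicIndependent ↥M (fun x : ↥(↑s : Set E) => (x : E))

/-- `K` is a `k`-irreducible differential field: it is a finitely generated differential field
extension of `k` of transcendence degree at least 1, and every intermediate differential field
`k ⊂ M ⊆ K` has transcendence degree `0` or `trdeg(K|k)` over `k`. -/
def IsIrred {E : Type u} [Field E] (D : E → E) (k K : Subfield E) : Prop :=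
  (∃ s : Finset E, diffGen D k ↑s = K) ∧
  1 ≤ trdegOf k K ∧
  ∀ M : Subfield E, (∀ x ∈ M, D x ∈ M) → k < M → M ≤ K →
    trdegOf k M = 0 ∨ trdegOf k M = trdegOf k K

/-- `Kf` is a `d`-solvable extension of `k`: there is a tower of differential fields starting
at (a copy of) `k`, each step being a finite algebraic extension or a Picard–Vessiot extension
for an operator of order at most `d`, whose top contains (the copy of) `Kf`. -/
def IsDSolvable {E : Type u} [Field E] (D : E → E) (k Kf : Subfield E) (d : ℕ) : Prop :=
  ∃ (Ω : DFld.{u}) (j : E →+* Ω.carrier),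
    (∀ x, j (D x) = Ω.deriv (j x)) ∧
    ∃ (r : ℕ) (T : Fin (r + 1) → Subfield Ω.carrier),
      T 0 = Subfield.map j k ∧
      Subfield.map j Kf ≤ T (Fin.last r) ∧
      (∀ i, ∀ x ∈ T i, Ω.deriv x ∈ T i) ∧
      ∀ i : Fin r,
        FinExt (T i.castSucc) (T i.succ) ∨
        ∃ n ≤ d, ∃ a : Fin n → Ω.carrier, IsPVWith Ω.deriv (T i.castSucc) (T i.succ) n a

/-- `Kn` is generated over `kb`, as a differential field with the same constants, by one
solution `z` of an inhomogeneous equation `L(y) = b` (with `L` monic over `kb` of order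
`n ≤ d` and `b ∈ kb`) together with an `n`-dimensional space (over the constants) of
solutions of `L(y) = 0`. -/
def IsPVInhomLe {E : Type u} [Field E] (D : E → E) (kb Kn : Subfield E) (d : ℕ) : Prop :=
  kb ≤ Kn ∧ (∀ x ∈ kb, D x ∈ kb) ∧ (∀ x ∈ Kn, D x ∈ Kn) ∧
  (∀ x ∈ Kn, D x = 0 → x ∈ kb) ∧
  ∃ n, n ≤ d ∧ ∃ (a : Fin n → E) (b z : E) (y : Fin n → E),
    (∀ i, a i ∈ kb) ∧ b ∈ kb ∧ z ∈ Kn ∧ (∀ i, y i ∈ Kn) ∧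
    LApply D n a z = b ∧
    (∀ i, LApply D n a (y i) = 0) ∧
    (∀ c : Fin n → E, (∀ i, c i ∈ kb ∧ D (c i) = 0) → (∑ i, c i * y i) = 0 → ∀ i, c i = 0) ∧
    diffGen D kb (insert z (Set.range y)) = Kn

/-- `Kf` is a `d⁺`-solvable extension of `k`. -/
def IsDPlusSolvable {E : Type u} [Field E] (D : E → E) (k Kf : Subfield E) (d : ℕ) : Prop :=
  ∃ (Ω : DFld.{u}) (j : E →+* Ω.carrier),
    (∀ x, j (D x) = Ω.deriv (j x)) ∧
    ∃ (r : ℕ) (T : Fin (r + 1) → Subfield Ω.carrier),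
      T 0 = Subfield.map j k ∧
      Subfield.map j Kf ≤ T (Fin.last r) ∧
      (∀ i, ∀ x ∈ T i, Ω.deriv x ∈ T i) ∧
      ∀ i : Fin r,
        FinExt (T i.castSucc) (T i.succ) ∨ IsPVInhomLe Ω.deriv (T i.castSucc) (T i.succ) d

/-- `TSet D kb K` is the set of elements of `K` annihilated by some monic linear differential
operator with coefficients in `kb`. -/
def TSet {E : Type u} [Field E] (D : E → E) (kb K : Subfield E) : Set E :=
  {x | x ∈ K ∧ ∃ (n : ℕ) (a : Fin n → E), (∀ i, a i ∈ kb) ∧ LApply D n a x = 0}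

/-!
Work over an algebraically closed `F ⊇ k` that is algebraic over `k`, and replace `K` and `M` by
their algebraic closures `Q` and `M'`. Freeness becomes linear disjointness of `Q` and `M'` over
`F`, so a constant of `KM` is a quotient of elements of `M' ⊗ Q`, and by the Wronskian criterion the
coefficients from `Q` are the unique solution of a linear system with coefficients in `M'`.
Taking enough independent copies of this system, the solution comes to lie in the field generated by
constants and a finitely generated differential field of parameters linearly disjoint from `Q`
over `F`. Specialising the parameters yields a finitely generated differential subalgebra `A` of
`Q` whose images under differential homomorphisms are controlled, up to constants, by one finitely
generated differential algebra over a finite extension of `k`.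

A differential field `N ⊇ Q` without new constants, obtained from a maximal differential ideal,
contains all homomorphic images of `A` needed, and the differential `k`-homomorphisms `A → N`
generate a strongly normal extension of `k`: a constant-coefficient combination that agrees with a
homomorphism at every specialisation of the constants agrees with it identically. Hence the
differential subfield `L'` of `Q` generated by the images of `A → Q` embeds into a strongly normal
extension, and the constants of `KM` lie in `M' L'`.

As `L'` is stable under `Aut(Q / K)`, it is algebraic over `L := L' ∩ K`. Constants that are
algebraically independent over the constants of `M` are algebraically independent over `M`, and they
are algebraic over `M L`; this forces `trdeg(L / k) ≥ l`.
-/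

open scoped Differential TensorProduct

namespace DiffField

/-- A ring homomorphism between differential rings that commutes with the derivations. -/
def IsDiffHom {A B : Type*} [CommRing A] [CommRing B] [Differential A] [Differential B]
    (f : A →+* B) : Prop :=
  ∀ x, f x′ = (f x)′

theorem IsDiffHom.comp {A B C : Type*} [CommRing A] [CommRing B] [CommRing C] [Differential A]
    [Differential B] [Differential C] {g : B →+* C} {f : A →+* B} (hg : IsDiffHom g)
    (hf : IsDiffHom f) : IsDiffHom (g.comp f) := fun x => by
  rw [RingHom.comp_apply, hf, hg, RingHom.comp_apply]

theorem isDiffHom_algebraMap (A B : Type*) [CommRing A] [CommRing B] [Algebra A B]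
    [Differential A] [Differential B] [DifferentialAlgebra A B] : IsDiffHom (algebraMap A B) :=
  fun x => (deriv_algebraMap x).symm

theorem differentialAlgebra_trans (A B C : Type*) [CommRing A] [CommRing B] [CommRing C]
    [Differential A] [Differential B] [Differential C] [Algebra A B] [Algebra B C] [Algebra A C]
    [IsScalarTower A B C] [DifferentialAlgebra A B] [DifferentialAlgebra B C] :
    DifferentialAlgebra A C :=
  ⟨fun x => by simp only [IsScalarTower.algebraMap_apply A B C, deriv_algebraMap]⟩

/-- The derivation induced on a subring that is stable under the derivation. -/
abbrev differentialOfStable {A S : Type*} [CommRing A] [Differential A] [SetLike S A]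
    [SubringClass S A] (s : S) (hs : ∀ x ∈ s, x′ ∈ s) : Differential s :=
  ⟨Derivation.mk'
    { toFun := fun x => ⟨(x : A)′, hs x x.2⟩
      map_add' := fun x y => Subtype.ext (by simp)
      map_smul' := fun n x => Subtype.ext (by simp) }
    fun x y => Subtype.ext (by simp)⟩

theorem exists_differential_of_formallyEtale (S T : Type u) [CommRing S] [CommRing T]
    [Algebra S T] [Algebra.FormallyEtale S T] [Differential S] :
    ∃ _ : Differential T, DifferentialAlgebra S T := by
  let D₀ : Derivation ℤ S T := (Algebra.linearMap S T).compDer Differential.deriv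
  let e := KaehlerDifferential.tensorKaehlerEquivOfFormallyEtale ℤ S T
  let l : T ⊗[S] Ω[S⁄ℤ] →ₗ[T] T := D₀.liftKaehlerDifferential.liftBaseChange T
  let D : Derivation ℤ T T := (l ∘ₗ e.symm.toLinearMap).compDer (KaehlerDifferential.D ℤ T)
  let _ : Differential T := ⟨D⟩
  refine ⟨⟨D⟩, ⟨fun a => ?_⟩⟩
  change l (e.symm (KaehlerDifferential.D ℤ T (algebraMap S T a))) = _
  rw [KaehlerDifferential.tensorKaehlerEquivOfFormallyEtale_symm_D_algebraMap]
  simp [l, D₀]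

theorem IsDiffHom.of_isLocalization {R A B : Type*} [CommRing R] [CommRing A] [CommRing B]
    [Algebra R A] (M : Submonoid R) [IsLocalization M A] [Differential R] [Differential A]
    [Differential B] [DifferentialAlgebra R A] {f : A →+* B}
    (hf : IsDiffHom (f.comp (algebraMap R A))) : IsDiffHom f := by
  have hf' (r : R) : f (algebraMap R A r)′ = (f (algebraMap R A r))′ := by
    rw [deriv_algebraMap]; exact hf r
  intro a
  obtain ⟨r, s, rfl⟩ := IsLocalization.exists_mk'_eq M a
  have hs : IsUnit (f (algebraMap R A s)) := (IsLocalization.map_units A s).map f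
  have hmul : IsLocalization.mk' A r s * algebraMap R A s = algebraMap R A r :=
    IsLocalization.mk'_spec A r s
  have h₁ := congrArg f (congrArg (·′) hmul)
  have h₂ := congrArg (·′) (congrArg f hmul)
  simp only [Derivation.leibniz, smul_eq_mul, map_add, map_mul, hf'] at h₁ h₂
  exact hs.mul_left_cancel (by linear_combination h₁ - h₂)

theorem deriv_inv {A : Type*} [Field A] [Differential A] (y : A) : (y⁻¹)′ = -y′ / y ^ 2 := by
  by_cases hy : y = 0
  · simp [hy]
  have h : (y * y⁻¹)′ = 0 := by rw [mul_inv_cancel₀ hy, Derivation.map_one_eq_zero]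
  rw [Derivation.leibniz, smul_eq_mul, smul_eq_mul] at h
  field_simp at h ⊢
  linear_combination h

theorem deriv_smul {Q A : Type*} [CommRing Q] [CommRing A] [Algebra Q A] [Differential Q]
    [Differential A] [DifferentialAlgebra Q A] (q : Q) (a : A) : (q • a)′ = q′ • a + q • a′ := by
  rw [Algebra.smul_def, Algebra.smul_def, Algebra.smul_def, Derivation.leibniz, deriv_algebraMap,
    smul_eq_mul, smul_eq_mul]
  ring

section TensorProduct

variable (Q A B : Type*) [CommRing Q] [CommRing A] [CommRing B] [Algebra Q A] [Algebra Q B]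
  [Differential Q] [Differential A] [Differential B] [DifferentialAlgebra Q A]
  [DifferentialAlgebra Q B]

/-- The additive map `a ⊗ b ↦ a′ ⊗ b + a ⊗ b′` underlying the derivation of a tensor product. -/
noncomputable def tensorDeriv : A ⊗[Q] B →+ A ⊗[Q] B :=
  TensorProduct.liftAddHom
    (AddMonoidHom.mk' (fun a => AddMonoidHom.mk' (fun b => a′ ⊗ₜ[Q] b + a ⊗ₜ[Q] b′)
      (fun x y => by simp only [TensorProduct.tmul_add, map_add]; abel))
      (fun x y => by
        ext b
        simp only [AddMonoidHom.mk'_apply, AddMonoidHom.add_apply, map_add,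
          TensorProduct.add_tmul]
        abel))
    (fun q a b => by
      simp only [AddMonoidHom.mk'_apply, deriv_smul, TensorProduct.add_tmul,
        TensorProduct.tmul_add, TensorProduct.tmul_smul, ← TensorProduct.smul_tmul']
      abel)

/-- The derivation of the tensor product of two differential algebras, determined by the
Leibniz rule `(a ⊗ b)′ = a′ ⊗ b + a ⊗ b′`. -/
noncomputable abbrev tensorDifferential : Differential (A ⊗[Q] B) :=
  ⟨Derivation.mk' (tensorDeriv Q A B).toIntLinearMap (by
    intro x y
    simp only [AddMonoidHom.coe_toIntLinearMap, smul_eq_mul]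
    induction x with
    | zero => simp
    | add x₁ x₂ h₁ h₂ => simp only [add_mul, map_add, h₁, h₂, mul_add]; abel
    | tmul a b =>
      induction y with
      | zero => simp
      | add y₁ y₂ h₁ h₂ => simp only [add_mul, map_add, h₁, h₂, mul_add]; abel
      | tmul a₂ b₂ =>
        rw [Algebra.TensorProduct.tmul_mul_tmul]
        change (a * a₂)′ ⊗ₜ[Q] (b * b₂) + (a * a₂) ⊗ₜ[Q] (b * b₂)′ =
          a ⊗ₜ b * (a₂′ ⊗ₜ b₂ + a₂ ⊗ₜ b₂′) + a₂ ⊗ₜ b₂ * (a′ ⊗ₜ b + a ⊗ₜ b′)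
        simp only [Derivation.leibniz, smul_eq_mul, TensorProduct.add_tmul,
          TensorProduct.tmul_add, mul_add, Algebra.TensorProduct.tmul_mul_tmul, mul_comm a₂,
          mul_comm b₂]
        abel)⟩

attribute [local instance] tensorDifferential

theorem deriv_tmul (a : A) (b : B) : (a ⊗ₜ[Q] b)′ = a′ ⊗ₜ[Q] b + a ⊗ₜ[Q] b′ := rfl

theorem differentialAlgebra_tensorProduct_left : DifferentialAlgebra A (A ⊗[Q] B) :=
  ⟨fun a => by simp [Algebra.TensorProduct.algebraMap_apply, deriv_tmul]⟩

theorem isDiffHom_includeRight :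
    IsDiffHom (Algebra.TensorProduct.includeRight : B →ₐ[Q] A ⊗[Q] B).toRingHom := fun b => by
  simp [deriv_tmul]

theorem isDiffHom_of_tensorProduct {C : Type*} [CommRing C] [Differential C]
    {f : A ⊗[Q] B →+* C}
    (hA : ∀ a, f (a′ ⊗ₜ 1) = (f (a ⊗ₜ 1))′) (hB : ∀ b, f (1 ⊗ₜ b′) = (f (1 ⊗ₜ b))′) :
    IsDiffHom f := by
  intro x
  have hf (a : A) (b : B) : f (a ⊗ₜ b) = f (a ⊗ₜ 1) * f (1 ⊗ₜ b) := by
    rw [← map_mul, Algebra.TensorProduct.tmul_mul_tmul, mul_one, one_mul]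
  induction x with
  | zero => simp only [map_zero]
  | add x y hx hy => simp only [map_add, hx, hy]
  | tmul a b =>
    rw [deriv_tmul, map_add, hf, hf a b′, hf a b, hA, hB, Derivation.leibniz, smul_eq_mul,
      smul_eq_mul]
    ring

end TensorProduct

attribute [local instance] tensorDifferential

/-- The subfield of constants of a differential field. -/
def constants (T : Type*) [Field T] [Differential T] : Subfield T where
  carrier := {x | x′ = 0}
  zero_mem' := map_zero _
  one_mem' := Derivation.map_one_eq_zero _
  add_mem' {a b} (ha : a′ = 0) (hb : b′ = 0) := by simp [ha, hb]
  neg_mem' {a} (ha : a′ = 0) := by simp [ha]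
  mul_mem' {a b} (ha : a′ = 0) (hb : b′ = 0) := by simp [ha, hb]
  inv_mem' a (ha : a′ = 0) := by simp [ha, deriv_inv]

theorem mem_constants {T : Type*} [Field T] [Differential T] {x : T} :
    x ∈ constants T ↔ x′ = 0 := Iff.rfl

theorem IsDiffHom.map_mem_constants {A B : Type*} [Field A] [Field B] [Differential A]
    [Differential B] {f : A →+* B} (hf : IsDiffHom f) {x : A} (hx : x ∈ constants A) :
    f x ∈ constants B := by
  rw [mem_constants, ← hf, mem_constants.mp hx, map_zero]

theorem exists_algHom_apply_ne_zero (Q A : Type*) [Field Q] [IsAlgClosed Q] [CommRing A]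
    [Algebra Q A] [Algebra.FiniteType Q A] {c : A} (hc : ¬ IsNilpotent c) :
    ∃ φ : A →ₐ[Q] Q, φ c ≠ 0 := by
  let L := Localization.Away c
  have : Algebra.FiniteType Q L := Algebra.FiniteType.trans (S := A) inferInstance
    (inferInstanceAs (Algebra.FiniteType A (Localization.Away c)))
  have : Nontrivial L := by
    rw [← not_subsingleton_iff_nontrivial,
      IsLocalization.subsingleton_iff (S := L) (M := Submonoid.powers c)]
    exact hc
  obtain ⟨m, hm⟩ := Ideal.exists_maximal L
  let := Ideal.Quotient.field m
  have : Algebra.FiniteType Q (L ⧸ m) :=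
    Algebra.FiniteType.trans (S := L) inferInstance inferInstance
  have : Module.Finite Q (L ⧸ m) := finite_of_finite_type_of_isJacobsonRing Q (L ⧸ m)
  let e := AlgEquiv.ofBijective (Algebra.ofId Q (L ⧸ m))
    IsAlgClosed.algebraMap_bijective_of_isIntegral
  let ψ : L →ₐ[Q] Q := e.symm.toAlgHom.comp (Ideal.Quotient.mkₐ Q m)
  exact ⟨ψ.comp (IsScalarTower.toAlgHom Q A L),
    ((IsLocalization.Away.algebraMap_isUnit c).map ψ).ne_zero⟩

section evalRight

variable {Q A : Type*} (T : Type*) [Field Q] [CommRing A] [Algebra Q A] [CommRing T] [Algebra Q T]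

/-- Evaluation of the second factor of `T ⊗ A` at a `Q`-point of `A`. -/
noncomputable def evalRight (ν : A →ₐ[Q] Q) : T ⊗[Q] A →ₐ[T] T :=
  Algebra.TensorProduct.lift (AlgHom.id T T) ((Algebra.ofId Q T).comp ν) fun _ _ => .all _ _

theorem evalRight_tmul (ν : A →ₐ[Q] Q) (t : T) (a : A) :
    evalRight T ν (t ⊗ₜ a) = ν a • t := by
  simp [evalRight, Algebra.ofId_apply, Algebra.smul_def, mul_comm]

theorem exists_ne_zero_forall_evalRight_ne_zero {x : T ⊗[Q] A} (hx : x ≠ 0) :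
    ∃ a : A, a ≠ 0 ∧ ∀ ν : A →ₐ[Q] Q, ν a ≠ 0 → evalRight T ν x ≠ 0 := by
  let b := Module.Free.chooseBasis Q T
  let e := TensorProduct.equivFinsuppOfBasisLeft (N := A) b
  obtain ⟨i, hi⟩ : ∃ i, e x i ≠ 0 := by
    contrapose! hx
    exact e.map_eq_zero_iff.mp (Finsupp.ext hx)
  refine ⟨e x i, hi, fun ν hν h => hν ?_⟩
  have key (y : T ⊗[Q] A) : ν (e y i) = b.repr (evalRight T ν y) i := by
    induction y with
    | zero => simp
    | add y z hy hz => simp only [map_add, Finsupp.add_apply, hy, hz]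
    | tmul t a =>
      simp [e, evalRight_tmul, mul_comm]
  rw [key, h, map_zero, Finsupp.zero_apply]

end evalRight

theorem exists_evalRight_ne_zero {Q A T : Type*} [Field Q] [IsAlgClosed Q] [CommRing A]
    [IsDomain A] [Algebra Q A] [Algebra.FiniteType Q A] [CommRing T] [Algebra Q T]
    {x y : T ⊗[Q] A} (hx : x ≠ 0) (hy : y ≠ 0) :
    ∃ ν : A →ₐ[Q] Q, evalRight T ν x ≠ 0 ∧ evalRight T ν y ≠ 0 := by
  obtain ⟨a, ha, hxa⟩ := exists_ne_zero_forall_evalRight_ne_zero T hx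
  obtain ⟨b, hb, hyb⟩ := exists_ne_zero_forall_evalRight_ne_zero T hy
  obtain ⟨ν, hν⟩ := exists_algHom_apply_ne_zero Q A (c := a * b)
    (fun h => mul_ne_zero ha hb h.eq_zero)
  rw [map_mul] at hν
  exact ⟨ν, hxa ν (left_ne_zero_of_mul hν), hyb ν (right_ne_zero_of_mul hν)⟩

theorem baseChange_mono {R A : Type*} (B : Type*) [CommRing R] [CommRing A] [CommRing B]
    [Algebra R A] [Algebra R B] {S S' : Subalgebra R A} (h : S ≤ S') :
    S.baseChange B ≤ S'.baseChange B := by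
  rintro _ ⟨x, rfl⟩
  refine ⟨Algebra.TensorProduct.map (AlgHom.id B B) (Subalgebra.inclusion h) x, ?_⟩
  exact DFunLike.congr_fun (Algebra.TensorProduct.map_comp (AlgHom.id B B) (AlgHom.id B B)
    S'.val (Subalgebra.inclusion h)).symm x

theorem isDomain_tensorProduct (Q A T : Type*) [Field Q] [IsAlgClosed Q] [CommRing A] [IsDomain A]
    [Algebra Q A] [CommRing T] [IsDomain T] [Algebra Q T] : IsDomain (T ⊗[Q] A) := by
  have : NoZeroDivisors (T ⊗[Q] A) := by
    refine ⟨fun {x y} hxy => or_iff_not_and_not.mpr fun ⟨hx, hy⟩ => ?_⟩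
    obtain ⟨A₁, hA₁, hx₁⟩ := exists_fg_and_mem_baseChange x
    obtain ⟨A₂, hA₂, hy₂⟩ := exists_fg_and_mem_baseChange y
    let A₀ := A₁ ⊔ A₂
    have : Algebra.FiniteType Q A₀ := A₀.fg_iff_finiteType.mp (hA₁.sup hA₂)
    let j : T ⊗[Q] A₀ →ₐ[T] T ⊗[Q] A := Algebra.TensorProduct.map (AlgHom.id T T) A₀.val
    have hj : Function.Injective j :=
      Module.Flat.lTensor_preserves_injective_linearMap _ Subtype.val_injective
    obtain ⟨x, rfl⟩ : x ∈ j.range := baseChange_mono T le_sup_left hx₁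
    obtain ⟨y, rfl⟩ : y ∈ j.range := baseChange_mono T le_sup_right hy₂
    obtain ⟨ν, hνx, hνy⟩ := exists_evalRight_ne_zero (x := x) (y := y)
      (fun h => hx (by simp [h])) (fun h => hy (by simp [h]))
    refine mul_ne_zero hνx hνy ?_
    rw [← map_mul, hj (a₁ := x * y) (a₂ := 0) (by simpa using hxy), map_zero]
  exact NoZeroDivisors.to_isDomain _

/-- A differential field extension of `Q`, bundled, remembering a subfield `F` of `Q`. -/
structure DiffExt (F Q : Type u) [Field F] [Field Q] [Algebra F Q] [Differential Q] where
  /-- The underlying field. -/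
  carrier : Type u
  [field : Field carrier]
  [differential : Differential carrier]
  [algebraBase : Algebra F carrier]
  [algebra : Algebra Q carrier]
  [isScalarTower : IsScalarTower F Q carrier]
  [differentialAlgebra : DifferentialAlgebra Q carrier]

attribute [instance] DiffExt.field DiffExt.differential DiffExt.algebraBase DiffExt.algebra
  DiffExt.isScalarTower DiffExt.differentialAlgebra

theorem exists_amalgam (F Q A T : Type u) [Field F] [Field Q] [Algebra F Q] [IsAlgClosed Q]
    [Field A] [Field T] [Differential Q] [Differential A] [Differential T] [Algebra Q A]
    [Algebra Q T] [DifferentialAlgebra Q A] [DifferentialAlgebra Q T] :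
    ∃ (W : DiffExt F Q) (a : A →ₐ[Q] W.carrier) (t : T →ₐ[Q] W.carrier),
      IsDiffHom a.toRingHom ∧ IsDiffHom t.toRingHom ∧
        Function.Injective (Algebra.TensorProduct.productMap a t) := by
  have : IsDomain (A ⊗[Q] T) := isDomain_tensorProduct Q T A
  have : Algebra.FormallyEtale (A ⊗[Q] T) (FractionRing (A ⊗[Q] T)) :=
    .of_isLocalization (nonZeroDivisors _)
  obtain ⟨_, _⟩ := exists_differential_of_formallyEtale (A ⊗[Q] T) (FractionRing (A ⊗[Q] T))
  have := differentialAlgebra_tensorProduct_left Q A T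
  let j : A ⊗[Q] T →ₐ[Q] FractionRing (A ⊗[Q] T) := IsScalarTower.toAlgHom _ _ _
  have hj : IsDiffHom j.toRingHom := isDiffHom_algebraMap _ _
  have := differentialAlgebra_trans Q A (A ⊗[Q] T)
  have := differentialAlgebra_trans Q (A ⊗[Q] T) (FractionRing (A ⊗[Q] T))
  let _ : Algebra F (FractionRing (A ⊗[Q] T)) := ((algebraMap Q _).comp (algebraMap F Q)).toAlgebra
  have : IsScalarTower F Q (FractionRing (A ⊗[Q] T)) := .of_algebraMap_eq fun _ => rfl
  refine ⟨⟨FractionRing (A ⊗[Q] T)⟩, j.comp Algebra.TensorProduct.includeLeft,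
    j.comp Algebra.TensorProduct.includeRight, hj.comp (isDiffHom_algebraMap A (A ⊗[Q] T)),
    hj.comp (isDiffHom_includeRight Q A T), ?_⟩
  have : Algebra.TensorProduct.productMap (j.comp Algebra.TensorProduct.includeLeft)
      (j.comp Algebra.TensorProduct.includeRight) = j :=
    Algebra.TensorProduct.ext' fun a b => by
      simp only [Algebra.TensorProduct.productMap_apply_tmul, AlgHom.comp_apply, ← map_mul,
        Algebra.TensorProduct.includeLeft_apply, Algebra.TensorProduct.includeRight_apply,
        Algebra.TensorProduct.tmul_mul_tmul, mul_one, one_mul]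
  rw [this]
  exact IsFractionRing.injective (A ⊗[Q] T) (FractionRing (A ⊗[Q] T))

section UniqueSolution

variable {ι Q A : Type*}

/-- The homogeneous linear system over `Q` whose equations are the rows `r ∈ S` has a
one-dimensional solution space, spanned by the solution `v` with `i₀`-th coordinate `1`. The rows
may have coefficients in any `Q`-module. -/
structure IsUniqueSolution [Fintype ι] [Field Q] [AddCommGroup A] [Module Q A]
    (S : Set (ι → A)) (v : ι → Q) (i₀ : ι) : Prop where
  apply_eq_one : v i₀ = 1
  sum_eq_zero : ∀ r ∈ S, ∑ i, v i • r i = 0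
  eq_smul : ∀ z : ι → Q, (∀ r ∈ S, ∑ i, z i • r i = 0) → z = z i₀ • v

theorem IsUniqueSolution.eq_zero [Fintype ι] [Field Q] [AddCommGroup A] [Module Q A]
    {S : Set (ι → A)} {v : ι → Q} {i₀ : ι} (h : IsUniqueSolution S v i₀) {z : ι → Q}
    (hz₀ : z i₀ = 0) (hz : ∀ r ∈ S, ∑ i, z i • r i = 0) : z = 0 := by
  rw [h.eq_smul z hz, hz₀, zero_smul]

theorem eq_zero_of_linearIndependent_erase [DecidableEq ι] [Field Q] [AddCommGroup A] [Module Q A]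
    {ρ : ι → A} {s : Finset ι} {i₀ : s} (hli : LinearIndependent Q (fun i : s.erase i₀ => ρ i))
    {w : s → Q} (hw₀ : w i₀ = 0) (hw : ∑ i, w i • ρ i = 0) : w = 0 := by
  let e (i : s.erase i₀) : s := ⟨i, Finset.mem_of_mem_erase i.2⟩
  have mem_range {i : s} (hi : i ≠ i₀) : i ∈ Set.range e :=
    ⟨⟨i, Finset.mem_erase.mpr ⟨fun h => hi (Subtype.ext h), i.2⟩⟩, rfl⟩
  have hsum : ∑ i, w (e i) • ρ (e i) = 0 := by
    rw [← hw]
    refine Fintype.sum_of_injective e (fun _ _ h => Subtype.ext (congrArg (·.1) h)) _ _ ?_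
      fun _ => rfl
    intro i hi
    rw [not_not.mp (mt mem_range hi), hw₀, zero_smul]
  funext i
  by_cases hi : i = i₀
  · rw [hi, hw₀, Pi.zero_apply]
  · obtain ⟨j, rfl⟩ := mem_range hi
    exact Fintype.linearIndependent_iff.mp hli _ hsum j

theorem exists_isUniqueSolution [Finite ι] [Field Q] [AddCommGroup A] [Module Q A] {ρ : ι → A}
    (h : ¬ LinearIndependent Q ρ) :
    ∃ (s : Finset ι) (v : s → Q) (i₀ : s), IsUniqueSolution {fun i : s => ρ i} v i₀ := by
  classical
  cases nonempty_fintype ι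
  obtain ⟨s, hs, hmin⟩ := exists_minimal_of_wellFoundedLT
    (fun s : Finset ι => ¬ LinearIndependent Q (fun i : s => ρ i))
    ⟨Finset.univ, fun h' => h (h'.comp (fun i => ⟨i, Finset.mem_univ i⟩)
      fun i j hij => congrArg Subtype.val hij)⟩
  obtain ⟨g, hg, i₀, hi₀⟩ := Fintype.not_linearIndependent_iff.mp hs
  refine ⟨s, (g i₀)⁻¹ • g, i₀, by simp [hi₀], ?_, ?_⟩
  · rintro _ rfl
    simp only [Pi.smul_apply, smul_assoc, ← Finset.smul_sum, hg, smul_zero]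
  intro z hz
  have hlt : s.erase i₀ < s := Finset.erase_ssubset i₀.2
  have hli : LinearIndependent Q (fun i : s.erase i₀ => ρ i) :=
    not_not.mp fun h' => hlt.not_ge (hmin h' hlt.le)
  refine sub_eq_zero.mp (eq_zero_of_linearIndependent_erase hli (by simp [hi₀]) ?_)
  simp only [Pi.sub_apply, Pi.smul_apply, sub_smul, Finset.sum_sub_distrib, smul_assoc,
    ← Finset.smul_sum, hg, smul_zero, sub_zero]
  exact hz _ rfl

theorem exists_retraction (F N : Type*) [Field F] [CommRing N] [Nontrivial N] [Algebra F N] :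
    ∃ π : N →ₗ[F] F, ∀ a : F, π (algebraMap F N a) = a := by
  obtain ⟨π, hπ⟩ := (Algebra.linearMap F N).exists_leftInverse_of_injective
    (LinearMap.ker_eq_bot.mpr (algebraMap F N).injective)
  exact ⟨π, fun a => LinearMap.congr_fun hπ a⟩

theorem IsUniqueSolution.mem_subfield [Fintype ι] [Field A] {S : Set (ι → A)} {v : ι → A}
    {i₀ : ι} (h : IsUniqueSolution S v i₀) {N : Subfield A} (hS : ∀ r ∈ S, ∀ i, r i ∈ N) (i : ι) :
    v i ∈ N := by
  obtain ⟨π, hπ⟩ := exists_retraction N A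
  have hπ₁ : π 1 = 1 := by simpa using hπ 1
  have key : (fun i => (π (v i) : A)) = (π (v i₀) : A) • v := by
    refine h.eq_smul _ fun r hr => ?_
    have hsum := congrArg (fun x => (π x : A)) (h.sum_eq_zero r hr)
    simp only [map_sum, map_zero, ZeroMemClass.coe_zero, AddSubmonoidClass.coe_finsetSum]
      at hsum
    rw [← hsum]
    refine Finset.sum_congr rfl fun i _ => ?_
    have : v i • r i = (⟨r i, hS r hr i⟩ : N) • v i := mul_comm _ _
    rw [this, map_smul, smul_eq_mul, smul_eq_mul, MulMemClass.coe_mul, mul_comm]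
  have hi := congrFun key i
  rw [h.apply_eq_one, hπ₁, OneMemClass.coe_one, one_smul] at hi
  exact hi ▸ (π (v i)).2

end UniqueSolution

theorem exists_linearIndependent_of_mem_span {ι K V : Type*} [Finite ι] [Field K] [AddCommGroup V]
    [Module K V] {S : Set V} {x : ι → V} (hx : ∀ i, x i ∈ Submodule.span K S) :
    ∃ (n : ℕ) (e : Fin n → V) (a : ι → Fin n → K), (∀ j, e j ∈ S) ∧ LinearIndependent K e ∧
      ∀ i, ∑ j, a i j • e j = x i := by
  classical
  cases nonempty_fintype ι
  obtain ⟨B, hBS, hB, hli⟩ := exists_linearIndependent K S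
  rw [← hB] at hx
  choose T' hT' hx using fun i => Submodule.mem_span_finite_of_mem_span (hx i)
  let T := Finset.univ.biUnion T'
  have hTB : (T : Set V) ⊆ B := by simpa [T] using hT'
  let e (i : Fin T.card) : V := T.equivFin.symm i
  have hrange : Set.range e = T :=
    (T.equivFin.symm.surjective.range_comp Subtype.val).trans Subtype.range_coe
  have hmem (i) : ∃ a : Fin T.card → K, ∑ j, a j • e j = x i := by
    rw [← Submodule.mem_span_range_iff_exists_fun, hrange]
    exact Submodule.span_mono (Finset.coe_subset.mpr
      (Finset.subset_biUnion_of_mem T' (Finset.mem_univ i))) (hx i)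
  choose a ha using hmem
  exact ⟨T.card, e, a, fun i => hBS (hTB (T.equivFin.symm i).2),
    hli.comp (fun i => ⟨e i, hTB (T.equivFin.symm i).2⟩)
      fun i j h => T.equivFin.symm.injective (Subtype.ext (congrArg Subtype.val h :)), ha⟩

theorem adjoin_eq_span_coe {R A S : Type*} [CommRing R] [CommRing A] [Algebra R A] [SetLike S A]
    [SubmonoidClass S A] (s : S) :
    Subalgebra.toSubmodule (Algebra.adjoin R (s : Set A)) = Submodule.span R (s : Set A) := by
  rw [Algebra.adjoin_eq_span, show Submonoid.closure (s : Set A) = Submonoid.ofClass s from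
    Submonoid.closure_eq (Submonoid.ofClass s)]
  rfl

section Compositum

variable {C Ω : Type*} [Field C] [Field Ω] [Algebra C Ω] {N : Subfield Ω}

theorem exists_span_eq_of_mem_sup {x : Ω} (hx : x ∈ N ⊔ (algebraMap C Ω).fieldRange) :
    ∃ a ∈ Submodule.span C (N : Set Ω), ∃ b ∈ Submodule.span C (N : Set Ω), b ≠ 0 ∧
      b * x = a := by
  have hle : Subring.closure (N ∪ (algebraMap C Ω).fieldRange : Set Ω) ≤
      (Algebra.adjoin C (N : Set Ω)).toSubring :=
    Subring.closure_le.mpr (Set.union_subset Algebra.subset_adjoin (by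
      rintro _ ⟨c, rfl⟩
      exact Subalgebra.algebraMap_mem _ c))
  have hspan {z : Ω} (hz : z ∈ Subring.closure (N ∪ (algebraMap C Ω).fieldRange : Set Ω)) :
      z ∈ Submodule.span C (N : Set Ω) := by
    rw [← adjoin_eq_span_coe]
    exact hle hz
  rw [← Subfield.closure_eq N, ← Subfield.closure_eq (algebraMap C Ω).fieldRange,
    ← Subfield.closure_union, Subfield.mem_closure_iff] at hx
  obtain ⟨a, ha, b, hb, rfl⟩ := hx
  by_cases hb₀ : b = 0
  · exact ⟨0, Submodule.zero_mem _, 1, Submodule.subset_span N.one_mem, one_ne_zero, by simp [hb₀]⟩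
  · exact ⟨a, hspan ha, b, hspan hb, hb₀, by field_simp⟩

theorem exists_linearIndependent_of_mem_sup {x : Ω} (hx : x ∈ N ⊔ (algebraMap C Ω).fieldRange) :
    ∃ (n : ℕ) (e : Fin n → Ω) (a b : Fin n → C), (∀ i, e i ∈ N) ∧ LinearIndependent C e ∧
      ∑ i, b i • e i ≠ 0 ∧ (∑ i, b i • e i) * x = ∑ i, a i • e i := by
  obtain ⟨p, hp, q, hq, hq₀, hx⟩ := exists_span_eq_of_mem_sup hx
  obtain ⟨n, e, a, he, hli, ha⟩ := exists_linearIndependent_of_mem_span (K := C) (x := ![p, q])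
    (Fin.forall_fin_two.mpr ⟨hp, hq⟩)
  exact ⟨n, e, a 0, a 1, he, hli, (ha 1).trans_ne hq₀, by rw [ha, ha]; exact hx⟩

theorem mem_sup_iff_exists_linearIndependent {x : Ω} :
    x ∈ N ⊔ (algebraMap C Ω).fieldRange ↔ ∃ (n : ℕ) (e : Fin n → Ω), (∀ i, e i ∈ N) ∧
      LinearIndependent C e ∧ ¬ LinearIndependent C (Fin.append e (x • e)) := by
  constructor
  · intro hx
    obtain ⟨n, e, a, b, he, hli, hb, hx⟩ := exists_linearIndependent_of_mem_sup hx
    refine ⟨n, e, he, hli, Fintype.not_linearIndependent_iff.mpr ⟨Fin.append (-a) b, ?_, ?_⟩⟩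
    · simp only [Fin.sum_univ_add, Fin.append_left, Fin.append_right, Pi.neg_apply, neg_smul,
        Finset.sum_neg_distrib, Pi.smul_apply, ← hx, Finset.sum_mul, smul_mul_assoc,
        smul_eq_mul, mul_comm x, neg_add_cancel]
    · by_contra! h
      exact hb (Finset.sum_eq_zero fun i _ => by
        rw [← Fin.append_right (-a) b i, h, zero_smul])
  · rintro ⟨n, e, he, hli, hdep⟩
    obtain ⟨g, hg, i₀, hi₀⟩ := Fintype.not_linearIndependent_iff.mp hdep
    let p := ∑ i, g (Fin.castAdd n i) • e i
    let q := ∑ i, g (Fin.natAdd n i) • e i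
    have hmem (c : Fin n → C) : ∑ i, c i • e i ∈ N ⊔ (algebraMap C Ω).fieldRange :=
      sum_mem fun i _ => by
        rw [Algebra.smul_def]
        exact mul_mem (le_sup_right (a := N) ⟨c i, rfl⟩) (le_sup_left (a := N) (he i))
    have hpq : p + x * q = 0 := by
      simpa only [Fin.sum_univ_add, Fin.append_left, Fin.append_right, Pi.smul_apply,
        smul_eq_mul, ← mul_smul_comm, ← Finset.mul_sum] using hg
    have hq : q ≠ 0 := by
      intro hq
      rw [hq, mul_zero, add_zero] at hpq
      have hp' := Fintype.linearIndependent_iff.mp hli _ hpq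
      have hq' := Fintype.linearIndependent_iff.mp hli _ hq
      exact hi₀ (Fin.addCases hp' hq' i₀)
    rw [show x = -p / q by field_simp; linear_combination hpq]
    exact div_mem (neg_mem (hmem _)) (hmem _)

end Compositum

theorem linearIndependent_of_forall_mem_constants {ι M Ω : Type*} [Finite ι] [Field M]
    [Differential M] [CommRing Ω] [Differential Ω] [Algebra M Ω] [DifferentialAlgebra M Ω]
    {c : ι → Ω} (hc : ∀ i, (c i)′ = 0) (hli : LinearIndependent (constants M) c) :
    LinearIndependent M c := by
  by_contra h
  cases nonempty_fintype ι
  obtain ⟨s, v, i₀, hv⟩ := exists_isUniqueSolution h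
  have hsum : ∑ i, v i • c i = 0 := hv.sum_eq_zero _ rfl
  have hv' : (fun i => (v i)′) = 0 := by
    refine hv.eq_zero (by simp only [hv.apply_eq_one, Derivation.map_one_eq_zero]) ?_
    rintro _ rfl
    simpa only [map_sum, map_zero, deriv_smul, hc, smul_zero, add_zero] using congrArg (·′) hsum
  have := Fintype.linearIndependent_iff.mp (hli.comp _ Subtype.val_injective)
    (fun i => ⟨v i, congrFun hv' i⟩) hsum i₀
  exact one_ne_zero (hv.apply_eq_one.symm.trans (congrArg Subtype.val this))

section Wronskian

/-- The Wronskian determinant of a finite sequence of elements of a differential ring. -/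
noncomputable def wronskian {A : Type*} [CommRing A] [Differential A] {n : ℕ} (y : Fin n → A) :
    A :=
  (Matrix.of fun j i : Fin n => (⇑Differential.deriv)^[j] (y i)).det

theorem IsDiffHom.map_wronskian {A B : Type*} [CommRing A] [CommRing B] [Differential A]
    [Differential B] {f : A →+* B} (hf : IsDiffHom f) {n : ℕ} (y : Fin n → A) :
    f (wronskian y) = wronskian (f ∘ y) := by
  rw [wronskian, RingHom.map_det, wronskian]
  congr 1
  ext j i
  exact Function.Semiconj.iterate_right hf j (y i)

variable {T : Type*} [Field T] [Differential T]

theorem deriv_constants_smul (c : constants T) (x : T) : (c • x)′ = c • x′ := by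
  change (c * x : T)′ = (c * x′ : T)
  rw [Derivation.leibniz, mem_constants.mp c.2, smul_zero, add_zero, smul_eq_mul]

theorem iterate_deriv_sum_smul {ι : Type*} [Fintype ι] (c : ι → constants T) (y : ι → T) (j : ℕ) :
    (⇑Differential.deriv)^[j] (∑ i, c i • y i) = ∑ i, c i • (⇑Differential.deriv)^[j] (y i) := by
  induction j with
  | zero => rfl
  | succ j ih =>
    simp only [Function.iterate_succ_apply', ih, map_sum, deriv_constants_smul]

theorem eq_zero_of_wronskian_ne_zero {n : ℕ} {y z : Fin n → T} (hy : wronskian y ≠ 0)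
    (hz : ∀ j : Fin n, ∑ i, z i * (⇑Differential.deriv)^[j] (y i) = 0) : z = 0 :=
  Matrix.eq_zero_of_mulVec_eq_zero hy (funext fun j => by
    simpa only [Matrix.mulVec, dotProduct, Matrix.of_apply, Pi.zero_apply, mul_comm] using hz j)

theorem sum_deriv_mul_iterate_deriv_eq_zero {ι : Type*} [Fintype ι] {w y : ι → T} {j : ℕ}
    (h : ∑ i, w i * (⇑Differential.deriv)^[j] (y i) = 0)
    (h' : ∑ i, w i * (⇑Differential.deriv)^[j + 1] (y i) = 0) :
    ∑ i, (w i)′ * (⇑Differential.deriv)^[j] (y i) = 0 := by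
  have hderiv := congrArg (·′) h
  simp only [Function.iterate_succ_apply'] at h'
  simp only [map_sum, map_zero, Derivation.leibniz, smul_eq_mul, Finset.sum_add_distrib, h',
    zero_add] at hderiv
  simpa only [mul_comm] using hderiv

theorem wronskian_ne_zero {n : ℕ} {y : Fin n → T} (hy : LinearIndependent (constants T) y) :
    wronskian y ≠ 0 := by
  induction n with
  | zero => simp [wronskian]
  | succ n ih =>
    have hy₀ : wronskian (y ∘ Fin.castSucc) ≠ 0 := ih (hy.comp _ (Fin.castSucc_injective n))
    have eq_zero (z : Fin (n + 1) → T) (hlast : z (Fin.last n) = 0)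
        (hz : ∀ j : Fin n, ∑ i, z i * (⇑Differential.deriv)^[j] (y i) = 0) (i) : z i = 0 := by
      refine Fin.lastCases hlast (congrFun (eq_zero_of_wronskian_ne_zero
        (z := z ∘ Fin.castSucc) hy₀ fun j => ?_)) i
      simpa only [Fin.sum_univ_castSucc, hlast, zero_mul, add_zero, Function.comp_apply] using hz j
    intro hW
    obtain ⟨v, hv, hvW⟩ := Matrix.exists_mulVec_eq_zero_iff.mpr hW
    have hrow (j : Fin (n + 1)) : ∑ i, v i * (⇑Differential.deriv)^[j] (y i) = 0 := by
      simpa only [Matrix.mulVec, dotProduct, Matrix.of_apply, Pi.zero_apply, mul_comm] using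
        congrFun hvW j
    have hlast : v (Fin.last n) ≠ 0 := fun h => hv (funext (eq_zero v h fun j => hrow j.castSucc))
    let w (i : Fin (n + 1)) : T := v i / v (Fin.last n)
    have hw (j : Fin (n + 1)) : ∑ i, w i * (⇑Differential.deriv)^[j] (y i) = 0 := by
      simp only [w, div_mul_eq_mul_div, ← Finset.sum_div, hrow, zero_div]
    have hw' (i) : (w i)′ = 0 :=
      eq_zero (fun i => (w i)′) (by simp [w, hlast])
        (fun j => sum_deriv_mul_iterate_deriv_eq_zero (hw j.castSucc) (hw j.succ)) i
    have := Fintype.linearIndependent_iff.mp hy (fun i => ⟨w i, hw' i⟩) (hw 0) (Fin.last n)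
    exact one_ne_zero ((div_self hlast).symm.trans (congrArg Subtype.val this))

theorem wronskian_ne_zero_iff {n : ℕ} {y : Fin n → T} :
    wronskian y ≠ 0 ↔ LinearIndependent (constants T) y := by
  refine ⟨fun hW => Fintype.linearIndependent_iff.mpr fun c hc i => ?_, wronskian_ne_zero⟩
  refine Subtype.ext (congrFun (eq_zero_of_wronskian_ne_zero (z := fun i => (c i : T)) hW
    fun j => ?_) i)
  have h := iterate_deriv_sum_smul c y j
  rw [hc, iterate_map_zero] at h
  exact h.symm

theorem mem_sup_constants_iff {N : Subfield T} {x : T} :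
    x ∈ N ⊔ constants T ↔ ∃ (n : ℕ) (e : Fin n → T), (∀ i, e i ∈ N) ∧ wronskian e ≠ 0 ∧
      wronskian (Fin.append e (x • e)) = 0 := by
  have := mem_sup_iff_exists_linearIndependent (C := constants T) (N := N) (x := x)
  rw [show (algebraMap (constants T) T).fieldRange = constants T from
    (constants T).fieldRange_subtype] at this
  simp only [this, ← wronskian_ne_zero_iff, not_not]

end Wronskian

section DiffStable

/-- A subobject of a differential ring is stable under the derivation. -/
def IsDiffStable {A S : Type*} [CommRing A] [Differential A] [SetLike S A] (s : S) : Prop :=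
  ∀ x ∈ s, x′ ∈ s

variable {F Ω : Type*} [Field F] [Field Ω] [Differential F] [Differential Ω] [Algebra F Ω]
  [DifferentialAlgebra F Ω]

theorem isDiffStable_adjoin {S : Set Ω} (hS : ∀ x ∈ S, x′ ∈ IntermediateField.adjoin F S) :
    IsDiffStable (IntermediateField.adjoin F S) := by
  intro x hx
  induction hx using IntermediateField.adjoin_induction with
  | mem x hx => exact hS x hx
  | algebraMap a => rw [deriv_algebraMap]; exact algebraMap_mem _ _
  | add x y _ _ hx hy => rw [map_add]; exact add_mem hx hy
  | inv x hx hx' => rw [deriv_inv]; exact div_mem (neg_mem hx') (pow_mem hx 2)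
  | mul x y hx hy hx' hy' =>
    rw [Derivation.leibniz]; exact add_mem (mul_mem hx hy') (mul_mem hy hx')

theorem IsDiffStable.sup {A B : IntermediateField F Ω} (hA : IsDiffStable A)
    (hB : IsDiffStable B) : IsDiffStable (A ⊔ B) := by
  rw [IntermediateField.sup_def]
  exact isDiffStable_adjoin fun x hx => IntermediateField.subset_adjoin F _
    (hx.imp (hA x) (hB x))

end DiffStable

section FieldOfDefinition

theorem eq_zero_of_sum_append_eq_zero {Q Ω : Type*} [Field Q] [Field Ω] [Algebra Q Ω] {n : ℕ}
    {e : Fin n → Ω} (hli : LinearIndependent Q e)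
    {s : Finset (Fin (n + n))} {v : s → Q} (h₁ : ∑ i, v i • Fin.append e (0 : Fin n → Ω) i = 0)
    (h₂ : ∑ i, v i • Fin.append (0 : Fin n → Ω) (-e) i = 0) : v = 0 := by
  let w := Function.extend Subtype.val v 0
  have hw (i : s) : w i = v i := Subtype.val_injective.extend_apply v 0 i
  have hsum (g : Fin (n + n) → Ω) : ∑ i : s, v i • g i = ∑ i, w i • g i :=
    Fintype.sum_of_injective Subtype.val Subtype.val_injective _ _
      (fun i hi => by
        rw [show w i = 0 from Function.extend_apply' _ _ _ hi, zero_smul])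
      fun i => by rw [hw]
  simp only [hsum, Fin.sum_univ_add, Fin.append_left, Fin.append_right, Pi.zero_apply, smul_zero,
    Finset.sum_const_zero, add_zero, zero_add, Pi.neg_apply, smul_neg, Finset.sum_neg_distrib,
    neg_eq_zero] at h₁ h₂
  have hw₀ (i) : w i = 0 := by
    induction i using Fin.addCases with
    | left j => exact Fintype.linearIndependent_iff.mp hli _ h₁ j
    | right j => exact Fintype.linearIndependent_iff.mp hli _ h₂ j
  exact funext fun i => (hw i).symm.trans (hw₀ i)

variable {F Q Ω : Type*} [Field F] [Field Q] [Field Ω] [Algebra F Q] [Algebra F Ω] [Algebra Q Ω]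
  [IsScalarTower F Q Ω] {P : IntermediateField F Ω}

theorem sum_retraction_smul_eq {ι : Type*} [Fintype ι] (hP : P.LinearDisjoint Q)
    {V : IntermediateField F Q} {π : Q →ₗ[V] V} (hπ : ∀ a : V, π a = a) {q : ι → Q} {w : ι → Ω}
    {u : Ω} (hw : ∀ i, w i ∈ Algebra.adjoin V (P : Set Ω))
    (hu : u ∈ Algebra.adjoin V (P : Set Ω)) (h : ∑ i, q i • w i = u) :
    ∑ i, (π (q i) : Q) • w i = u := by
  obtain ⟨n, e, a, he, hli, ha⟩ := exists_linearIndependent_of_mem_span (K := V)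
    (S := (P : Set Ω)) (x := fun i : Option ι => i.elim u w) (by
      rintro (_ | i) <;> rw [← adjoin_eq_span_coe]
      exacts [hu, hw i])
  have hQ : LinearIndependent Q e :=
    hP.linearIndependent_left (a := fun j => ⟨e j, he j⟩)
      (LinearIndependent.of_comp P.val.toLinearMap (hli.restrict_scalars' F))
  have hwe (i) : w i = ∑ j, a (some i) j • e j := (ha (some i)).symm
  have hue : u = ∑ j, a none j • e j := (ha none).symm
  have hcoeff (j) : ∑ i, a (some i) j • q i = (a none j : Q) := by
    refine sub_eq_zero.mp (Fintype.linearIndependent_iff.mp hQ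
      (fun j => ∑ i, a (some i) j • q i - (a none j : Q)) ?_ j)
    simp only [sub_smul, Finset.sum_sub_distrib, Finset.sum_smul]
    rw [show ∑ j, (a none j : Q) • e j = u from hue.symm, ← h, Finset.sum_comm, sub_eq_zero]
    simp only [hwe, Finset.smul_sum, smul_assoc]
    exact Finset.sum_congr rfl fun i _ => Finset.sum_congr rfl fun j _ => smul_comm _ _ _
  have hπ' (j) : ∑ i, a (some i) j • π (q i) = a none j := by
    rw [← hπ (a none j), ← hcoeff j, map_sum]
    simp only [map_smul]
  simp only [hue, ← hπ', Finset.sum_smul]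
  rw [Finset.sum_comm]
  refine Finset.sum_congr rfl fun i _ => ?_
  rw [hwe, Finset.smul_sum]
  exact Finset.sum_congr rfl fun j _ => (smul_comm _ _ _).trans (smul_assoc _ (π (q i)) _).symm

theorem sum_smul_sub_smul {ι : Type*} [Fintype ι] (c : ι → Q) (f : Ω) (a b : ι → Ω) :
    ∑ i, c i • (a - f • b) i = ∑ i, c i • a i - f * ∑ i, c i • b i := by
  simp only [Pi.sub_apply, Pi.smul_apply, smul_sub, Finset.sum_sub_distrib, smul_eq_mul,
    Finset.mul_sum, mul_smul_comm]

theorem sum_smul_mul_sub_mul {ι : Type*} [Fintype ι] (c : ι → Q) {f x y : Ω} (a b : ι → Ω)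
    (hxy : x = f * y) :
    ∑ i, c i • (y * a i - x * b i) = y * ∑ i, c i • (a - f • b) i := by
  simp only [sum_smul_sub_smul, smul_sub, Finset.sum_sub_distrib, mul_sub, Finset.mul_sum,
    mul_smul_comm, hxy, mul_left_comm f, mul_assoc]

theorem exists_isUniqueSolution_sub_smul_of_mem_sup {N : Subfield Ω} {f : Ω}
    (hf : f ∈ N ⊔ (algebraMap Q Ω).fieldRange) :
    ∃ (ι : Type) (_ : Fintype ι) (a b : ι → Ω) (v : ι → Q) (i₀ : ι),
      IsUniqueSolution {a - f • b} v i₀ ∧ (∀ i, a i ∈ N) ∧ (∀ i, b i ∈ N) ∧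
      ∑ i, v i • b i ≠ 0 := by
  obtain ⟨n, e, he, hli, hdep⟩ := mem_sup_iff_exists_linearIndependent.mp hf
  obtain ⟨s, v, i₀, hv⟩ := exists_isUniqueSolution hdep
  let a (i : s) : Ω := Fin.append e (0 : Fin n → Ω) i
  let b (i : s) : Ω := Fin.append (0 : Fin n → Ω) (-e) i
  have hab : (fun i : s => Fin.append e (f • e) i) = a - f • b := funext fun i => by
    obtain ⟨i, hi⟩ := i
    induction i using Fin.addCases <;> simp [a, b, -Fin.natAdd_eq_addNat]
  rw [hab] at hv
  refine ⟨s, inferInstance, a, b, v, i₀, hv, fun i => ?_, fun i => ?_, fun hb₀ => ?_⟩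
  · obtain ⟨i, hi⟩ := i
    induction i using Fin.addCases <;> simp [a, he, -Fin.natAdd_eq_addNat]
  · obtain ⟨i, hi⟩ := i
    induction i using Fin.addCases <;> simp [b, he, -Fin.natAdd_eq_addNat]
  · have ha₀ : ∑ i, v i • a i = 0 := by
      rw [← hv.sum_eq_zero _ rfl, sum_smul_sub_smul, hb₀, mul_zero, sub_zero]
    exact one_ne_zero
      (hv.apply_eq_one.symm.trans (congrFun (eq_zero_of_sum_append_eq_zero hli ha₀ hb₀) i₀))

variable [Differential F] [Differential Q] [Differential Ω] [DifferentialAlgebra F Q]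
  [DifferentialAlgebra Q Ω]

theorem isDiffStable_adjoin_range {ι : Type*} [Fintype ι] (hP : P.LinearDisjoint Q)
    (hPd : IsDiffStable P) {f : Ω} (hf : f′ = 0) {a b : ι → Ω} (ha : ∀ i, a i ∈ P)
    (hb : ∀ i, b i ∈ P) {v : ι → Q} {i₀ : ι} (hv : IsUniqueSolution {a - f • b} v i₀)
    (hb₀ : ∑ i, v i • b i ≠ 0) :
    IsDiffStable (IntermediateField.adjoin F (Set.range v)) := by
  set V := IntermediateField.adjoin F (Set.range v)
  refine isDiffStable_adjoin (Set.forall_mem_range.mpr fun i => ?_)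
  have hvV (i) : v i ∈ V := IntermediateField.subset_adjoin F _ ⟨i, rfl⟩
  obtain ⟨π, hπ⟩ := exists_retraction V Q
  let x := ∑ i, v i • a i
  let y := ∑ i, v i • b i
  have hxy : x = f * y :=
    sub_eq_zero.mp ((sum_smul_sub_smul v f a b).symm.trans (hv.sum_eq_zero _ rfl))
  have hP' {z : Ω} (hz : z ∈ P) : z ∈ Algebra.adjoin V (P : Set Ω) := Algebra.subset_adjoin hz
  have hlin {c : ι → Ω} (hc : ∀ i, c i ∈ P) :
      ∑ i, v i • c i ∈ Algebra.adjoin V (P : Set Ω) :=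
    sum_mem fun i _ => Subalgebra.smul_mem _ (hP' (hc i)) (⟨v i, hvV i⟩ : V)
  have hsum : ∑ i, (v i)′ • (y * a i - x * b i) =
      x * ∑ i, v i • (b i)′ - y * ∑ i, v i • (a i)′ := by
    have h := congrArg (·′) hxy
    simp only [x, y, map_sum, deriv_smul, Derivation.leibniz, hf, Finset.sum_add_distrib,
      smul_eq_mul, mul_zero, add_zero] at h
    rw [sum_smul_mul_sub_mul _ a b hxy, sum_smul_sub_smul, hxy]
    linear_combination y * h
  have hπsum : ∑ i, (π (v i)′ : Q) • (y * a i - x * b i) =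
      x * ∑ i, v i • (b i)′ - y * ∑ i, v i • (a i)′ := sum_retraction_smul_eq hP hπ
    (fun i => sub_mem (mul_mem (hlin hb) (hP' (ha i))) (mul_mem (hlin ha) (hP' (hb i))))
    (sub_mem (mul_mem (hlin ha) (hlin fun i => hPd _ (hb i)))
      (mul_mem (hlin hb) (hlin fun i => hPd _ (ha i)))) hsum
  have hz : (fun i => (v i)′ - π (v i)′) = 0 := by
    refine hv.eq_zero ?_ ?_
    · simp [hv.apply_eq_one]
    rintro _ rfl
    refine (mul_eq_zero.mp ?_).resolve_left hb₀
    rw [← sum_smul_mul_sub_mul _ a b hxy]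
    simp only [sub_smul, Finset.sum_sub_distrib, hsum, hπsum, sub_self]
  rw [sub_eq_zero.mp (congrFun hz i)]
  exact (π (v i)′).2

theorem exists_isUniqueSolution_of_mem_sup (hP : P.LinearDisjoint Q) (hPd : IsDiffStable P)
    {f : Ω} (hf : f ∈ constants Ω) (hfP : f ∈ P.toSubfield ⊔ (algebraMap Q Ω).fieldRange) :
    ∃ (ι : Type) (_ : Fintype ι) (ρ : ι → Ω) (v : ι → Q) (i₀ : ι), IsUniqueSolution {ρ} v i₀ ∧
      (∀ i, ρ i ∈ P.toSubfield ⊔ constants Ω) ∧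
      IsDiffStable (IntermediateField.adjoin F (Set.range v)) ∧
      f ∈ P.toSubfield ⊔
        (IntermediateField.adjoin F (Set.range v)).toSubfield.map (algebraMap Q Ω) := by
  obtain ⟨ι, _, a, b, v, i₀, hv, ha, hb, hb₀⟩ := exists_isUniqueSolution_sub_smul_of_mem_sup hfP
  have hsum : ∑ i, v i • a i = f * ∑ i, v i • b i :=
    sub_eq_zero.mp ((sum_smul_sub_smul v f a b).symm.trans (hv.sum_eq_zero _ rfl))
  refine ⟨ι, inferInstance, a - f • b, v, i₀, hv, fun i => ?_,
    isDiffStable_adjoin_range hP hPd hf ha hb hv hb₀, ?_⟩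
  · exact sub_mem (le_sup_left (b := constants Ω) (ha i))
      (mul_mem (le_sup_right (a := P.toSubfield) hf) (le_sup_left (b := constants Ω) (hb i)))
  · rw [eq_div_of_mul_eq hb₀ hsum.symm]
    have hmem {c : ι → Ω} (hc : ∀ i, c i ∈ P) : ∑ i, v i • c i ∈ P.toSubfield ⊔
        (IntermediateField.adjoin F (Set.range v)).toSubfield.map (algebraMap Q Ω) :=
      sum_mem fun i _ => by
        rw [Algebra.smul_def]
        exact mul_mem (le_sup_right (a := P.toSubfield)
          ⟨v i, IntermediateField.subset_adjoin F _ ⟨i, rfl⟩, rfl⟩)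
          (le_sup_left (a := P.toSubfield) (hc i))
    exact div_mem (hmem ha) (hmem hb)

end FieldOfDefinition

section LinearDisjoint

theorem injective_of_isAlgebraic_adjoin {ι A R S : Type*} [CommRing A] [CommRing R] [IsDomain R]
    [CommRing S] [Algebra A R] [Algebra A S] {x : ι → R} {μ : R →ₐ[A] S}
    [Algebra.IsAlgebraic (Algebra.adjoin A (Set.range x)) R]
    (h : AlgebraicIndependent A (μ ∘ x)) : Function.Injective μ := by
  let := μ.toAlgebra
  refine Algebra.IsAlgebraic.injective_tower_top (R := Algebra.adjoin A (Set.range x)) R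
    ((injective_iff_map_eq_zero _).mpr fun ⟨z, hz⟩ hz₀ => Subtype.ext ?_)
  rw [Algebra.adjoin_range_eq_range_aeval] at hz
  obtain ⟨p, rfl⟩ := hz
  have hp : μ (MvPolynomial.aeval x p) = 0 := hz₀
  rw [← AlgHom.comp_apply, MvPolynomial.comp_aeval] at hp
  change MvPolynomial.aeval x p = 0
  rw [algebraicIndependent_iff.mp h p hp, map_zero]

theorem isAlgebraic_adjoin_tensorProduct {ι F A Q : Type*} [Field F] [CommRing A] [Nontrivial A]
    [Field Q] [Algebra F A] [Algebra F Q] [IsDomain (A ⊗[F] Q)] {x : ι → Q}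
    [Algebra.IsAlgebraic (Algebra.adjoin F (Set.range x)) Q] :
    Algebra.IsAlgebraic (Algebra.adjoin A (Set.range fun i => (1 : A) ⊗ₜ[F] x i)) (A ⊗[F] Q) := by
  set S := Algebra.adjoin A (Set.range fun i => (1 : A) ⊗ₜ[F] x i)
  let g : Q →ₐ[F] A ⊗[F] Q := Algebra.TensorProduct.includeRight
  have hg : (Algebra.adjoin F (Set.range x)).map g ≤ S.restrictScalars F := by
    rw [AlgHom.map_adjoin, ← Set.range_comp]
    exact Algebra.adjoin_le Algebra.subset_adjoin
  let f : Algebra.adjoin F (Set.range x) →+* S :=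
    (g.toRingHom.comp (algebraMap _ Q)).codRestrict S fun z => hg ⟨z, z.2, rfl⟩
  have hf : Function.Injective f := fun a b h =>
    Subtype.ext (g.toRingHom.injective (congrArg Subtype.val h))
  refine ⟨fun z => ?_⟩
  induction z with
  | zero => exact isAlgebraic_zero
  | add y z hy hz => exact hy.add hz
  | tmul a b =>
    have hb : IsAlgebraic S (g b) :=
      (Algebra.IsAlgebraic.isAlgebraic b).ringHom_of_comp_eq f g.toRingHom hf rfl
    have ha : IsAlgebraic S (algebraMap A (A ⊗[F] Q) a) :=
      isAlgebraic_algebraMap (⟨_, S.algebraMap_mem a⟩ : S)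
    rw [show a ⊗ₜ[F] b = algebraMap A (A ⊗[F] Q) a * g b by
      simp [g, Algebra.TensorProduct.algebraMap_apply]]
    exact ha.mul hb

theorem linearDisjoint_of_algebraicIndependent {ι F Q Ω : Type*} [Field F] [IsAlgClosed F]
    [Field Q] [Field Ω] [Algebra F Q] [Algebra F Ω] [Algebra Q Ω] [IsScalarTower F Q Ω]
    {P : IntermediateField F Ω} {x : ι → Q} (hx : IsTranscendenceBasis F x)
    (h : AlgebraicIndependent P (algebraMap Q Ω ∘ x)) : P.LinearDisjoint Q := by
  have : IsDomain (P ⊗[F] Q) := isDomain_tensorProduct F Q P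
  have := hx.isAlgebraic
  have := isAlgebraic_adjoin_tensorProduct (F := F) (A := P) (x := x)
  let μ : P ⊗[F] Q →ₐ[P] Ω := Algebra.TensorProduct.lift (Algebra.ofId P Ω)
    (IsScalarTower.toAlgHom F Q Ω) fun _ _ => .all _ _
  have hμ : Function.Injective (μ.restrictScalars F) :=
    injective_of_isAlgebraic_adjoin (x := fun i => (1 : P) ⊗ₜ[F] x i) (μ := μ) (by
      rwa [show μ ∘ (fun i => (1 : P) ⊗ₜ[F] x i) = algebraMap Q Ω ∘ x from
        funext fun i => by simp [μ]])
  have hdisj := (Subalgebra.LinearDisjoint.include_range F P Q).map (μ.restrictScalars F) hμ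
  have hleft : (μ.restrictScalars F).comp Algebra.TensorProduct.includeLeft = P.val := by
    ext; simp [μ]
  have hright : (μ.restrictScalars F).comp Algebra.TensorProduct.includeRight =
      IsScalarTower.toAlgHom F Q Ω := by
    ext; simp [μ]
  rwa [← AlgHom.range_comp, ← AlgHom.range_comp, hleft, hright,
    IntermediateField.range_val] at hdisj

end LinearDisjoint

section LinearDisjointSup

open IntermediateField

variable {F A Ω : Type*} [Field F] [Field A] [Field Ω] [Algebra F A] [Algebra F Ω] [Algebra A Ω]
  [IsScalarTower F A Ω] {N P : IntermediateField F Ω}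

theorem linearIndependent_adjoin_union {ι : Type*}
    (hN : N ≤ (IsScalarTower.toAlgHom F A Ω).fieldRange) (hP : P.LinearDisjoint A) {q : ι → A}
    (hq : LinearIndependent N (algebraMap A Ω ∘ q)) :
    LinearIndependent (Algebra.adjoin F (N ∪ P : Set Ω)) (algebraMap A Ω ∘ q) := by
  rw [linearIndependent_iff_finset_linearIndependent]
  refine fun s => Fintype.linearIndependent_iff.mpr fun r hr => ?_
  have hle : Algebra.adjoin F (N ∪ P : Set Ω) ≤
      (Algebra.adjoin N (P : Set Ω)).restrictScalars F :=
    Algebra.adjoin_le (Set.union_subset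
      (fun x hx => (Algebra.adjoin N (P : Set Ω)).algebraMap_mem ⟨x, hx⟩) Algebra.subset_adjoin)
  obtain ⟨n, e, c, he, hli, hc⟩ := exists_linearIndependent_of_mem_span (K := N)
    (S := (P : Set Ω)) (x := fun i : s => (r i : Ω)) fun i => by
      rw [← adjoin_eq_span_coe]
      exact hle (r i).2
  have hA : LinearIndependent A e := hP.linearIndependent_left (a := fun j => ⟨e j, he j⟩)
    (.of_comp P.val.toLinearMap (hli.restrict_scalars' F))
  choose α hα using fun i j => hN (c i j).2
  have hcol (j) : ∑ i : s, α i j * q i = 0 := by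
    refine Fintype.linearIndependent_iff.mp hA (fun j => ∑ i : s, α i j * q i) ?_ j
    rw [← hr]
    simp only [Finset.sum_smul]
    rw [Finset.sum_comm]
    refine Finset.sum_congr rfl fun i _ => ?_
    rw [Subalgebra.smul_def, ← hc, Finset.sum_smul]
    refine Finset.sum_congr rfl fun j _ => ?_
    have hαij : algebraMap A Ω (α i j) = c i j := hα i j
    simp only [Algebra.smul_def, map_mul, hαij, Function.comp_apply,
      IntermediateField.algebraMap_apply, Algebra.algebraMap_self, RingHom.id_apply]
    ring
  have hzero (i j) : c i j = 0 := by
    refine Fintype.linearIndependent_iff.mp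
      (hq.comp (Subtype.val : s → ι) Subtype.val_injective) (fun i => c i j) ?_ i
    rw [← map_zero (algebraMap A Ω), ← hcol j, map_sum]
    refine Finset.sum_congr rfl fun i _ => ?_
    rw [map_mul, show algebraMap A Ω (α i j) = c i j from hα i j]
    rfl
  exact fun i => Subtype.ext ((hc i).symm.trans (by simp [hzero]))

open scoped IntermediateField.algebraAdjoinAdjoin in
theorem linearIndependent_sup {ι : Type*} (hN : N ≤ (IsScalarTower.toAlgHom F A Ω).fieldRange)
    (hP : P.LinearDisjoint A) {q : ι → A} (hq : LinearIndependent N (algebraMap A Ω ∘ q)) :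
    LinearIndependent ↥(N ⊔ P) (algebraMap A Ω ∘ q) := by
  rw [IntermediateField.sup_def,
    ← LinearIndependent.iff_fractionRing (Algebra.adjoin F (N ∪ P : Set Ω))]
  exact linearIndependent_adjoin_union hN hP hq

theorem linearDisjoint_sup {Q : Type*} [Field Q] [Algebra F Q] [Algebra Q A] [Algebra Q Ω]
    [IsScalarTower F Q Ω] [IsScalarTower Q A Ω]
    (hN : N ≤ (IsScalarTower.toAlgHom F A Ω).fieldRange) (hP : P.LinearDisjoint A)
    (hNQ : N.LinearDisjoint Q) : (N ⊔ P).LinearDisjoint Q := by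
  let b := Module.Basis.ofVectorSpace F Q
  have hb : algebraMap Q Ω ∘ b = algebraMap A Ω ∘ (algebraMap Q A ∘ b) := funext fun i =>
    IsScalarTower.algebraMap_apply Q A Ω (b i)
  refine .of_basis_right' b ?_
  rw [hb]
  refine linearIndependent_sup hN hP ?_
  rw [← hb]
  exact hNQ.linearIndependent_right' b.linearIndependent

theorem linearDisjoint_map {Q A T W : Type*} [Field Q] [Field A] [Field T] [Field W] [Algebra F Q]
    [Algebra F A] [Algebra F T] [Algebra F W] [Algebra Q A] [Algebra Q T] [Algebra Q W]
    [Algebra A W] [IsScalarTower F Q T] [IsScalarTower F Q W] [IsScalarTower F A W]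
    [IsScalarTower Q A W] {t : T →ₐ[Q] W}
    (ht : Function.Injective
      (Algebra.TensorProduct.productMap (IsScalarTower.toAlgHom Q A W) t))
    {P : IntermediateField F T} (hP : P.LinearDisjoint Q) :
    (P.map (t.restrictScalars F)).LinearDisjoint A := by
  let b := Module.Basis.ofVectorSpace F P
  let μ : A ⊗[Q] T →ₗ[A] W :=
    (Algebra.TensorProduct.lift (Algebra.ofId A W) t fun _ _ => .all _ _).toLinearMap
  have hμ : Function.Injective μ := by
    have : ⇑μ = Algebra.TensorProduct.productMap (IsScalarTower.toAlgHom Q A W) t := by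
      ext x
      induction x with
      | zero => simp only [map_zero]
      | tmul x y => rfl
      | add x y hx hy => rw [map_add, map_add, hx, hy]
    rwa [this]
  refine .of_basis_left (b.map (P.equivMap (t.restrictScalars F)).toLinearEquiv) ?_
  have hb : LinearIndependent A fun i => (1 : A) ⊗ₜ[Q] (b i : T) :=
    Module.Flat.linearIndependent_one_tmul (hP.linearIndependent_left b.linearIndependent)
  have hcomp : (P.map (t.restrictScalars F)).val ∘
      b.map (P.equivMap (t.restrictScalars F)).toLinearEquiv =
      μ ∘ fun i => (1 : A) ⊗ₜ[Q] (b i : T) := by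
    ext i
    simp [μ]
  rw [hcomp]
  exact hb.map' μ (LinearMap.ker_eq_bot.mpr hμ)

end LinearDisjointSup

section ParamExt

variable {F Q : Type u} [Field F] [Field Q] [Algebra F Q] [Differential Q]

variable (F Q) in
/-- A differential field extension of `Q` together with a finitely generated differential field
extension `N` of `F` inside it, linearly disjoint from `Q` over `F`: the field of parameters. -/
structure ParamExt extends DiffExt F Q where
  /-- The field of parameters. -/
  params : IntermediateField F carrier
  fg_params : params.FG
  isDiffStable_params : IsDiffStable params
  linearDisjoint_params : params.LinearDisjoint Q

/-- The subfield generated by the parameters and the constants. -/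
def ParamExt.paramField (X : ParamExt F Q) : Subfield X.carrier :=
  X.params.toSubfield ⊔ constants X.carrier

theorem fg_map {K L M : Type*} [Field K] [Field L] [Field M] [Algebra K L] [Algebra K M]
    {S : IntermediateField K L} (hS : S.FG) (f : L →ₐ[K] M) : (S.map f).FG := by
  classical
  obtain ⟨s, rfl⟩ := hS
  rw [IntermediateField.adjoin_map, ← Finset.coe_image]
  exact IntermediateField.fg_adjoin_finset _

theorem IsDiffStable.map {K L M : Type*} [Field K] [Field L] [Field M] [Algebra K L] [Algebra K M]
    [Differential L] [Differential M] {S : IntermediateField K L} (hS : IsDiffStable S)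
    {f : L →ₐ[K] M} (hf : IsDiffHom f.toRingHom) : IsDiffStable (S.map f) := by
  rintro _ ⟨x, hx, rfl⟩
  exact ⟨x′, hS x hx, hf x⟩

theorem map_mem_sup_constants {L M : Type*} [Field L] [Field M] [Differential L]
    [Differential M] {S : Subfield L} {S' : Subfield M} {f : L →+* M} (hf : IsDiffHom f)
    (hS : S.map f ≤ S') {x : L} (hx : x ∈ S ⊔ constants L) : f x ∈ S' ⊔ constants M := by
  refine (Subfield.map_sup S (constants L) f).le.trans (sup_le_sup hS ?_) ⟨x, hx, rfl⟩
  rintro _ ⟨y, hy, rfl⟩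
  exact hf.map_mem_constants hy

theorem ParamExt.exists_amalgam [IsAlgClosed Q] [Differential F] [DifferentialAlgebra F Q]
    (X Y : ParamExt F Q) : ∃ (Z : ParamExt F Q) (a : X.carrier →ₐ[Q] Z.carrier)
      (b : Y.carrier →ₐ[Q] Z.carrier), Function.Injective (Algebra.TensorProduct.productMap a b) ∧
      (∀ x ∈ X.paramField, a x ∈ Z.paramField) ∧ ∀ y ∈ Y.paramField, b y ∈ Z.paramField := by
  obtain ⟨W, a, b, ha, hb, hab⟩ := DiffField.exists_amalgam F Q X.carrier Y.carrier
  have : DifferentialAlgebra F W.carrier := differentialAlgebra_trans F Q W.carrier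
  let _ := a.toRingHom.toAlgebra
  have : IsScalarTower Q X.carrier W.carrier := .of_algebraMap_eq fun x => (a.commutes x).symm
  have : IsScalarTower F X.carrier W.carrier :=
    .of_algebraMap_eq fun x => ((a.restrictScalars F).commutes x).symm
  let N := X.params.map (a.restrictScalars F)
  let P := Y.params.map (b.restrictScalars F)
  have hP : P.LinearDisjoint X.carrier := linearDisjoint_map hab Y.linearDisjoint_params
  have hN : N.LinearDisjoint Q := X.linearDisjoint_params.map' W.carrier
  have hNX : N ≤ (IsScalarTower.toAlgHom F X.carrier W.carrier).fieldRange := by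
    rintro _ ⟨x, -, rfl⟩
    exact ⟨x, rfl⟩
  refine ⟨⟨W, N ⊔ P, IntermediateField.fg_sup (fg_map X.fg_params _) (fg_map Y.fg_params _),
    (X.isDiffStable_params.map ha).sup (Y.isDiffStable_params.map hb),
    linearDisjoint_sup hNX hP hN⟩, a, b, hab, fun x hx => ?_, fun y hy => ?_⟩
  · exact map_mem_sup_constants (S := X.params.toSubfield) (S' := (N ⊔ P).toSubfield) ha
      (fun _ hz => (le_sup_left : N ≤ N ⊔ P) hz) hx
  · exact map_mem_sup_constants (S := Y.params.toSubfield) (S' := (N ⊔ P).toSubfield) hb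
      (fun _ hz => (le_sup_right : P ≤ N ⊔ P) hz) hy

theorem ParamExt.exists_algebraMap_mem_of_finset [IsAlgClosed Q] [Differential F]
    [DifferentialAlgebra F Q] (X : ParamExt F Q) (s : Finset Q)
    (hs : ∀ x ∈ s, ∃ Z : ParamExt F Q, algebraMap Q Z.carrier x ∈ Z.paramField) :
    ∃ Z : ParamExt F Q, ∀ x ∈ s, algebraMap Q Z.carrier x ∈ Z.paramField := by
  classical
  induction s using Finset.induction_on with
  | empty => exact ⟨X, by simp⟩
  | insert y s _ ih =>
    obtain ⟨Y, hY⟩ := ih fun x hx => hs x (Finset.mem_insert_of_mem hx)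
    obtain ⟨Y', hY'⟩ := hs y (Finset.mem_insert_self y s)
    obtain ⟨Z, a, b, -, ha, hb⟩ := Y.exists_amalgam Y'
    refine ⟨Z, fun x hx => ?_⟩
    obtain rfl | hx := Finset.mem_insert.mp hx
    · exact b.commutes x ▸ hb _ hY'
    · exact a.commutes x ▸ ha _ (hY x hx)

theorem IsUniqueSolution.baseChange {ι Q A T : Type*} [Fintype ι] [Field Q] [Field A]
    [AddCommGroup T] [Algebra Q A] [Module Q T] {S : Set (ι → T)} {v : ι → Q} {i₀ : ι}
    (h : IsUniqueSolution S v i₀) :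
    IsUniqueSolution ((fun r i => (1 : A) ⊗ₜ[Q] r i) '' S) (algebraMap Q A ∘ v) i₀ := by
  refine ⟨by simp [h.apply_eq_one], ?_, fun z hz => ?_⟩
  · rintro _ ⟨r, hr, rfl⟩
    simp only [Function.comp_apply, algebraMap_smul, ← TensorProduct.tmul_smul,
      ← TensorProduct.tmul_sum, h.sum_eq_zero r hr, TensorProduct.tmul_zero]
  have hdual (π : Module.Dual Q A) : π ∘ z = π (z i₀) • v := h.eq_smul _ fun r hr => by
    have := congrArg (TensorProduct.lid Q T ∘ π.rTensor T) (hz _ ⟨r, hr, rfl⟩)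
    simpa [TensorProduct.smul_tmul'] using this
  refine funext fun i => sub_eq_zero.mp ((Module.forall_dual_apply_eq_zero_iff Q _).mp fun π => ?_)
  have := congrFun (hdual π) i
  rw [map_sub, sub_eq_zero, Pi.smul_apply, Function.comp_apply, smul_eq_mul, mul_comm,
    ← Algebra.smul_def, map_smul, ← Function.comp_apply (f := π), this, Pi.smul_apply, smul_eq_mul,
    smul_eq_mul, mul_comm]

variable {ι : Type*} [Fintype ι]

variable (F) in
/-- Linearly independent rows over the field of parameters of some extension that annihilate `v`:
a partial system of linear equations for `v`. -/
structure ParamSystem (v : ι → Q) (m : ℕ) extends ParamExt F Q where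
  rows : Fin m → ι → carrier
  rows_mem : ∀ k i, rows k i ∈ toParamExt.paramField
  linearIndependent_rows : LinearIndependent carrier rows
  sum_smul_rows : ∀ k, ∑ i, v i • rows k i = 0

variable {v : ι → Q} {i₀ : ι} {m : ℕ}

theorem ParamSystem.mem_of_forall_row_mem_span (Z : ParamSystem F v m) {T W : Type*}
    [Field T] [Field W] [Algebra Q T] [Algebra Q W] {a : Z.carrier →ₐ[Q] W} {b : T →ₐ[Q] W}
    (hab : Function.Injective (Algebra.TensorProduct.productMap a b)) {ρ : ι → T}
    (hv : IsUniqueSolution {ρ} v i₀)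
    (hρ : b ∘ ρ ∈ Submodule.span W (Set.range fun k => a ∘ Z.rows k)) (i : ι) :
    algebraMap Q Z.carrier (v i) ∈ Z.paramField := by
  have hu : IsUniqueSolution (Set.range Z.rows) (algebraMap Q Z.carrier ∘ v) i₀ := by
    refine ⟨by simp [hv.apply_eq_one], ?_, fun z hz => hv.baseChange.eq_smul z ?_⟩
    · rintro _ ⟨k, rfl⟩
      simpa only [Function.comp_apply, algebraMap_smul] using Z.sum_smul_rows k
    rintro _ ⟨_, rfl, rfl⟩
    refine hab ?_
    have hspan : Submodule.span W (Set.range fun k => a ∘ Z.rows k) ≤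
        LinearMap.ker (Fintype.linearCombination W (a ∘ z)) := by
      refine Submodule.span_le.mpr ?_
      rintro _ ⟨k, rfl⟩
      have := congrArg a (hz _ ⟨k, rfl⟩)
      simpa [Fintype.linearCombination_apply, mul_comm] using this
    simpa [Fintype.linearCombination_apply, mul_comm, TensorProduct.smul_tmul'] using hspan hρ
  refine hu.mem_subfield (N := Z.paramField) ?_ i
  rintro _ ⟨k, rfl⟩
  exact Z.rows_mem k

theorem ParamSystem.exists_succ_or_mem [IsAlgClosed Q] [Differential F] [DifferentialAlgebra F Q]
    (Z : ParamSystem F v m) {X : ParamExt F Q} {ρ : ι → X.carrier}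
    (hρ : ∀ i, ρ i ∈ X.paramField) (hv : IsUniqueSolution {ρ} v i₀) :
    Nonempty (ParamSystem F v (m + 1)) ∨ ∀ i, algebraMap Q Z.carrier (v i) ∈ Z.paramField := by
  obtain ⟨W, a, b, hab, ha, hb⟩ := Z.toParamExt.exists_amalgam X
  by_cases h : b ∘ ρ ∈ Submodule.span W.carrier (Set.range fun k => a ∘ Z.rows k)
  · exact .inr (Z.mem_of_forall_row_mem_span hab hv h)
  let _ := a.toRingHom.toAlgebra
  refine .inl ⟨⟨W, Fin.snoc (fun k => a ∘ Z.rows k) (b ∘ ρ), ?_,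
    linearIndependent_finSnoc.mpr
      ⟨linearIndependent_algebraMap_comp_iff.mpr Z.linearIndependent_rows, h⟩, ?_⟩⟩
  · refine Fin.lastCases (fun i => ?_) fun k i => ?_
    · simpa using hb _ (hρ i)
    · simpa using ha _ (Z.rows_mem k i)
  · refine Fin.lastCases ?_ fun k => ?_
    · simpa using congrArg b (hv.sum_eq_zero ρ rfl)
    · simpa using congrArg a (Z.sum_smul_rows k)

theorem exists_algebraMap_mem_paramField [IsAlgClosed Q] [Differential F] [DifferentialAlgebra F Q]
    {X : ParamExt F Q} {ρ : ι → X.carrier} (hρ : ∀ i, ρ i ∈ X.paramField)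
    (hv : IsUniqueSolution {ρ} v i₀) :
    ∃ Z : ParamExt F Q, ∀ i, algebraMap Q Z.carrier (v i) ∈ Z.paramField := by
  by_contra! h
  have hall (m : ℕ) : Nonempty (ParamSystem F v m) := by
    induction m with
    | zero => exact ⟨⟨X, Fin.elim0, fun k => k.elim0, linearIndependent_empty_type,
        fun k => k.elim0⟩⟩
    | succ m ih =>
      obtain ⟨Z⟩ := ih
      obtain ⟨i, hi⟩ := h Z.toParamExt
      exact (Z.exists_succ_or_mem hρ hv).resolve_right fun hZ => hi (hZ i)
  obtain ⟨Z⟩ := hall (Fintype.card ι + 1)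
  have := Z.linearIndependent_rows.fintype_card_le_finrank
  simp at this

end ParamExt

section FiniteGeneration

variable {k T : Type*} [Field k] [Field T] [Algebra k T]

theorem mem_of_forall_algHom_eq [CharZero k] [IsAlgClosed T]
    {L : IntermediateField k T} (x : algebraicClosure L T)
    (h : ∀ σ : algebraicClosure L T →ₐ[L] T, σ x = x) : (x : T) ∈ L := by
  have : CharZero L := (algebraMap k L).charZero_iff (algebraMap k L).injective |>.mp inferInstance
  obtain ⟨y, rfl⟩ := (InfiniteGalois.mem_range_algebraMap_iff_fixed (k := L) x).mpr fun σ =>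
    Subtype.ext (h ((algebraicClosure L T).val.comp σ))
  exact y.2

theorem linearIndependent_of_normal [CharZero k] [IsAlgClosed T] {F L : IntermediateField k T}
    [Normal k F] {ι : Type*} {ρ : ι → T} (hρL : ∀ i, ρ i ∈ L)
    (hρ : LinearIndependent ↥(L ⊓ F) ρ) : LinearIndependent F ρ := by
  refine linearIndependent_iff_finset_linearIndependent.mpr fun t => ?_
  by_contra h
  obtain ⟨s, v, i₀, hv⟩ := exists_isUniqueSolution h
  let A := algebraicClosure L T
  have hFA (x : F) : (x : T) ∈ A := mem_algebraicClosure_iff.mpr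
    ((Algebra.IsAlgebraic.isAlgebraic (R := k) x).algebraMap.tower_top L)
  let c : F →ₐ[k] A := F.val.codRestrict (A.restrictScalars k).toSubalgebra hFA
  have hsum : ∑ j, c (v j) * algebraMap L A ⟨ρ j, hρL _⟩ = 0 :=
    Subtype.ext (by simpa [Algebra.smul_def] using! hv.sum_eq_zero _ rfl)
  have hvL (i) : (v i : T) ∈ L ⊓ F := by
    refine ⟨mem_of_forall_algHom_eq (c (v i)) fun σ => ?_, (v i).2⟩
    let w : F →ₐ[k] T := (σ.restrictScalars k).comp c
    have hw (x : F) : w x ∈ F := (AlgHom.fieldRange_of_normal w).le ⟨x, rfl⟩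
    have hσ := hv.eq_smul (fun j => (⟨w (v j), hw _⟩ : F)) <| by
      rintro _ rfl
      have h := congrArg σ hsum
      rw [map_sum, map_zero] at h
      exact (Finset.sum_congr rfl fun j _ => by
        rw [map_mul, AlgHom.commutes, Algebra.smul_def]; rfl).trans h
    simpa [hv.apply_eq_one, w, -AlgHom.coe_comp] using! congrArg (fun z => (z i : T)) hσ
  have hzero := Fintype.linearIndependent_iff.mp (hρ.comp (fun i : s => (i : ι))
    (Subtype.val_injective.comp Subtype.val_injective)) (fun i => ⟨v i, hvL i⟩)
    (hv.sum_eq_zero _ rfl) i₀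
  refine one_ne_zero (α := F) (hv.apply_eq_one.symm.trans (Subtype.ext ?_))
  exact congrArg (fun z : ↥(L ⊓ F) => (z : T)) hzero

theorem mem_range_of_tmul_one_eq {y : T} (h : y ⊗ₜ[k] (1 : T) = 1 ⊗ₜ[k] y) :
    y ∈ (algebraMap k T).range := by
  by_contra hy
  have hli : LinearIndependent k ![1, y] :=
    (LinearIndependent.pair_iff' one_ne_zero).mpr fun a ha =>
      hy ⟨a, by rw [← ha, Algebra.smul_def, mul_one]⟩
  have h01 := (hli.tmul_of_flat_left hli).injective (a₁ := (1, 0)) (a₂ := (0, 1)) h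
  exact absurd h01 (by decide)

theorem fg_of_essFiniteType [Algebra.EssFiniteType k T] (S : IntermediateField k T) : S.FG := by
  -- An intermediate field `L` is recovered as the set of `x` with `x ⊗ 1 = 1 ⊗ x` in `T ⊗[L] T`,
  -- so generators for the ideal of the noetherian ring `T ⊗[k] T` attached to `S` generate `S`.
  let f (x : T) : T ⊗[k] T := x ⊗ₜ 1 - 1 ⊗ₜ x
  have : IsNoetherianRing (T ⊗[k] T) := Algebra.EssFiniteType.isNoetherianRing T _
  obtain ⟨s, hs, hspan⟩ := Submodule.fg_span_iff_fg_span_finset_subset _ |>.mp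
    (IsNoetherian.noetherian (Ideal.span (f '' S)))
  classical
  obtain ⟨c, hc, rfl⟩ := Finset.subset_set_image_iff.mp hs
  refine ⟨c, le_antisymm (IntermediateField.adjoin_le_iff.mpr hc) fun y hy => ?_⟩
  let L := IntermediateField.adjoin k (c : Set T)
  let π : T ⊗[k] T →ₐ[k] T ⊗[L] T := Algebra.TensorProduct.productMap
    ((Algebra.TensorProduct.includeLeft : T →ₐ[L] T ⊗[L] T).restrictScalars k)
    ((Algebra.TensorProduct.includeRight : T →ₐ[L] T ⊗[L] T).restrictScalars k)
  have hπ (x : T) : π (f x) = x ⊗ₜ 1 - 1 ⊗ₜ x := by simp [π, f]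
  have hker : Ideal.span (f '' S) ≤ RingHom.ker π := by
    refine hspan.le.trans (Ideal.span_le.mpr fun z hz => ?_)
    obtain ⟨x, hx, rfl⟩ := Finset.mem_image.mp hz
    rw [SetLike.mem_coe, RingHom.mem_ker, hπ, sub_eq_zero]
    have h := TensorProduct.smul_tmul (R := L)
      (⟨x, IntermediateField.subset_adjoin k _ hx⟩ : L) (1 : T) (1 : T)
    simpa [Algebra.smul_def] using h
  obtain ⟨z, rfl⟩ := mem_range_of_tmul_one_eq (k := L)
    (sub_eq_zero.mp ((hπ y).symm.trans (hker (Ideal.subset_span ⟨y, hy, rfl⟩))))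
  exact z.2

theorem fg_of_le {S N : IntermediateField k T} (hN : N.FG) (hS : S ≤ N) : S.FG := by
  have : Algebra.EssFiniteType k N := IntermediateField.essFiniteType_iff.mpr hN
  rw [← IntermediateField.lift_restrict hS]
  exact fg_map (fg_of_essFiniteType _) _

end FiniteGeneration

section DiffFiniteGeneration

variable {κ F T : Type*} [Field κ] [Field F] [Field T] [Algebra F T] [Algebra κ T]

theorem exists_finset_mem_adjoin {s : Set T} {x : T} (hx : x ∈ IntermediateField.adjoin F s) :
    ∃ c : Finset F, x ∈ IntermediateField.adjoin κ (algebraMap F T '' c ∪ s) := by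
  classical
  have hmono {c d : Finset F} (h : c ⊆ d) :
      IntermediateField.adjoin κ (algebraMap F T '' c ∪ s) ≤
        IntermediateField.adjoin κ (algebraMap F T '' d ∪ s) :=
    IntermediateField.adjoin.mono _ _ _
      (Set.union_subset_union_left s (Set.image_mono (Finset.coe_subset.mpr h)))
  induction hx using IntermediateField.adjoin_induction with
  | mem x hx => exact ⟨∅, IntermediateField.subset_adjoin _ _ (.inr hx)⟩
  | algebraMap a => exact ⟨{a}, IntermediateField.subset_adjoin _ _ (.inl ⟨a, by simp, rfl⟩)⟩
  | add x y _ _ hx hy =>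
    obtain ⟨c, hc⟩ := hx
    obtain ⟨d, hd⟩ := hy
    exact ⟨c ∪ d, add_mem (hmono Finset.subset_union_left hc) (hmono Finset.subset_union_right hd)⟩
  | inv x _ hx => exact hx.imp fun c hc => inv_mem hc
  | mul x y _ _ hx hy =>
    obtain ⟨c, hc⟩ := hx
    obtain ⟨d, hd⟩ := hy
    exact ⟨c ∪ d, mul_mem (hmono Finset.subset_union_left hc) (hmono Finset.subset_union_right hd)⟩

theorem exists_finset_subset_adjoin {s : Set T} {t : Finset T}
    (ht : ↑t ⊆ (IntermediateField.adjoin F s : Set T)) :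
    ∃ c : Finset F, ↑t ⊆ (IntermediateField.adjoin κ (algebraMap F T '' c ∪ s) : Set T) := by
  classical
  choose c hc using fun x : t => exists_finset_mem_adjoin (κ := κ) (ht x.2)
  refine ⟨Finset.univ.biUnion c, fun x hx => IntermediateField.adjoin.mono _ _ _
    (Set.union_subset_union_left s (Set.image_mono ?_)) (hc ⟨x, hx⟩)⟩
  exact Finset.coe_subset.mpr (Finset.subset_biUnion_of_mem c (Finset.mem_univ _))

open scoped IntermediateField.algebraAdjoinAdjoin in
theorem exists_common_denominator {S : Set T} {u : Finset T}
    (hu : ↑u ⊆ (IntermediateField.adjoin κ S : Set T)) :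
    ∃ q ∈ Algebra.adjoin κ S, q ≠ 0 ∧ ∀ x ∈ u, q * x ∈ Algebra.adjoin κ S := by
  classical
  obtain ⟨q, hq⟩ := IsLocalization.exist_integer_multiples_of_finset
    (nonZeroDivisors (Algebra.adjoin κ S))
    (u.attach.image fun x : u => (⟨x, hu x.2⟩ : IntermediateField.adjoin κ S))
  refine ⟨(q : Algebra.adjoin κ S), (q : Algebra.adjoin κ S).2,
    fun h => nonZeroDivisors.ne_zero q.2 (Subtype.ext h), fun x hx => ?_⟩
  obtain ⟨y, hy⟩ := hq ⟨x, hu hx⟩ (Finset.mem_image.mpr ⟨⟨x, hx⟩, Finset.mem_attach _ _, rfl⟩)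
  have hy' : (y : T) = (q : Algebra.adjoin κ S) * x := by
    simpa [Algebra.smul_def] using
      congrArg (fun z : IntermediateField.adjoin κ S => (z : T)) hy
  exact hy' ▸ y.2

variable [Differential κ] [Differential T] [DifferentialAlgebra κ T]

open Polynomial Differential in
theorem deriv_mem_adjoin_of_isAlgebraic [CharZero κ] {x : T} (hx : IsAlgebraic κ x) :
    x′ ∈ IntermediateField.adjoin κ {x} := by
  have hmem (p : κ[X]) : aeval x p ∈ IntermediateField.adjoin κ {x} :=
    IntermediateField.algebra_adjoin_le_adjoin κ _ (aeval_mem_adjoin_singleton κ x)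
  have h := deriv_aeval_eq x (minpoly κ x)
  have h0 : aeval x (derivative (minpoly κ x)) ≠ 0 :=
    (minpoly.irreducible hx.isIntegral).separable.aeval_derivative_ne_zero (minpoly.aeval κ x)
  rw [minpoly.aeval, map_zero] at h
  rw [← mul_div_cancel_left₀ x′ h0, ← neg_eq_of_add_eq_zero_right h.symm]
  exact div_mem (neg_mem (hmem _)) (hmem _)

theorem exists_fg_isDiffStable [CharZero κ] [Algebra κ F] [IsScalarTower κ F T]
    [Algebra.IsAlgebraic κ F] {N : IntermediateField F T} (hN : N.FG) (hd : IsDiffStable N)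
    {t : Finset T} (ht : (t : Set T) ⊆ N) :
    ∃ N₀ : IntermediateField κ T, N₀.FG ∧ IsDiffStable N₀ ∧ (t : Set T) ⊆ N₀ ∧
      (N₀ : Set T) ⊆ N := by
  classical
  obtain ⟨s, rfl⟩ := hN
  have hs : ↑(t ∪ s.image fun x => x′) ⊆ (IntermediateField.adjoin F (s : Set T) : Set T) := by
    simp only [Finset.coe_union, Finset.coe_image, Set.union_subset_iff, Set.image_subset_iff]
    exact ⟨ht, fun x hx => hd x (IntermediateField.subset_adjoin F _ hx)⟩
  obtain ⟨c, hc⟩ := exists_finset_subset_adjoin (κ := κ) hs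
  have hle : IntermediateField.adjoin κ (algebraMap F T '' c ∪ s) ≤
      (IntermediateField.adjoin F (s : Set T)).restrictScalars κ := by
    refine IntermediateField.adjoin_le_iff.mpr
      (Set.union_subset ?_ (IntermediateField.subset_adjoin F _))
    rintro _ ⟨a, _, rfl⟩
    exact algebraMap_mem (IntermediateField.adjoin F (s : Set T)) a
  refine ⟨IntermediateField.adjoin κ (algebraMap F T '' c ∪ s), ?_, isDiffStable_adjoin ?_,
    fun x hx => hc (by simp [Finset.mem_coe.mp hx]), hle⟩
  · exact IntermediateField.fg_adjoin_of_finite ((c.finite_toSet.image _).union s.finite_toSet)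
  rintro _ (⟨a, ha, rfl⟩ | hx)
  · refine IntermediateField.adjoin.mono _ _ _ ?_
      (deriv_mem_adjoin_of_isAlgebraic ((Algebra.IsAlgebraic.isAlgebraic (R := κ) a).algebraMap))
    exact Set.singleton_subset_iff.mpr (.inl ⟨a, ha, rfl⟩)
  · exact hc (by simpa using .inr ⟨_, hx, rfl⟩)

theorem deriv_mem_of_mem_adjoin {R : Subalgebra κ T} {S : Set T} (hSR : S ⊆ R)
    (hS : ∀ x ∈ S, x′ ∈ R) {x : T} (hx : x ∈ Algebra.adjoin κ S) : x′ ∈ R := by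
  have hle := Algebra.adjoin_le hSR
  induction hx using Algebra.adjoin_induction with
  | mem x hx => exact hS x hx
  | algebraMap a => rw [deriv_algebraMap]; exact algebraMap_mem _ _
  | add x y _ _ hx hy => rw [map_add]; exact add_mem hx hy
  | mul x y hx hy hx' hy' =>
    rw [Derivation.leibniz]
    exact add_mem (mul_mem (hle hx) hy') (mul_mem (hle hy) hx')

theorem exists_subalgebra_fg_isDiffStable {N : IntermediateField κ T} (hN : N.FG)
    (hd : IsDiffStable N) {t : Finset T} (ht : (t : Set T) ⊆ N) :
    ∃ R : Subalgebra κ T, R.FG ∧ IsDiffStable R ∧ (t : Set T) ⊆ R ∧ R ≤ N.toSubalgebra := by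
  classical
  obtain ⟨s, rfl⟩ := hN
  have hsN : (s : Set T) ⊆ IntermediateField.adjoin κ (s : Set T) :=
    IntermediateField.subset_adjoin κ _
  obtain ⟨q, hqA, hq0, hq⟩ := exists_common_denominator (u := t ∪ s.image fun x => x′) <| by
    simp only [Finset.coe_union, Finset.coe_image, Set.union_subset_iff, Set.image_subset_iff]
    exact ⟨ht, fun x hx => hd x (hsN hx)⟩
  let R := Algebra.adjoin κ (insert q⁻¹ (s : Set T))
  have hsR : (s : Set T) ⊆ R := (Set.subset_insert _ _).trans Algebra.subset_adjoin
  have hqR : q⁻¹ ∈ R := Algebra.subset_adjoin (Set.mem_insert _ _)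
  have huR (x) (hx : x ∈ t ∪ s.image fun x => x′) : x ∈ R := by
    rw [← inv_mul_cancel_left₀ hq0 x]
    exact mul_mem hqR (Algebra.adjoin_mono (Set.subset_insert _ _) (hq x hx))
  have hsR' (x) (hx : x ∈ (s : Set T)) : x′ ∈ R :=
    huR _ (Finset.mem_union_right _ (Finset.mem_image_of_mem _ hx))
  refine ⟨R, ⟨insert q⁻¹ s, by rw [Finset.coe_insert]⟩, ?_, fun x hx =>
    huR x (Finset.mem_union_left _ hx), Algebra.adjoin_le (Set.insert_subset ?_ hsN)⟩
  · refine fun _ => deriv_mem_of_mem_adjoin Algebra.subset_adjoin ?_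
    rintro _ (rfl | hx)
    · rw [deriv_inv, div_eq_mul_inv, ← inv_pow]
      exact mul_mem (neg_mem (deriv_mem_of_mem_adjoin hsR hsR' hqA)) (pow_mem hqR 2)
    · exact hsR' _ hx
  · exact (IntermediateField.adjoin κ (s : Set T)).inv_mem
      (IntermediateField.algebra_adjoin_le_adjoin κ _ hqA)

end DiffFiniteGeneration

section Control

/-- A differential `κ`-algebra `A` is controlled by a differential `κ`-algebra `R` if, whenever both
are mapped to a differential field `Ω`, the image of `A` lies in the field generated by the image of
`R` and the constants of `Ω`. -/
def IsControlledBy (κ A R : Type u) [Field κ] [CommRing A] [CommRing R] [Algebra κ A] [Algebra κ R]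
    [Differential A] [Differential R] : Prop :=
  ∀ (Ω : Type u) [Field Ω] [Differential Ω] [Algebra κ Ω] (θ : A →ₐ[κ] Ω) (φ : R →ₐ[κ] Ω),
    IsDiffHom θ.toRingHom → IsDiffHom φ.toRingHom →
      ∀ x, θ x ∈ Subfield.closure (Set.range φ) ⊔ constants Ω

variable {κ A R T : Type*} [Field κ] [CommRing A] [CommRing R] [Field T] [Algebra κ A]
  [Algebra κ R] [Algebra κ T]

theorem productMap_injective {ι : Type*} (b : Module.Basis ι κ A) {R : Subalgebra κ T}
    {j : A →ₐ[κ] T} (h : LinearIndependent R (j ∘ b)) :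
    Function.Injective (Algebra.TensorProduct.productMap j R.val) := by
  refine (injective_iff_map_eq_zero _).mpr fun x hx => ?_
  obtain ⟨r, rfl⟩ := TensorProduct.eq_repr_basis_left b x
  have hr : r = 0 := by
    refine linearIndependent_iff.mp h r ?_
    rw [← hx]
    simp [Finsupp.linearCombination_apply, Finsupp.sum, map_sum, Subalgebra.smul_def, mul_comm]
  simp [hr]

theorem productMap_wronskian_append [Differential κ] [Differential A] [Differential R]
    [Differential T] [DifferentialAlgebra κ A] [DifferentialAlgebra κ R] {f : A →ₐ[κ] T}
    {g : R →ₐ[κ] T} (hf : IsDiffHom f.toRingHom) (hg : IsDiffHom g.toRingHom) {n : ℕ}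
    (e : Fin n → R) (x : A) :
    Algebra.TensorProduct.productMap f g
        (wronskian (Fin.append (fun m => 1 ⊗ₜ[κ] e m) fun m => x ⊗ₜ[κ] e m)) =
      wronskian (Fin.append (g ∘ e) (f x • g ∘ e)) := by
  have h : IsDiffHom (Algebra.TensorProduct.productMap f g).toRingHom :=
    isDiffHom_of_tensorProduct κ A R (fun a => by simpa using! hf a) fun r => by simpa using! hg r
  refine (h.map_wronskian _).trans (congrArg wronskian (funext fun m => ?_))
  induction m using Fin.addCases
  · simp
  · simp only [Function.comp_apply, Fin.append_right]
    simp

theorem apply_mem_sup_constants_of_wronskian [Differential κ] [Differential A] [Differential R]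
    [Differential T] [DifferentialAlgebra κ A] [DifferentialAlgebra κ R] {j : A →ₐ[κ] T}
    {i : R →ₐ[κ] T} (hj : IsDiffHom j.toRingHom) (hi : IsDiffHom i.toRingHom)
    (hinj : Function.Injective (Algebra.TensorProduct.productMap j i)) {x : A} {n : ℕ}
    {e : Fin n → R} (he : IsUnit (wronskian e))
    (hx : wronskian (Fin.append (i ∘ e) (j x • i ∘ e)) = 0)
    {Ω : Type*} [Field Ω] [Differential Ω] [Algebra κ Ω] {θ : A →ₐ[κ] Ω} {φ : R →ₐ[κ] Ω}
    (hθ : IsDiffHom θ.toRingHom) (hφ : IsDiffHom φ.toRingHom) :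
    θ x ∈ Subfield.closure (Set.range φ) ⊔ constants Ω := by
  rw [← productMap_wronskian_append hj hi, map_eq_zero_iff _ hinj] at hx
  refine mem_sup_constants_iff.mpr ⟨n, φ ∘ e, fun m => Subfield.subset_closure ⟨_, rfl⟩, ?_, ?_⟩
  · exact hφ.map_wronskian e ▸ (he.map φ).ne_zero
  · rw [← productMap_wronskian_append hθ hφ, hx, map_zero]

end Control

section ControlExistence

theorem differentialAlgebra_subalgebra {κ Q : Type*} [CommRing κ] [CommRing Q]
    [Algebra κ Q] [Differential κ] [Differential Q] [DifferentialAlgebra κ Q] {R : Subalgebra κ Q}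
    (hR : IsDiffStable R) :
    letI := differentialOfStable R hR
    DifferentialAlgebra κ R :=
  letI := differentialOfStable R hR
  ⟨fun a => Subtype.ext (deriv_algebraMap a)⟩

theorem linearIndependent_subalgebra {κ F Q T : Type*} [Field κ] [Field F] [Field Q] [Field T]
    [Algebra κ T] [Algebra F Q] [Algebra F T]
    [Algebra Q T] [IsScalarTower F Q T] {N : IntermediateField F T} (hN : N.LinearDisjoint Q)
    {R : Subalgebra κ T} (hR : (R : Set T) ⊆ N) {ι : Type*} {b : ι → Q}
    (hb : LinearIndependent F b) : LinearIndependent R (algebraMap Q T ∘ b) := by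
  let _ : Algebra R N := RingHom.toAlgebra
    { toFun := fun x => ⟨x, hR x.2⟩
      map_one' := rfl
      map_mul' := fun _ _ => rfl
      map_zero' := rfl
      map_add' := fun _ _ => rfl }
  have : IsScalarTower R N T := .of_algebraMap_eq fun _ => rfl
  have hinj : Function.Injective (algebraMap R N) := fun x y hxy =>
    Subtype.ext (congrArg (fun z : N => (z : T)) hxy)
  exact (hN.linearIndependent_right' hb).restrict_scalars (by simpa [Algebra.smul_def] using hinj)

theorem coe_wronskian {A S : Type*} [CommRing A] [Differential A] [SetLike S A]
    [SubringClass S A] {s : S} (hs : IsDiffStable s) {n : ℕ} (e : Fin n → s) :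
    letI := differentialOfStable s hs
    ((wronskian e : s) : A) = wronskian fun i => (e i : A) :=
  letI := differentialOfStable s hs
  IsDiffHom.map_wronskian (f := SubringClass.subtype s) (fun _ => rfl) e

theorem exists_finset_wronskian {T : Type*} [Field T] [Differential T] {N : Subfield T}
    (hN : IsDiffStable N) (u : Finset T) (hu : ∀ x ∈ u, x ∈ N ⊔ constants T) :
    ∃ c : Finset T, (c : Set T) ⊆ N ∧ ∀ x ∈ u, ∃ (n : ℕ) (e : Fin n → T), (∀ i, e i ∈ c) ∧
      wronskian e ≠ 0 ∧ (wronskian e)⁻¹ ∈ c ∧ wronskian (Fin.append e (x • e)) = 0 := by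
  classical
  choose n e heN he hx using fun x : u => mem_sup_constants_iff.mp (hu x x.2)
  have hw (x : u) : wronskian (e x) ∈ N :=
    coe_wronskian hN (fun i => (⟨e x i, heN x i⟩ : N)) ▸ Subtype.property _
  refine ⟨Finset.univ.biUnion fun x => insert (wronskian (e x))⁻¹ (Finset.univ.image (e x)), ?_,
    fun x hxu => ⟨n ⟨x, hxu⟩, e ⟨x, hxu⟩, fun i => ?_, he _, ?_, hx _⟩⟩
  · simpa [Set.insert_subset_iff, Set.range_subset_iff] using fun x hx => ⟨hw ⟨x, hx⟩, heN ⟨x, hx⟩⟩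
  · exact Finset.mem_biUnion.mpr ⟨⟨x, hxu⟩, by simp, by simp⟩
  · exact Finset.mem_biUnion.mpr ⟨⟨x, hxu⟩, by simp, by simp⟩

theorem apply_mem_of_adjoin_eq {κ Q Ω : Type*} [CommRing κ] [CommRing Q] [Field Ω] [Algebra κ Q]
    [Algebra κ Ω] {R₀ : Subalgebra κ Q} {u : Set Q} (hu : Algebra.adjoin κ u = R₀)
    (θ : R₀ →ₐ[κ] Ω) {N : Subfield Ω} (hκ : ∀ a, algebraMap κ Ω a ∈ N)
    (hN : ∀ x : R₀, (x : Q) ∈ u → θ x ∈ N) (x : R₀) : θ x ∈ N := by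
  obtain ⟨x, hx⟩ := x
  subst hu
  induction hx using Algebra.adjoin_induction with
  | mem x hx => exact hN ⟨x, _⟩ hx
  | algebraMap a => exact (θ.commutes a).symm ▸ hκ a
  | add x y hx hy hx' hy' => exact (map_add θ ⟨x, hx⟩ ⟨y, hy⟩).symm ▸ add_mem hx' hy'
  | mul x y hx hy hx' hy' => exact (map_mul θ ⟨x, hx⟩ ⟨y, hy⟩).symm ▸ mul_mem hx' hy'

theorem isControlledBy_of_wronskian {κ Q T : Type u} [Field κ] [Field Q] [Field T] [Algebra κ Q]
    [Algebra κ T] [Algebra Q T] [IsScalarTower κ Q T] [Differential κ] [Differential Q]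
    [Differential T] [DifferentialAlgebra κ Q] [DifferentialAlgebra κ T] [DifferentialAlgebra Q T]
    {R₀ : Subalgebra κ Q} (hR₀ : IsDiffStable R₀) {R : Subalgebra κ T} (hR : IsDiffStable R)
    (hinj : Function.Injective (Algebra.TensorProduct.productMap
      ((IsScalarTower.toAlgHom κ Q T).comp R₀.val) R.val))
    {u : Set Q} (hu : Algebra.adjoin κ u = R₀)
    (h : ∀ x ∈ u, ∃ (n : ℕ) (e : Fin n → T), (∀ i, e i ∈ R) ∧ wronskian e ≠ 0 ∧
      (wronskian e)⁻¹ ∈ R ∧ wronskian (Fin.append e (algebraMap Q T x • e)) = 0) :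
    letI := differentialOfStable R₀ hR₀
    letI := differentialOfStable R hR
    IsControlledBy κ R₀ R := by
  let _ := differentialOfStable R₀ hR₀
  let _ := differentialOfStable R hR
  have : DifferentialAlgebra κ R₀ := differentialAlgebra_subalgebra hR₀
  have : DifferentialAlgebra κ R := differentialAlgebra_subalgebra hR
  intro Ω _ _ _ θ φ hθ hφ
  have hj : IsDiffHom ((IsScalarTower.toAlgHom κ Q T).comp R₀.val).toRingHom :=
    fun x => (deriv_algebraMap (x : Q)).symm
  refine apply_mem_of_adjoin_eq hu θ (fun a => ?_) fun x hx => ?_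
  · exact (le_sup_left : _ ≤ _ ⊔ constants Ω)
      (Subfield.subset_closure ⟨algebraMap κ R a, φ.commutes a⟩)
  · obtain ⟨n, e, heR, he, heR', hex⟩ := h x hx
    let e' (m : Fin n) : R := ⟨e m, heR m⟩
    refine apply_mem_sup_constants_of_wronskian hj (i := R.val) (fun _ => rfl) hinj (e := e')
      (.of_mul_eq_one ⟨_, heR'⟩ (Subtype.ext ?_)) hex hθ hφ
    exact (congrArg (· * (wronskian e)⁻¹) (coe_wronskian hR e')).trans (mul_inv_cancel₀ he)

theorem exists_isControlledBy {κ F Q : Type u} [Field κ] [Field F] [Field Q] [Algebra κ F]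
    [Algebra F Q] [Algebra κ Q] [IsScalarTower κ F Q] [Algebra.IsAlgebraic κ F] [Differential κ]
    [Differential Q] [DifferentialAlgebra κ Q] [CharZero κ] (Z : ParamExt F Q)
    {R₀ : Subalgebra κ Q} (hR₀ : IsDiffStable R₀)
    (hLI : ∀ (ι : Type u) (ρ : ι → R₀), LinearIndependent κ ρ →
      LinearIndependent F fun i => (ρ i : Q))
    {u : Finset Q} (hu : Algebra.adjoin κ (u : Set Q) = R₀)
    (huZ : ∀ x ∈ u, algebraMap Q Z.carrier x ∈ Z.paramField) :
    ∃ (R : Type u) (_ : CommRing R) (_ : Nontrivial R) (_ : Algebra κ R) (_ : Differential R),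
      DifferentialAlgebra κ R ∧ Algebra.FiniteType κ R ∧
      letI := differentialOfStable R₀ hR₀
      IsControlledBy κ R₀ R := by
  classical
  let _ : Algebra κ Z.carrier := ((algebraMap Q Z.carrier).comp (algebraMap κ Q)).toAlgebra
  have : IsScalarTower κ Q Z.carrier := .of_algebraMap_eq fun _ => rfl
  have : IsScalarTower κ F Z.carrier := .of_algebraMap_eq fun x => by
    rw [IsScalarTower.algebraMap_apply F Q, ← IsScalarTower.algebraMap_apply κ F Q]; rfl
  have : DifferentialAlgebra κ Z.carrier := differentialAlgebra_trans κ Q Z.carrier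
  obtain ⟨c, hcN, hc⟩ := exists_finset_wronskian (N := Z.params.toSubfield)
    Z.isDiffStable_params (u.image (algebraMap Q Z.carrier)) (Finset.forall_mem_image.mpr huZ)
  obtain ⟨N₀, hN₀, hN₀d, hcN₀, hN₀N⟩ :=
    exists_fg_isDiffStable (κ := κ) Z.fg_params Z.isDiffStable_params hcN
  obtain ⟨R, hR, hRd, hcR, hRN₀⟩ := exists_subalgebra_fg_isDiffStable hN₀ hN₀d hcN₀
  have hinj : Function.Injective (Algebra.TensorProduct.productMap
      ((IsScalarTower.toAlgHom κ Q Z.carrier).comp R₀.val) R.val) :=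
    productMap_injective (Module.Basis.ofVectorSpace κ R₀) <| linearIndependent_subalgebra
      Z.linearDisjoint_params (fun x hx => hN₀N (hRN₀ hx))
      (hLI _ _ (Module.Basis.ofVectorSpace κ R₀).linearIndependent)
  refine ⟨R, inferInstance, inferInstance, inferInstance, differentialOfStable R hRd,
    differentialAlgebra_subalgebra hRd, R.fg_iff_finiteType.mp hR,
    isControlledBy_of_wronskian hR₀ hRd hinj hu fun x hx => ?_⟩
  obtain ⟨n, e, hec, he, hec', hex⟩ := hc _ (Finset.mem_image_of_mem _ hx)
  exact ⟨n, e, fun i => hcR (hec i), he, hcR hec', hex⟩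

end ControlExistence

section ControlledSubalgebra

variable {k Q : Type u} [Field k] [Field Q] [Algebra k Q] [Differential Q]

variable (k Q) in
/-- A differential subalgebra of `Q` over a finite extension `base` of `k`, together with a
finitely generated differential `base`-algebra `ring` which controls it. -/
structure ControlledSubalgebra where
  /-- The base field. -/
  base : IntermediateField k Q
  [finiteDimensional : FiniteDimensional k base]
  isDiffStable_base : IsDiffStable base
  /-- The controlled subalgebra. -/
  subalgebra : Subalgebra base Q
  isDiffStable_subalgebra : IsDiffStable subalgebra
  fg_subalgebra : subalgebra.FG
  /-- The controlling algebra. -/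
  ring : Type u
  [commRing : CommRing ring]
  [nontrivial : Nontrivial ring]
  [algebra : Algebra base ring]
  [differential : Differential ring]
  [differentialAlgebra : letI := differentialOfStable base isDiffStable_base
    DifferentialAlgebra base ring]
  [finiteType : Algebra.FiniteType base ring]
  isControlledBy : letI := differentialOfStable subalgebra isDiffStable_subalgebra
    IsControlledBy base subalgebra ring

theorem fg_extendScalars {k Q : Type*} [Field k] [Field Q] [Algebra k Q]
    {κ L : IntermediateField k Q} (hL : L.FG) (h : κ ≤ L) :
    (IntermediateField.extendScalars h).FG := by
  obtain ⟨s, rfl⟩ := hL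
  rw [IntermediateField.extendScalars_adjoin]
  exact IntermediateField.fg_adjoin_finset s

theorem finiteDimensional_of_fg {k Q : Type*} [Field k] [Field Q] [Algebra k Q]
    {S : IntermediateField k Q} [Algebra.IsAlgebraic k S] (hS : S.FG) : FiniteDimensional k S := by
  obtain ⟨s, rfl⟩ := hS
  exact IntermediateField.finiteDimensional_adjoin fun x hx =>
    (Algebra.IsIntegral.isIntegral (R := k) (⟨x, IntermediateField.subset_adjoin k _ hx⟩ :
      IntermediateField.adjoin k (s : Set Q))).map (IntermediateField.val _)

theorem ParamExt.algebraMap_mem_paramField_of_mem_adjoin {F : Type u} [Field F] [Algebra F Q]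
    (Z : ParamExt F Q) {t : Set Q} (ht : ∀ x ∈ t, algebraMap Q Z.carrier x ∈ Z.paramField) {x : Q}
    (hx : x ∈ IntermediateField.adjoin F t) : algebraMap Q Z.carrier x ∈ Z.paramField := by
  suffices (IntermediateField.adjoin F t).toSubfield ≤
      Z.paramField.comap (algebraMap Q Z.carrier) from this hx
  refine Subfield.closure_le.mpr (Set.union_subset ?_ ht)
  rintro _ ⟨x, rfl⟩
  refine (le_sup_left : Z.params.toSubfield ≤ Z.paramField) ?_
  rw [IntermediateField.mem_toSubfield, ← IsScalarTower.algebraMap_apply]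
  exact algebraMap_mem _ _

theorem exists_controlledSubalgebra [CharZero k] [IsAlgClosed Q] [Differential k]
    [DifferentialAlgebra k Q] {F : IntermediateField k Q} [Normal k F] (hF : IsDiffStable F)
    (Z : ParamExt F Q) {t : Finset Q}
    (htd : IsDiffStable (IntermediateField.adjoin F (t : Set Q)))
    (htZ : ∀ x ∈ t, algebraMap Q Z.carrier x ∈ Z.paramField) :
    ∃ S : ControlledSubalgebra k Q, (t : Set Q) ⊆ S.subalgebra := by
  obtain ⟨L, hL, hLd, htL, hLt⟩ := exists_fg_isDiffStable (κ := k) ⟨t, rfl⟩ htd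
    (IntermediateField.subset_adjoin F _)
  let κ := L ⊓ F
  have hdκ : IsDiffStable κ := fun x hx => ⟨hLd x hx.1, hF x hx.2⟩
  let _ := differentialOfStable κ hdκ
  let _ : Algebra κ F := (IntermediateField.inclusion (inf_le_right : κ ≤ F)).toAlgebra
  have : IsScalarTower κ F Q := .of_algebraMap_eq fun _ => rfl
  have : IsScalarTower k κ F := .of_algebraMap_eq fun _ => rfl
  have : Algebra.IsAlgebraic k κ := .tower_bot k κ F
  have : Algebra.IsAlgebraic κ F := .tower_top (K := k) κ
  have : CharZero κ := charZero_of_injective_algebraMap (algebraMap k κ).injective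
  have : DifferentialAlgebra κ Q := ⟨fun _ => rfl⟩
  have : FiniteDimensional k κ := finiteDimensional_of_fg (fg_of_le hL inf_le_left)
  obtain ⟨R₀, ⟨u, hu⟩, hR₀d, htR₀, hR₀L⟩ :=
    exists_subalgebra_fg_isDiffStable (N := IntermediateField.extendScalars (inf_le_left : κ ≤ L))
      (fg_extendScalars hL _) hLd htL
  have hLI (ι : Type u) (ρ : ι → R₀) (hρ : LinearIndependent κ ρ) :
      LinearIndependent F fun i => (ρ i : Q) :=
    linearIndependent_of_normal (fun i => hR₀L (ρ i).2)
      (hρ.map' R₀.val.toLinearMap (LinearMap.ker_eq_bot.mpr Subtype.val_injective))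
  obtain ⟨R, _, _, _, _, _, _, hR⟩ := exists_isControlledBy Z hR₀d hLI hu fun x hx =>
    Z.algebraMap_mem_paramField_of_mem_adjoin htZ (hLt (hR₀L (hu.le (Algebra.subset_adjoin hx))))
  exact ⟨{
    base := κ
    isDiffStable_base := hdκ
    subalgebra := R₀
    isDiffStable_subalgebra := hR₀d
    fg_subalgebra := ⟨u, hu⟩
    ring := R
    isControlledBy := hR }, htR₀⟩

end ControlledSubalgebra

theorem IsDiffStable.radical {A : Type*} [CommRing A] [Algebra ℚ A] [Differential A] {I : Ideal A}
    (hI : IsDiffStable I) : IsDiffStable I.radical := by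
  rintro x ⟨n, hn⟩
  suffices h : ∀ j m : ℕ, m + j = n → x ^ m * (x′) ^ (2 * j) ∈ I from
    ⟨2 * n, by simpa using h n 0 (zero_add n)⟩
  intro j
  induction j with
  | zero => rintro m rfl; simpa using hn
  | succ j ih =>
    intro m hm
    have hmem := ih (m + 1) (by omega)
    -- differentiate `x ^ (m + 1) * x′ ^ (2 * j)` and multiply by `x′`
    have hderiv := I.sub_mem (I.mul_mem_left (x′) (hI _ hmem))
      (I.mul_mem_left (((2 * j : ℕ) : A) * x′′) hmem)
    have hsmul : ((m + 1 : ℕ) : ℚ) • (x ^ m * (x′) ^ (2 * (j + 1))) ∈ I := by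
      convert hderiv using 1
      rw [Algebra.smul_def, map_natCast]
      rcases j with _ | j
      · simp
        ring
      · simp only [Derivation.leibniz, Derivation.leibniz_pow, smul_eq_mul, nsmul_eq_mul,
          Nat.add_sub_cancel, show 2 * (j + 1) - 1 = 2 * j + 1 by omega]
        push_cast
        ring
    simpa [smul_smul, Nat.cast_add_one_ne_zero] using
      Submodule.smul_of_tower_mem I ((m + 1 : ℕ) : ℚ)⁻¹ hsmul

/-- A proper differential ideal that is maximal among the proper differential ideals. -/
def IsMaximalDiffIdeal {A : Type*} [CommRing A] [Differential A] (I : Ideal A) : Prop :=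
  Maximal (fun J : Ideal A => J ≠ ⊤ ∧ IsDiffStable J) I

theorem exists_isMaximalDiffIdeal (A : Type*) [CommRing A] [Nontrivial A] [Differential A] :
    ∃ I : Ideal A, IsMaximalDiffIdeal I := by
  suffices h : ∃ I, ⊥ ≤ I ∧ Maximal (· ∈ {I : Ideal A | I ≠ ⊤ ∧ IsDiffStable I}) I from
    h.imp fun _ => And.right
  refine zorn_le_nonempty₀ _ (fun c hc hchain I₀ hI₀ => ?_) ⊥
    ⟨bot_ne_top, fun x hx => by simp_all⟩
  have hmem {x : A} : x ∈ sSup c ↔ ∃ I ∈ c, x ∈ I :=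
    Submodule.mem_sSup_of_directed ⟨I₀, hI₀⟩ hchain.directedOn
  refine ⟨sSup c, ⟨?_, fun x hx => ?_⟩, fun I hI => le_sSup hI⟩
  · rw [Ideal.ne_top_iff_one, hmem]
    rintro ⟨I, hI, h⟩
    exact (hc hI).1 ((Ideal.eq_top_iff_one _).mpr h)
  · obtain ⟨I, hI, h⟩ := hmem.mp hx
    exact hmem.mpr ⟨I, hI, (hc hI).2 _ h⟩

theorem IsMaximalDiffIdeal.eq_top_of_notMem {A : Type*} [CommRing A] [Differential A]
    {I J : Ideal A} (hI : IsMaximalDiffIdeal I) (hJ : IsDiffStable J) (hIJ : I ≤ J) {x : A}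
    (hx : x ∈ J) (hxI : x ∉ I) : J = ⊤ := by
  by_contra h
  exact hxI (hI.2 ⟨h, hJ⟩ hIJ hx)

theorem IsMaximalDiffIdeal.isPrime {A : Type*} [CommRing A] [Algebra ℚ A] [Differential A]
    {I : Ideal A} (hI : IsMaximalDiffIdeal I) : I.IsPrime := by
  have hrad {x : A} (hx : x ^ 2 ∈ I) : x ∈ I :=
    hI.2 ⟨by rw [Ne, Ideal.radical_eq_top]; exact hI.1.1, hI.1.2.radical⟩ Ideal.le_radical ⟨2, hx⟩
  refine ⟨hI.1.1, fun {x a} hxa => or_iff_not_imp_left.mpr fun hx => ?_⟩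
  let J : Ideal A := Submodule.comap (LinearMap.mulRight A a) I
  have hJ : IsDiffStable J := fun y (hy : y * a ∈ I) => by
    refine hrad ?_
    have h := hI.1.2 _ hy
    rw [Derivation.leibniz, smul_eq_mul, smul_eq_mul] at h
    convert I.sub_mem (I.mul_mem_left (y′ * a) h) (I.mul_mem_left (y′ * a′) hy) using 1
    simp only [LinearMap.mulRight_apply]
    ring
  have hJ' : J = ⊤ := hI.eq_top_of_notMem hJ (fun y hy => I.mul_mem_right a hy) (x := x) hxa hx
  simpa [J] using (Ideal.eq_top_iff_one J).mp hJ'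

/-- The derivation induced on the quotient by a differential ideal. -/
abbrev quotientDifferential {A : Type*} [CommRing A] [Differential A] (I : Ideal A)
    (hI : IsDiffStable I) : Differential (A ⧸ I) :=
  ⟨Derivation.mk' (QuotientAddGroup.map I.toAddSubgroup I.toAddSubgroup
      (Differential.deriv : Derivation ℤ A A).toLinearMap.toAddMonoidHom hI).toIntLinearMap (by
    rintro ⟨a⟩ ⟨b⟩
    exact congrArg (Ideal.Quotient.mk I) (Derivation.leibniz _ a b))⟩

theorem IsDiffHom.mem_range_of_isMaximalDiffIdeal_ker {A T : Type*} [CommRing A] [Differential A]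
    [Field T] [Differential T] {φ : A →+* T} (hφ : IsDiffHom φ)
    (hker : IsMaximalDiffIdeal (RingHom.ker φ)) {z : T} (hz : z ∈ constants T) {x y : A}
    (hy : φ y ≠ 0) (hxy : φ x = φ y * z) : z ∈ Set.range φ := by
  -- the denominators of a constant form a differential ideal
  let J : Ideal A :=
    { carrier := {y | ∃ x, φ x = φ y * z}
      zero_mem' := ⟨0, by simp⟩
      add_mem' := by
        rintro y y₁ ⟨x, hx⟩ ⟨x₁, hx₁⟩
        exact ⟨x + x₁, by rw [map_add, map_add, hx, hx₁, add_mul]⟩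
      smul_mem' := by
        rintro c y ⟨x, hx⟩
        exact ⟨c * x, by rw [smul_eq_mul, map_mul, map_mul, hx, mul_assoc]⟩ }
  have hle : RingHom.ker φ ≤ J := fun y (hy : φ y = 0) => ⟨0, by rw [hy, map_zero, zero_mul]⟩
  have hJ : IsDiffStable J := by
    rintro y ⟨x, hx⟩
    refine ⟨x′, ?_⟩
    rw [hφ, hφ, hx, Derivation.leibniz, show z′ = 0 from hz, smul_zero, zero_add, smul_eq_mul,
      mul_comm]
  obtain ⟨w, hw⟩ := (Ideal.eq_top_iff_one J).mp (hker.eq_top_of_notMem hJ hle ⟨x, hxy⟩ hy)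
  exact ⟨w, by rw [hw, map_one, one_mul]⟩

theorem exists_isDiffHom_constants_subset_range (A : Type u) [CommRing A] [Nontrivial A]
    [Algebra ℚ A] [Differential A] :
    ∃ (T : Type u) (_ : Field T) (_ : Differential T) (φ : A →+* T), IsDiffHom φ ∧
      (constants T : Set T) ⊆ Set.range φ := by
  obtain ⟨I, hI⟩ := exists_isMaximalDiffIdeal A
  have := hI.isPrime
  let _ := quotientDifferential I hI.1.2
  obtain ⟨T, _, _, _⟩ : ∃ (T : Type u) (_ : Field T) (_ : Algebra (A ⧸ I) T),
    IsFractionRing (A ⧸ I) T := ⟨FractionRing (A ⧸ I), inferInstance, inferInstance, inferInstance⟩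
  have : Algebra.FormallyEtale (A ⧸ I) T := .of_isLocalization (nonZeroDivisors _)
  obtain ⟨_, _⟩ := exists_differential_of_formallyEtale (A ⧸ I) T
  let φ : A →+* T := (algebraMap (A ⧸ I) T).comp (Ideal.Quotient.mk I)
  have hmk : IsDiffHom (Ideal.Quotient.mk I) := fun _ => rfl
  have hφ : IsDiffHom φ := (isDiffHom_algebraMap (A ⧸ I) T).comp hmk
  have hker : RingHom.ker φ = I := by
    ext x
    exact (FaithfulSMul.algebraMap_eq_zero_iff (A ⧸ I) T).trans Ideal.Quotient.eq_zero_iff_mem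
  refine ⟨T, inferInstance, inferInstance, φ, hφ, fun z hz => ?_⟩
  obtain ⟨⟨x⟩, ⟨y⟩, hy, rfl⟩ := IsFractionRing.div_surjective (A ⧸ I) z
  have hy' : φ y ≠ 0 := fun h => nonZeroDivisors.ne_zero hy
    (Ideal.Quotient.eq_zero_iff_mem.mpr (hker ▸ RingHom.mem_ker.mpr h))
  exact hφ.mem_range_of_isMaximalDiffIdeal_ker (hker.symm ▸ hI) hz (x := x) hy'
    (mul_div_cancel₀ _ hy').symm

open Polynomial in
theorem finite_setOf_isUnit_sub_algebraMap {N B : Type*} [Field N] [CommRing B] [IsDomain B]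
    [Algebra N B] [Algebra.FiniteType N B] {c : B} (hc : Transcendental N c) :
    {a : N | IsUnit (c - algebraMap N B a)}.Finite := by
  let _ : Algebra N[X] B := (aeval c).toAlgebra
  have hX (p : N[X]) : algebraMap N[X] B p = aeval c p := rfl
  have : IsScalarTower N N[X] B := .of_algebraMap_eq fun a => by simp [hX]
  have : Algebra.FiniteType N[X] B := .of_restrictScalars_finiteType N N[X] B
  have : Algebra.FinitePresentation N[X] B := Algebra.FinitePresentation.of_finiteType.mp this
  have hinj : Function.Injective (algebraMap N[X] B) := transcendental_iff_injective.mp hc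
  have : FaithfulSMul N[X] B := (faithfulSMul_iff_algebraMap_injective _ _).mpr hinj
  -- `B` is torsion-free, hence flat, over `N[X]`, so `Spec B → Spec N[X]` is open
  have hopen : IsOpen (Set.range (PrimeSpectrum.comap (algebraMap N[X] B))) :=
    PrimeSpectrum.isOpenMap_comap_of_hasGoingDown_of_finitePresentation.isOpen_range
  obtain ⟨I, hI⟩ := (PrimeSpectrum.isClosed_iff_zeroLocus_ideal _).mp hopen.isClosed_compl
  have hbot : (⊥ : PrimeSpectrum N[X]) ∈ Set.range (PrimeSpectrum.comap (algebraMap N[X] B)) :=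
    ⟨⊥, PrimeSpectrum.ext (Ideal.comap_bot_of_injective _ hinj)⟩
  obtain ⟨g, hgI, hg⟩ : ∃ g ∈ I, g ≠ 0 := by
    by_contra! h
    have : (⊥ : PrimeSpectrum N[X]) ∈ PrimeSpectrum.zeroLocus (I : Set N[X]) := fun g hg => h g hg
    exact (hI ▸ this) hbot
  refine g.rootSet_finite N |>.subset fun a ha => ?_
  let P : PrimeSpectrum N[X] :=
    ⟨Ideal.span {X - C a}, (Ideal.span_singleton_prime (X_sub_C_ne_zero a)).mpr (prime_X_sub_C a)⟩
  have hP : P ∈ PrimeSpectrum.zeroLocus (I : Set N[X]) := by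
    rw [← hI]
    rintro ⟨q, hq⟩
    have hmem : X - C a ∈ (PrimeSpectrum.comap (algebraMap N[X] B) q).asIdeal :=
      hq ▸ Ideal.mem_span_singleton_self _
    refine q.isPrime.ne_top (Ideal.eq_top_of_isUnit_mem _ hmem ?_)
    simpa [hX] using! ha
  rw [mem_rootSet, coe_aeval_eq_eval, ← IsRoot.def, ← dvd_iff_isRoot]
  exact ⟨hg, Ideal.mem_span_singleton.mp (hP hgI)⟩

theorem mem_range_algebraMap_of_isAlgebraic {Q T : Type*} [Field Q] [IsAlgClosed Q] [Field T]
    [Algebra Q T] {z : T} (hz : IsAlgebraic Q z) : z ∈ Set.range (algebraMap Q T) := by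
  have h : z ∈ algebraicClosure Q T := hz.isIntegral
  rwa [IntermediateField.eq_bot_of_isAlgClosed_of_isAlgebraic (algebraicClosure Q T)] at h

theorem exists_diffExt_of_finiteType (F Q A : Type u) [Field F] [Field Q] [CharZero Q]
    [IsAlgClosed Q] [Differential Q] [Algebra F Q] [CommRing A] [Nontrivial A] [Algebra Q A]
    [Differential A] [DifferentialAlgebra Q A] [Algebra.FiniteType Q A] :
    ∃ (N : DiffExt F Q) (φ : A →ₐ[Q] N.carrier), IsDiffHom φ.toRingHom ∧
      ∀ z ∈ constants N.carrier, z ∈ Set.range (algebraMap Q N.carrier) := by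
  let _ : Algebra ℚ A := ((algebraMap Q A).comp (algebraMap ℚ Q)).toAlgebra
  obtain ⟨T, _, _, φ, hφ, hconst⟩ := exists_isDiffHom_constants_subset_range A
  let _ : Algebra Q T := (φ.comp (algebraMap Q A)).toAlgebra
  let _ : Algebra F T := ((algebraMap Q T).comp (algebraMap F Q)).toAlgebra
  have : IsScalarTower F Q T := .of_algebraMap_eq fun _ => rfl
  have : DifferentialAlgebra Q T := ⟨fun q => ((hφ.comp (isDiffHom_algebraMap Q A)) q).symm⟩
  let φ' : A →ₐ[Q] T := { φ with commutes' := fun _ => rfl }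
  refine ⟨⟨T⟩, φ', hφ, fun z hz => ?_⟩
  obtain ⟨c, hc⟩ : z ∈ φ'.range := hconst hz
  have : Algebra.FiniteType Q φ'.range :=
    .of_surjective φ'.rangeRestrict φ'.rangeRestrict_surjective
  by_contra hzQ
  have htr : Transcendental Q (⟨z, c, hc⟩ : φ'.range) := fun h =>
    hzQ (mem_range_algebraMap_of_isAlgebraic (h.algHom φ'.range.val))
  have hinf : (constants Q : Set Q).Infinite :=
    Set.infinite_coe_iff.mp (inferInstanceAs (Infinite (constants Q)))
  refine hinf ((finite_setOf_isUnit_sub_algebraMap htr).subset fun a ha => ?_)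
  have hza : z - algebraMap Q T a ∈ constants T :=
    sub_mem hz ((isDiffHom_algebraMap Q T).map_mem_constants ha)
  obtain ⟨y, hy⟩ : (z - algebraMap Q T a)⁻¹ ∈ φ'.range := hconst (inv_mem hza)
  refine .of_mul_eq_one ⟨_, y, hy⟩ (Subtype.ext (mul_inv_cancel₀ fun h => hzQ ?_))
  exact ⟨a, (sub_eq_zero.mp h).symm⟩

theorem exists_finiteType_forall_isDiffHom {Q κ : Type u} (R : Type u) [Field Q] [Differential Q]
    [Field κ] [Differential κ] [CommRing R] [Nontrivial R] [Algebra κ R] [Differential R]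
    [DifferentialAlgebra κ R] [Algebra.FiniteType κ R] {s : Set (κ →+* Q)} (hs : s.Finite)
    (hsd : ∀ τ ∈ s, IsDiffHom τ) :
    ∃ (A : Type u) (_ : CommRing A) (_ : Nontrivial A) (_ : Algebra Q A) (_ : Differential A)
      (_ : DifferentialAlgebra Q A) (_ : Algebra.FiniteType Q A), ∀ τ ∈ s, ∃ φ : R →+* A,
        IsDiffHom φ ∧ φ.comp (algebraMap κ R) = (algebraMap Q A).comp τ := by
  induction s, hs using Set.Finite.induction_on with
  | empty => exact ⟨Q, inferInstance, inferInstance, inferInstance, inferInstance, inferInstance,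
      inferInstance, fun τ hτ => hτ.elim⟩
  | @insert σ s _ _ ih =>
    obtain ⟨A, _, _, _, _, _, _, hA⟩ := ih fun τ hτ => hsd τ (.inr hτ)
    let _ : Algebra κ A := ((algebraMap Q A).comp σ).toAlgebra
    have : DifferentialAlgebra κ A :=
      ⟨fun x => (((isDiffHom_algebraMap Q A).comp (hsd σ (.inl rfl))) x).symm⟩
    have hleft := differentialAlgebra_tensorProduct_left κ A R
    have : DifferentialAlgebra Q (A ⊗[κ] R) := differentialAlgebra_trans Q A _
    refine ⟨A ⊗[κ] R, inferInstance, inferInstance, inferInstance, inferInstance, this,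
      .trans (S := A) inferInstance inferInstance, ?_⟩
    rintro τ (rfl | hτ)
    · exact ⟨_, isDiffHom_includeRight κ A R, RingHom.ext fun x =>
        (Algebra.TensorProduct.includeRight (A := A)).commutes x⟩
    · obtain ⟨φ, hφ, hφτ⟩ := hA τ hτ
      exact ⟨(algebraMap A (A ⊗[κ] R)).comp φ, (isDiffHom_algebraMap A _).comp hφ,
        by rw [RingHom.comp_assoc, hφτ]; rfl⟩

theorem exists_diffExt_forall_isDiffHom (F : Type u) {Q κ : Type u} (R : Type u) [Field F]
    [Field Q] [CharZero Q] [IsAlgClosed Q] [Differential Q] [Algebra F Q] [Field κ] [Differential κ]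
    [CommRing R] [Nontrivial R] [Algebra κ R] [Differential R] [DifferentialAlgebra κ R]
    [Algebra.FiniteType κ R] {s : Set (κ →+* Q)} (hs : s.Finite) (hsd : ∀ τ ∈ s, IsDiffHom τ) :
    ∃ N : DiffExt F Q, (∀ z ∈ constants N.carrier, z ∈ Set.range (algebraMap Q N.carrier)) ∧
      ∀ τ ∈ s, ∃ φ : R →+* N.carrier,
        IsDiffHom φ ∧ φ.comp (algebraMap κ R) = (algebraMap Q N.carrier).comp τ := by
  obtain ⟨A, _, _, _, _, _, _, hA⟩ := exists_finiteType_forall_isDiffHom R hs hsd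
  obtain ⟨N, ψ, hψ, hN⟩ := exists_diffExt_of_finiteType F Q A
  refine ⟨N, hN, fun τ hτ => ?_⟩
  obtain ⟨φ, hφ, hφτ⟩ := hA τ hτ
  exact ⟨ψ.toRingHom.comp φ, hψ.comp hφ, RingHom.ext fun x =>
    (congrArg ψ (DFunLike.congr_fun hφτ x)).trans (ψ.commutes _)⟩

section Specialization

theorem exists_rTensor_ne_zero {C F N B : Type*} [Field C] [Field F] [Field N] [CommRing B]
    [Algebra C F] [Algebra F N] [Algebra C N] [IsScalarTower C F N] [Algebra C B]
    {G : N ⊗[C] B} (hG : G ≠ 0) :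
    ∃ π : N →ₗ[F] F, (π.restrictScalars C).rTensor B G ≠ 0 := by
  let b := Module.Free.chooseBasis C B
  let e := TensorProduct.equivFinsuppOfBasisRight (M := N) b
  let e' := TensorProduct.equivFinsuppOfBasisRight (M := F) b
  obtain ⟨i, hi⟩ : ∃ i, e G i ≠ 0 := by
    contrapose! hG
    exact e.map_eq_zero_iff.mp (Finsupp.ext hG)
  obtain ⟨π, hπ⟩ : ∃ π : Module.Dual F N, π (e G i) ≠ 0 := by
    contrapose! hi
    exact (Module.forall_dual_apply_eq_zero_iff F _).mp hi
  have key (t : N ⊗[C] B) : e' ((π.restrictScalars C).rTensor B t) i = π (e t i) := by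
    induction t with
    | zero => simp
    | add x y hx hy => simp only [map_add, Finsupp.add_apply, hx, hy]
    | tmul n a =>
      simpa only [e, e', LinearMap.rTensor_tmul,
        TensorProduct.equivFinsuppOfBasisRight_apply_tmul_apply]
        using! ((π.restrictScalars C).map_smul (b.repr a i) n).symm
  exact ⟨π, fun h => hπ (by rw [← key, h, map_zero, Finsupp.zero_apply])⟩

theorem exists_mul_map_eq_map_mul {C F N B : Type*} [Field C] [IsAlgClosed C] [Field F] [Field N]
    [CommRing B] [IsDomain B] [Algebra C F] [Algebra F N] [Algebra C N] [IsScalarTower C F N]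
    [Algebra C B] [Algebra.FiniteType C B] {P G : N ⊗[C] B} (hG : G ≠ 0)
    (h : ∀ ν : B →ₐ[C] C, evalRight N ν G ≠ 0 →
      ∃ c : F, evalRight N ν P = c • evalRight N ν G) :
    letI j := Algebra.TensorProduct.map (IsScalarTower.toAlgHom C F N) (AlgHom.id C B)
    ∃ P' G' : F ⊗[C] B, j G' ≠ 0 ∧ P * j G' = j P' * G := by
  obtain ⟨π, hπ⟩ := exists_rTensor_ne_zero (F := F) hG
  let j := Algebra.TensorProduct.map (IsScalarTower.toAlgHom C F N) (AlgHom.id C B)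
  let p := (π.restrictScalars C).rTensor B
  have hp (ν : B →ₐ[C] C) (t : N ⊗[C] B) :
      evalRight N ν (j (p t)) = algebraMap F N (π (evalRight N ν t)) := by
    induction t with
    | zero => simp
    | add x y hx hy => simp only [map_add, hx, hy]
    | tmul n b =>
      have : π (ν b • n) = ν b • π n := (π.restrictScalars C).map_smul _ _
      rw [evalRight_tmul, this, Algebra.smul_def, map_mul, ← IsScalarTower.algebraMap_apply]
      simp [j, p, evalRight_tmul, Algebra.smul_def]
  have hj : Function.Injective j := Module.Flat.rTensor_preserves_injective_linearMap
    (IsScalarTower.toAlgHom C F N).toLinearMap (algebraMap F N).injective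
  refine ⟨p P, p G, (map_ne_zero_iff j hj).mpr hπ, sub_eq_zero.mp ?_⟩
  by_contra hne
  have : IsDomain (N ⊗[C] B) := isDomain_tensorProduct C B N
  obtain ⟨ν, hν, hνG⟩ := exists_evalRight_ne_zero hne hG
  obtain ⟨c, hc⟩ := h ν hνG
  refine hν ?_
  rw [map_sub, map_mul, map_mul, hp, hp, hc, map_smul, Algebra.smul_def, smul_eq_mul, map_mul]
  ring

theorem exists_isDiffHom_comp_eq {k A L Ω : Type*} [CommRing k] [CommRing A] [CommRing L]
    [CommRing Ω] [Algebra k A] [Algebra k L] [Algebra k Ω] [Differential A] [Differential L]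
    [Differential Ω] {i : L →ₐ[k] Ω} (hi : IsDiffHom i.toRingHom) (hinj : Function.Injective i)
    {θ : A →ₐ[k] Ω} (hθ : IsDiffHom θ.toRingHom) {s : Set A} (hs : Algebra.adjoin k s = ⊤)
    (h : ∀ a ∈ s, θ a ∈ i.range) :
    ∃ l : A →ₐ[k] L, IsDiffHom l.toRingHom ∧ ∀ a, i (l a) = θ a := by
  have hrange : ⊤ ≤ i.range.comap θ := hs ▸ Algebra.adjoin_le h
  let l : A →ₐ[k] L := (AlgEquiv.ofInjective i hinj).symm.toAlgHom.comp
    (θ.codRestrict i.range fun _ => hrange Algebra.mem_top)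
  have hl (a : A) : i (l a) = θ a :=
    congrArg Subtype.val ((AlgEquiv.ofInjective i hinj).apply_symm_apply ⟨θ a, _⟩)
  exact ⟨l, fun a => hinj <|
    (hl _).trans <| (hθ a).trans <| (congrArg (·′) (hl a)).symm.trans (hi (l a)).symm, hl⟩

theorem exists_isDiffHom_specialization {k A T N Ω : Type u} [CommRing k] [CommRing A] [CommRing T]
    [Field N] [Field Ω] [Algebra k A] [Algebra k T] [Algebra k N] [Algebra k Ω] [Differential A]
    [Differential T] [Differential N] [Differential Ω] {i : T →ₐ[k] Ω}
    (hi : IsDiffHom i.toRingHom) (hinj : Function.Injective i) {e : T →ₐ[k] N}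
    (he : IsDiffHom e.toRingHom) {g : T} (hg : e g ≠ 0) {θ : A →ₐ[k] Ω}
    (hθ : IsDiffHom θ.toRingHom) {s : Set A} (hs : Algebra.adjoin k s = ⊤)
    (h : ∀ a ∈ s, ∃ t, i g * θ a = i t) :
    ∃ f : A →ₐ[k] N, IsDiffHom f.toRingHom ∧ ∀ a t, i g * θ a = i t → e g * f a = e t := by
  let L := Localization.Away g
  obtain ⟨_, _⟩ : ∃ _ : Differential L, DifferentialAlgebra T L :=
    exists_differential_of_formallyEtale T L
  have hig : IsUnit (i g) := .mk0 _ fun h₀ => hg (by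
    rw [(map_eq_zero_iff i hinj).mp h₀, map_zero])
  let i' : L →ₐ[k] Ω := IsLocalization.liftAlgHom (M := Submonoid.powers g) (f := i) (by
    rintro ⟨_, n, rfl⟩; simpa using hig.pow n)
  let e' : L →ₐ[k] N := IsLocalization.liftAlgHom (M := Submonoid.powers g) (f := e) (by
    rintro ⟨_, n, rfl⟩; simpa using (IsUnit.mk0 _ hg).pow n)
  have hii' (t : T) : i' (algebraMap T L t) = i t := IsLocalization.lift_eq _ t
  have hee' (t : T) : e' (algebraMap T L t) = e t := IsLocalization.lift_eq _ t
  have hi' : IsDiffHom i'.toRingHom := .of_isLocalization (Submonoid.powers g) <| by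
    rwa [show i'.toRingHom.comp (algebraMap T L) = i.toRingHom from RingHom.ext hii']
  have he' : IsDiffHom e'.toRingHom := .of_isLocalization (Submonoid.powers g) <| by
    rwa [show e'.toRingHom.comp (algebraMap T L) = e.toRingHom from RingHom.ext hee']
  have hinj' : Function.Injective i' := IsLocalization.lift_injective_iff _ |>.mpr fun x y =>
    ⟨fun h => (hii' x).symm.trans ((congrArg i' h).trans (hii' y)), fun h => congrArg _ (hinj h)⟩
  obtain ⟨l, hl, hlθ⟩ := exists_isDiffHom_comp_eq hi' hinj' hθ hs fun a ha => by
    obtain ⟨t, ht⟩ := h a ha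
    refine ⟨IsLocalization.mk' L t ⟨g, Submonoid.mem_powers g⟩, hig.mul_left_cancel ?_⟩
    calc i g * i' (IsLocalization.mk' L t ⟨g, Submonoid.mem_powers g⟩)
        = i' (algebraMap T L t) := by
          rw [← hii', ← map_mul]; exact congrArg i' (IsLocalization.mk'_spec' L t ⟨g, _⟩)
      _ = i g * θ a := by rw [hii', ht]
  refine ⟨e'.comp l, he'.comp hl, fun a t hat => ?_⟩
  have : algebraMap T L g * l a = algebraMap T L t := hinj' (by rw [map_mul, hii', hlθ, hat, hii'])
  rw [← hee', AlgHom.comp_apply, ← map_mul, this, hee']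

end Specialization

section Interpolation

variable {N Ω : Type u} [Field N] [Field Ω] [Differential N] [Differential Ω] [Algebra N Ω]
  [DifferentialAlgebra N Ω]

/-- The multiplication map `n ⊗ b ↦ n b`. -/
noncomputable def mulMap (B : Subalgebra (constants N) Ω) : N ⊗[constants N] B →ₐ[N] Ω :=
  Algebra.TensorProduct.lift (Algebra.ofId N Ω) B.val fun _ _ => .all _ _

omit [Differential Ω] [DifferentialAlgebra N Ω] in
theorem mulMap_tmul {B : Subalgebra (constants N) Ω} (n : N) (b : B) :
    mulMap B (n ⊗ₜ b) = n • (b : Ω) := by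
  simp [mulMap, Algebra.ofId_apply, Algebra.smul_def]

theorem mulMap_injective {B : Subalgebra (constants N) Ω} (hB : ∀ b ∈ B, b′ = 0) :
    Function.Injective (mulMap B) := by
  refine (injective_iff_map_eq_zero _).mpr fun x hx => ?_
  let b := Module.Free.chooseBasis (constants N) B
  have hb : LinearIndependent N fun i => (b i : Ω) := by
    refine linearIndependent_iff_finset_linearIndependent.mpr fun s => ?_
    refine linearIndependent_of_forall_mem_constants (fun i => hB _ (b i).2) ?_
    exact (b.linearIndependent.map' B.val.toLinearMap
      (LinearMap.ker_eq_bot.mpr Subtype.val_injective)).comp _ Subtype.val_injective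
  obtain ⟨n, rfl⟩ := TensorProduct.eq_repr_basis_right b x
  have hn : n = 0 := linearIndependent_iff.mp hb n (by
    simpa only [Finsupp.linearCombination_apply, Finsupp.sum, map_sum, mulMap_tmul] using hx)
  rw [hn, Finsupp.sum_zero_index]

theorem exists_differential_isDiffHom_mulMap {B : Subalgebra (constants N) Ω}
    (hB : ∀ b ∈ B, b′ = 0) :
    ∃ _ : Differential (N ⊗[constants N] B), IsDiffHom (mulMap B).toRingHom ∧
      ∀ ν : B →ₐ[constants N] constants N, IsDiffHom (evalRight N ν).toRingHom := by
  let _ : Differential (constants N) := ⟨0⟩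
  let _ : Differential B := ⟨0⟩
  have : DifferentialAlgebra (constants N) N := ⟨fun c => c.2.trans (map_zero _).symm⟩
  have : DifferentialAlgebra (constants N) B := ⟨fun c => (map_zero _).symm⟩
  refine ⟨tensorDifferential (constants N) N B, isDiffHom_of_tensorProduct _ _ _ (fun n => ?_)
    fun b => ?_, fun ν => isDiffHom_of_tensorProduct _ _ _ (fun n => ?_) fun b => ?_⟩
  · simpa [mulMap] using! (deriv_algebraMap n).symm
  · simpa [mulMap] using! (hB b b.2).symm
  · simp [evalRight]
  · have hb (b : B) : evalRight N ν (1 ⊗ₜ b) ∈ constants N := by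
      rw [evalRight_tmul, Algebra.smul_def, mul_one]
      exact (ν b).2
    refine Eq.trans ?_ (hb b).symm
    exact (congrArg _ (TensorProduct.tmul_zero B (1 : N))).trans (map_zero (evalRight N ν))

theorem exists_mulMap_mul_eq_mulMap {u : Finset Ω}
    (hu : ∀ x ∈ u, x ∈ (algebraMap N Ω).fieldRange ⊔ constants Ω) :
    ∃ B : Subalgebra (constants N) Ω, B.FG ∧ (∀ b ∈ B, b′ = 0) ∧
      ∃ G, G ≠ 0 ∧ ∀ x ∈ u, ∃ P, mulMap B G * x = mulMap B P := by
  classical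
  have hu' (x : u) : (x : Ω) ∈ IntermediateField.adjoin N (constants Ω : Set Ω) := by
    refine (sup_le ?_ ?_ : (algebraMap N Ω).fieldRange ⊔ constants Ω ≤
      (IntermediateField.adjoin N (constants Ω : Set Ω)).toSubfield) (hu x x.2)
    · rintro _ ⟨n, rfl⟩
      exact algebraMap_mem (IntermediateField.adjoin N (constants Ω : Set Ω)) n
    · exact IntermediateField.subset_adjoin N _
  choose s hs hus using fun x => IntermediateField.exists_finset_of_mem_adjoin (hu' x)
  let c := Finset.univ.biUnion s
  obtain ⟨q, hq, hq₀, hqu⟩ := exists_common_denominator (κ := N) (S := (c : Set Ω)) (u := u)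
    fun x hx => IntermediateField.adjoin.mono N _ _
      (by exact_mod_cast Finset.subset_biUnion_of_mem s (Finset.mem_univ _)) (hus ⟨x, hx⟩)
  let B := Algebra.adjoin (constants N) (c : Set Ω)
  have hB : Algebra.adjoin N (c : Set Ω) ≤ (mulMap B).range := Algebra.adjoin_le fun b hb =>
    ⟨1 ⊗ₜ ⟨b, Algebra.subset_adjoin hb⟩, (mulMap_tmul _ _).trans (one_smul N b)⟩
  obtain ⟨G, rfl⟩ := hB hq
  refine ⟨B, ⟨c, rfl⟩, fun b hb => ?_, G, fun h => hq₀ (by rw [h]; exact map_zero _),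
    fun x hx => ?_⟩
  · have hc : (c : Set Ω) ⊆ constants Ω := by
      simpa [c] using fun x hx => hs ⟨x, hx⟩
    induction hb using Algebra.adjoin_induction with
    | mem x hx => exact hc hx
    | algebraMap a =>
      exact (isDiffHom_algebraMap N Ω).map_mem_constants a.2
    | add x y _ _ hx hy => exact add_mem (S := Subfield Ω) (s := constants Ω) hx hy
    | mul x y _ _ hx hy => exact mul_mem (S := Subfield Ω) (s := constants Ω) hx hy
  · obtain ⟨P, hP⟩ := hB (hqu x hx)
    exact ⟨P, hP.symm⟩

omit [DifferentialAlgebra N Ω] in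
theorem mulMap_map_mem {B : Subalgebra (constants N) Ω} (hB : ∀ b ∈ B, b′ = 0) {F : Type*} [Field F]
    [Algebra (constants N) F] [Algebra F N] [IsScalarTower (constants N) F N]
    (P : F ⊗[constants N] B) :
    mulMap B (Algebra.TensorProduct.map (IsScalarTower.toAlgHom (constants N) F N) (.id _ B) P) ∈
      (algebraMap F N).fieldRange.map (algebraMap N Ω) ⊔ constants Ω := by
  induction P with
  | zero => simp only [map_zero, zero_mem]
  | add x y hx hy => simp only [map_add, add_mem hx hy]
  | tmul x b =>
    simp only [Algebra.TensorProduct.map_tmul, mulMap_tmul, Algebra.smul_def]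
    exact mul_mem (le_sup_left (b := constants Ω) ⟨_, ⟨x, rfl⟩, rfl⟩)
      (le_sup_right (b := constants Ω) (hB b b.2))

theorem mem_map_sup_constants_of_forall_algHom [IsAlgClosed (constants N)] {k A : Type u} [Field k]
    [CommRing A] [Differential A] [Algebra k A] [Algebra.FiniteType k A] [Algebra k N] [Algebra k Ω]
    [IsScalarTower k N Ω] {F : IntermediateField k N} (hF : ∀ c ∈ constants N, c ∈ F)
    (hA : ∀ f : A →ₐ[k] N, IsDiffHom f.toRingHom → ∀ a, f a ∈ F) {θ : A →ₐ[k] Ω}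
    (hθ : IsDiffHom θ.toRingHom)
    (hθN : ∀ a, θ a ∈ (algebraMap N Ω).fieldRange ⊔ constants Ω) (a : A) :
    θ a ∈ F.toSubfield.map (algebraMap N Ω) ⊔ constants Ω := by
  classical
  obtain ⟨u, hu⟩ := Algebra.FiniteType.out (R := k) (A := A)
  have hu' : Algebra.adjoin k (insert a u : Set A) = ⊤ :=
    top_le_iff.mp (hu ▸ Algebra.adjoin_mono (Set.subset_insert a _))
  obtain ⟨B, hBfg, hB, G, hG, hGu⟩ := exists_mulMap_mul_eq_mulMap (u := (insert a u).image θ)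
    (Finset.forall_mem_image.mpr fun a _ => hθN a)
  replace hGu (b : A) (hb : b ∈ (insert a u : Set A)) : ∃ P, mulMap B G * θ b = mulMap B P :=
    hGu _ (Finset.mem_image_of_mem θ (by exact_mod_cast hb))
  obtain ⟨P, hP⟩ := hGu a (Set.mem_insert a _)
  have : Algebra.FiniteType (constants N) B := B.fg_iff_finiteType.mp hBfg
  obtain ⟨_, hi, hν⟩ := exists_differential_isDiffHom_mulMap hB
  have hinj := mulMap_injective hB
  let _ : Algebra (constants N) F := (Subfield.inclusion (T := F.toSubfield) hF).toAlgebra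
  have : IsScalarTower (constants N) F N := .of_algebraMap_eq fun _ => rfl
  obtain ⟨P', G', hG', h⟩ := exists_mul_map_eq_map_mul (F := F) (P := P) hG fun ν hνG => by
    obtain ⟨f, hf, hfθ⟩ := exists_isDiffHom_specialization (i := (mulMap B).restrictScalars k)
      hi hinj (e := (evalRight N ν).restrictScalars k) (hν ν) hνG hθ hu' hGu
    exact ⟨⟨f a, hA f hf a⟩, (hfθ a P hP).symm.trans (mul_comm _ _)⟩
  replace h := congrArg (mulMap B) h
  rw [map_mul, map_mul, ← hP, mul_comm _ (mulMap B G), mul_assoc] at h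
  rw [eq_div_of_mul_eq ((map_ne_zero_iff _ hinj).mpr hG')
    (mul_left_cancel₀ ((map_ne_zero_iff _ hinj).mpr hG) h)]
  have hFN : (algebraMap F N).fieldRange = F.toSubfield := F.toSubfield.fieldRange_subtype
  exact hFN ▸ div_mem (mulMap_map_mem hB P') (mulMap_map_mem hB G')

end Interpolation

section StronglyNormal

variable {k E A N : Type u} [Field k] [Field E] [Field N] [CommRing A] [Algebra k E] [Algebra k A]
  [Algebra k N] [Differential E] [Differential A] [Differential N]

variable (k E) in
/-- A strongly normal extension `E` of `k`. A differential field extension of `E` is encoded as a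
differential embedding `ι` of `E`, so that `ι.fieldRange ⊔ constants T` is the compositum. -/
structure IsStronglyNormal : Prop where
  fg : (⊤ : IntermediateField k E).FG
  constants_subset : (constants E : Set E) ⊆ Set.range (algebraMap k E)
  apply_mem : ∀ (T : Type u) [Field T] [Differential T] (ι σ : E →+* T), IsDiffHom ι →
    IsDiffHom σ → (∀ a : k, σ (algebraMap k E a) = ι (algebraMap k E a)) →
      ∀ x, σ x ∈ ι.fieldRange ⊔ constants T

variable (k A N) in
/-- The subfield of `N` generated over `k` by the images of all differential `k`-algebra
homomorphisms `A → N`. -/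
def diffHomField : IntermediateField k N :=
  IntermediateField.adjoin k {y | ∃ φ : A →ₐ[k] N, IsDiffHom φ.toRingHom ∧ ∃ x, φ x = y}

theorem apply_mem_diffHomField {φ : A →ₐ[k] N} (hφ : IsDiffHom φ.toRingHom) (x : A) :
    φ x ∈ diffHomField k A N :=
  IntermediateField.subset_adjoin k _ ⟨φ, hφ, x, rfl⟩

variable (k A N) in
theorem isDiffStable_diffHomField [Differential k] [DifferentialAlgebra k N] :
    IsDiffStable (diffHomField k A N) :=
  isDiffStable_adjoin fun _ ⟨_, hφ, x, hx⟩ => hx ▸ hφ x ▸ apply_mem_diffHomField hφ x′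

/-- An intermediate field `N₀` of `N / k` absorbs `A` if every differential `k`-algebra homomorphism
from `A` to a differential field extension `Ω` of `N` takes its values in the field generated by
`N₀` and the constants of `Ω`. -/
def Absorbs (A : Type u) [CommRing A] [Algebra k A] [Differential A] (N₀ : IntermediateField k N) :
    Prop :=
  ∀ (Ω : Type u) [Field Ω] [Differential Ω] [Algebra k Ω] [Algebra N Ω] [IsScalarTower k N Ω]
    [DifferentialAlgebra N Ω] (θ : A →ₐ[k] Ω), IsDiffHom θ.toRingHom →
      ∀ x, θ x ∈ N₀.toSubfield.map (algebraMap N Ω) ⊔ constants Ω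

theorem Absorbs.diffHomField_le {N₀ : IntermediateField k N} (h : Absorbs A N₀)
    (hN : (constants N : Set N) ⊆ Set.range (algebraMap k N)) : diffHomField k A N ≤ N₀ := by
  refine IntermediateField.adjoin_le_iff.mpr ?_
  rintro _ ⟨φ, hφ, x, rfl⟩
  refine (sup_le ?_ fun c hc => ?_ : _ ⊔ _ ≤ N₀.toSubfield) (h N φ hφ x)
  · rintro _ ⟨y, hy, rfl⟩
    exact hy
  · obtain ⟨a, rfl⟩ := hN hc
    exact N₀.algebraMap_mem a

theorem IsDiffHom.mem_sup_constants_of_map_mem {T Ω : Type*} [Field T] [Field Ω] [Differential T]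
    [Differential Ω] {m : T →+* Ω} (hm : IsDiffHom m) {F : Subfield T} {x : T}
    (hx : m x ∈ F.map m ⊔ constants Ω) : x ∈ F ⊔ constants T := by
  obtain ⟨n, e, heF, he, hex⟩ := mem_sup_constants_iff.mp hx
  choose e' he' hee' using heF
  obtain rfl : m ∘ e' = e := funext hee'
  refine mem_sup_constants_iff.mpr ⟨n, e', he', ?_, ?_⟩
  · rwa [← hm.map_wronskian, map_ne_zero] at he
  · rw [← map_eq_zero m, hm.map_wronskian, ← hex]
    congr 1
    refine funext <| Fin.addCases (fun i => ?_) (fun i => ?_) <;>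
      simp only [Function.comp_apply, Fin.append_left, Fin.append_right, Pi.smul_apply, smul_eq_mul,
        map_mul]

theorem exists_amalgam_of_isDiffHom {F N T : Type u} [Field F] [CharZero F] [Field N] [Field T]
    [Differential F] [Differential N] [Differential T] {n : F →+* N} {t : F →+* T}
    (hn : IsDiffHom n) (ht : IsDiffHom t) :
    ∃ (Ω : Type u) (_ : Field Ω) (_ : Differential Ω) (i : N →+* Ω) (m : T →+* Ω), IsDiffHom i ∧
      IsDiffHom m ∧ i.comp n = m.comp t := by
  algebraize [n, t]
  have : DifferentialAlgebra F N := ⟨fun x => (hn x).symm⟩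
  have : DifferentialAlgebra F T := ⟨fun x => (ht x).symm⟩
  let _ : Algebra ℚ (N ⊗[F] T) := ((algebraMap F _).comp (algebraMap ℚ F)).toAlgebra
  obtain ⟨Ω, _, _, φ, hφ, -⟩ := exists_isDiffHom_constants_subset_range (N ⊗[F] T)
  have := differentialAlgebra_tensorProduct_left F N T
  exact ⟨Ω, inferInstance, inferInstance, φ.comp (algebraMap N _), _,
    hφ.comp (isDiffHom_algebraMap N _), hφ.comp (isDiffHom_includeRight F N T),
    RingHom.ext fun x => congrArg φ (Algebra.TensorProduct.includeRight.commutes x).symm⟩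

theorem Absorbs.apply_mem_sup_constants [CharZero N] [Differential k] [DifferentialAlgebra k N]
    [Algebra.FiniteType k A] [IsAlgClosed (constants N)] {N₀ : IntermediateField k N}
    (h : Absorbs A N₀) (hN : (constants N : Set N) ⊆ Set.range (algebraMap k N))
    {T : Type u} [Field T] [Differential T] {ι σ : diffHomField k A N →+* T}
    (hι : letI := differentialOfStable _ (isDiffStable_diffHomField k A N); IsDiffHom ι)
    (hσ : letI := differentialOfStable _ (isDiffStable_diffHomField k A N); IsDiffHom σ)
    (hισ : ∀ a : k, σ (algebraMap k _ a) = ι (algebraMap k _ a)) {φ : A →ₐ[k] N}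
    (hφ : IsDiffHom φ.toRingHom) (a : A) :
    σ ⟨φ a, apply_mem_diffHomField hφ a⟩ ∈ ι.fieldRange ⊔ constants T := by
  let _ := differentialOfStable _ (isDiffStable_diffHomField k A N)
  let j : diffHomField k A N →+* N := (diffHomField k A N).val.toRingHom
  have hj : IsDiffHom j := fun _ => rfl
  obtain ⟨Ω, _, _, n, m, hn, hm, hnm⟩ := exists_amalgam_of_isDiffHom hj hι
  algebraize [n, n.comp (algebraMap k N)]
  have : DifferentialAlgebra N Ω := ⟨fun x => (hn x).symm⟩
  let φ' : A →+* diffHomField k A N := (φ.codRestrict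
    (diffHomField k A N).toSubalgebra (apply_mem_diffHomField hφ)).toRingHom
  have hφ' : IsDiffHom φ' := fun x => Subtype.ext (hφ x)
  let θ : A →ₐ[k] Ω := { (m.comp σ).comp φ' with
    commutes' := fun r => by
      have : φ' (algebraMap k A r) = algebraMap k _ r := Subtype.ext (φ.commutes r)
      change m (σ (φ' (algebraMap k A r))) = n (j (algebraMap k _ r))
      rw [this, hισ]
      exact (DFunLike.congr_fun hnm _).symm }
  have hθ : IsDiffHom θ.toRingHom := (hm.comp hσ).comp hφ'
  refine hm.mem_sup_constants_of_map_mem (?_ : θ a ∈ _)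
  have hmap : (diffHomField k A N).toSubfield.map n = ι.fieldRange.map m := by
    rw [RingHom.map_fieldRange, ← hnm, ← RingHom.map_fieldRange]
    exact congrArg (Subfield.map n) (Subfield.fieldRange_subtype _).symm
  rw [← hmap]
  refine mem_map_sup_constants_of_forall_algHom (fun c hc => ?_)
    (fun f hf => apply_mem_diffHomField hf) hθ (fun a => ?_) a
  · obtain ⟨b, rfl⟩ := hN hc
    exact IntermediateField.algebraMap_mem _ b
  · refine (sup_le_sup_right ?_ (constants Ω) : _ ≤ _ ⊔ _) (h Ω θ hθ a)
    rintro _ ⟨y, -, rfl⟩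
    exact ⟨y, rfl⟩

theorem Absorbs.isStronglyNormal_diffHomField [CharZero N] [Differential k]
    [DifferentialAlgebra k N] [Algebra.FiniteType k A] [IsAlgClosed (constants N)]
    {N₀ : IntermediateField k N} (h : Absorbs A N₀) (hN₀ : N₀.FG)
    (hN : (constants N : Set N) ⊆ Set.range (algebraMap k N)) :
    letI := differentialOfStable _ (isDiffStable_diffHomField k A N)
    IsStronglyNormal k (diffHomField k A N) := by
  let _ := differentialOfStable _ (isDiffStable_diffHomField k A N)
  refine ⟨?_, fun c hc => ?_, fun T _ _ ι σ hι hσ hισ x => ?_⟩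
  · have := IntermediateField.essFiniteType_iff.mpr (fg_of_le hN₀ (h.diffHomField_le hN))
    exact fg_of_essFiniteType _
  · obtain ⟨a, ha⟩ := hN (congrArg Subtype.val hc)
    exact ⟨a, Subtype.ext ha⟩
  · have hle : (diffHomField k A N).toSubfield ≤
        ((ι.fieldRange ⊔ constants T).comap σ).map (diffHomField k A N).val.toRingHom := by
      refine Subfield.closure_le.mpr (Set.union_subset ?_ ?_)
      · rintro _ ⟨a, rfl⟩
        exact ⟨algebraMap k _ a, le_sup_left (b := constants T) ⟨_, (hισ a).symm⟩, rfl⟩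
      · rintro _ ⟨φ, hφ, a, rfl⟩
        exact ⟨_, h.apply_mem_sup_constants hN hι hσ hισ hφ a, rfl⟩
    obtain ⟨y, hy, hyx⟩ := hle x.2
    exact Subtype.ext hyx ▸ hy

end StronglyNormal

section Existence

theorem exists_algHom_comp_eq {k κ Q Ω : Type*} [Field k] [Field κ] [Field Q] [Field Ω]
    [Algebra k κ] [Algebra.IsAlgebraic k κ] [Algebra k Q] [IsAlgClosed Q] [Algebra k Ω]
    [Algebra Q Ω] [IsScalarTower k Q Ω] (f : κ →ₐ[k] Ω) :
    ∃ τ : κ →ₐ[k] Q, (IsScalarTower.toAlgHom k Q Ω).comp τ = f := by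
  let e := AlgEquiv.ofInjective (IsScalarTower.toAlgHom k Q Ω) (algebraMap Q Ω).injective
  have hf (x : κ) : f x ∈ (IsScalarTower.toAlgHom k Q Ω).range :=
    mem_range_algebraMap_of_isAlgebraic
      (((Algebra.IsAlgebraic.isAlgebraic (R := k) x).algHom f).tower_top Q)
  refine ⟨e.symm.toAlgHom.comp (f.codRestrict _ hf), AlgHom.ext fun x => ?_⟩
  exact congrArg Subtype.val (e.apply_symm_apply (f.codRestrict _ hf x))

theorem fg_adjoin_range {k R N : Type*} [Field k] [CommRing R] [Field N] [Algebra k R]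
    [Algebra.FiniteType k R] [Algebra k N] (φ : R →ₐ[k] N) :
    (IntermediateField.adjoin k (Set.range φ)).FG := by
  classical
  obtain ⟨s, hs⟩ := Algebra.FiniteType.out (R := k) (A := R)
  refine IntermediateField.fg_def.mpr ⟨φ '' s, s.finite_toSet.image φ, le_antisymm
    (IntermediateField.adjoin.mono k _ _ (Set.image_subset_range _ _)) ?_⟩
  rw [IntermediateField.adjoin_le_iff, ← AlgHom.coe_range, ← Algebra.map_top, ← hs,
    AlgHom.map_adjoin]
  exact IntermediateField.algebra_adjoin_le_adjoin k _

variable {k Q : Type u} [Field k] [Field Q] [Algebra k Q] [Differential Q]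

attribute [local instance] ControlledSubalgebra.finiteDimensional ControlledSubalgebra.commRing
  ControlledSubalgebra.nontrivial ControlledSubalgebra.algebra ControlledSubalgebra.differential
  ControlledSubalgebra.finiteType

theorem ControlledSubalgebra.absorbs_of_forall_algHom [IsAlgClosed Q] (S : ControlledSubalgebra k Q)
    {N : DiffExt k Q} {N₀ : IntermediateField k N.carrier}
    (h : letI := differentialOfStable S.base S.isDiffStable_base
      ∀ τ : S.base →ₐ[k] Q, ∃ φ : S.ring →+* N.carrier, IsDiffHom φ ∧
        φ.comp (algebraMap S.base S.ring) = (algebraMap Q N.carrier).comp τ.toRingHom ∧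
          ∀ r, φ r ∈ N₀) :
    letI := differentialOfStable S.subalgebra S.isDiffStable_subalgebra
    Absorbs S.subalgebra N₀ := by
  let _ := differentialOfStable S.subalgebra S.isDiffStable_subalgebra
  intro Ω _ _ _ _ _ _ θ hθ x
  algebraize [(algebraMap N.carrier Ω).comp (algebraMap Q N.carrier)]
  have : IsScalarTower k Q Ω := .of_algebraMap_eq fun r => by
    rw [IsScalarTower.algebraMap_apply k N.carrier Ω, IsScalarTower.algebraMap_apply k Q N.carrier]
    rfl
  obtain ⟨τ, hτ⟩ := exists_algHom_comp_eq (Q := Q)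
    (θ.comp (IsScalarTower.toAlgHom k S.base S.subalgebra))
  obtain ⟨φ, hφ, hφτ, hφN₀⟩ := h τ
  let _ : Algebra S.base Ω := (θ.toRingHom.comp (algebraMap S.base S.subalgebra)).toAlgebra
  let θ' : S.subalgebra →ₐ[S.base] Ω := { θ with commutes' := fun _ => rfl }
  let ψ : S.ring →ₐ[S.base] Ω := { (algebraMap N.carrier Ω).comp φ with
    commutes' := fun b => (congrArg _ (DFunLike.congr_fun hφτ b)).trans
      (DFunLike.congr_fun hτ b) }
  refine (sup_le_sup_right (Subfield.closure_le.mpr ?_) (constants Ω) : _ ≤ _ ⊔ _)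
    (S.isControlledBy Ω θ' ψ hθ ((isDiffHom_algebraMap N.carrier Ω).comp hφ) x)
  rintro _ ⟨r, rfl⟩
  exact ⟨φ r, hφN₀ r, rfl⟩

theorem ControlledSubalgebra.exists_absorbs [CharZero k] [IsAlgClosed Q] [Differential k]
    [DifferentialAlgebra k Q] (S : ControlledSubalgebra k Q) :
    letI := differentialOfStable S.subalgebra S.isDiffStable_subalgebra
    ∃ (N : DiffExt k Q) (N₀ : IntermediateField k N.carrier), N₀.FG ∧ Absorbs S.subalgebra N₀ ∧
      (constants N.carrier : Set N.carrier) ⊆ Set.range (algebraMap Q N.carrier) := by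
  let _ := differentialOfStable S.base S.isDiffStable_base
  have := S.differentialAlgebra
  have : CharZero Q := charZero_of_injective_algebraMap (algebraMap k Q).injective
  have : DifferentialAlgebra k S.base := ⟨fun x => Subtype.ext (deriv_algebraMap x)⟩
  let s : Set (S.base →+* Q) := Set.range fun τ : S.base →ₐ[k] Q => τ.toRingHom
  obtain ⟨N, hN, hφ⟩ := exists_diffExt_forall_isDiffHom k S.ring (s := s) (Set.finite_range _) <| by
    rintro _ ⟨τ, rfl⟩ x
    exact Differential.algHom_deriv' τ τ.toRingHom.injective x
  choose φ hφd hφτ using fun τ : S.base →ₐ[k] Q => hφ τ.toRingHom ⟨τ, rfl⟩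
  let _ : Algebra k S.ring := ((algebraMap S.base S.ring).comp (algebraMap k S.base)).toAlgebra
  have : IsScalarTower k S.base S.ring := .of_algebraMap_eq fun _ => rfl
  have : Algebra.FiniteType k S.ring := .trans (S := S.base) inferInstance inferInstance
  let φ' (τ : S.base →ₐ[k] Q) : S.ring →ₐ[k] N.carrier := { φ τ with
    commutes' := fun r => (DFunLike.congr_fun (hφτ τ) _).trans <|
      (congrArg _ (τ.commutes r)).trans (IsScalarTower.algebraMap_apply k Q N.carrier r).symm }
  refine ⟨N, ⨆ τ, IntermediateField.adjoin k (Set.range (φ' τ)),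
    IntermediateField.fg_iSup fun τ => fg_adjoin_range (φ' τ),
    S.absorbs_of_forall_algHom fun τ => ⟨φ τ, hφd τ, hφτ τ, fun r => ?_⟩, hN⟩
  exact le_iSup (fun τ => IntermediateField.adjoin k (Set.range (φ' τ))) τ
    (IntermediateField.subset_adjoin k _ ⟨r, rfl⟩)

end Existence

section Constants

variable {F Q Ω : Type*} [Field F] [Field Q] [Field Ω] [Differential F] [Differential Q]
  [Differential Ω] [Algebra F Q] [Algebra F Ω] [Algebra Q Ω] [IsScalarTower F Q Ω]
  [DifferentialAlgebra F Ω] [DifferentialAlgebra Q Ω] {M : IntermediateField F Ω}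

theorem exists_fg_isDiffStable_mem_sup (hM : M.LinearDisjoint Q) (hMd : IsDiffStable M) {f : Ω}
    (hf : f ∈ constants Ω) (hfM : f ∈ M.toSubfield ⊔ (algebraMap Q Ω).fieldRange) :
    ∃ P ≤ M, P.FG ∧ IsDiffStable P ∧ f ∈ P.toSubfield ⊔ (algebraMap Q Ω).fieldRange := by
  let _ := differentialOfStable M hMd
  have : DifferentialAlgebra F M := ⟨fun x => Subtype.ext (deriv_algebraMap x)⟩
  have : DifferentialAlgebra M Ω := ⟨fun _ => rfl⟩
  have hMr : (algebraMap M Ω).fieldRange = M.toSubfield := M.toSubfield.fieldRange_subtype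
  rw [← hMr, sup_comm] at hfM
  obtain ⟨ι, _, -, v, -, -, -, hvd, hfv⟩ := exists_isUniqueSolution_of_mem_sup
    (P := (IsScalarTower.toAlgHom F Q Ω).fieldRange) (Q := M)
    (IntermediateField.linearDisjoint_iff'.mpr (Subalgebra.LinearDisjoint.symm hM))
    (by rintro _ ⟨q, rfl⟩; exact ⟨q′, (deriv_algebraMap q).symm⟩) hf hfM
  refine ⟨(IntermediateField.adjoin F (Set.range v)).map M.val, ?_,
    fg_map (IntermediateField.fg_adjoin_of_finite (Set.finite_range v)) _,
    hvd.map (fun _ => rfl), ?_⟩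
  · rintro _ ⟨x, -, rfl⟩
    exact x.2
  · rwa [sup_comm]

theorem exists_fg_isDiffStable_subset_sup (hM : M.LinearDisjoint Q) (hMd : IsDiffStable M)
    {s : Set Ω} (hs : s.Finite) (hsC : s ⊆ constants Ω)
    (hsM : s ⊆ (M.toSubfield ⊔ (algebraMap Q Ω).fieldRange : Subfield Ω)) :
    ∃ P ≤ M, P.FG ∧ IsDiffStable P ∧
      s ⊆ (P.toSubfield ⊔ (algebraMap Q Ω).fieldRange : Subfield Ω) := by
  induction s, hs using Set.Finite.induction_on with
  | empty => exact ⟨.adjoin F ∅, IntermediateField.adjoin_le_iff.mpr (Set.empty_subset _),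
      IntermediateField.fg_adjoin_of_finite Set.finite_empty,
      isDiffStable_adjoin fun _ h => h.elim, Set.empty_subset _⟩
  | @insert f s _ _ ih =>
    rw [Set.insert_subset_iff] at hsC hsM
    obtain ⟨P, hPM, hP, hPd, hPs⟩ := ih hsC.2 hsM.2
    obtain ⟨P', hPM', hP', hPd', hPf⟩ := exists_fg_isDiffStable_mem_sup hM hMd hsC.1 hsM.1
    have hmono {A B : IntermediateField F Ω} (h : A ≤ B) :
        A.toSubfield ⊔ (algebraMap Q Ω).fieldRange ≤ B.toSubfield ⊔ (algebraMap Q Ω).fieldRange :=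
      sup_le_sup_right (show A.toSubfield ≤ B.toSubfield from h) _
    refine ⟨P' ⊔ P, sup_le hPM' hPM, IntermediateField.fg_sup hP' hP, hPd'.sup hPd,
      Set.insert_subset ?_ ?_⟩
    · exact hmono le_sup_left hPf
    · exact hPs.trans (hmono le_sup_right)

end Constants

section Parameters

variable {F Q Ω : Type u} [Field F] [Field Q] [Field Ω] [Differential F] [Differential Q]
  [Differential Ω] [Algebra F Q] [Algebra F Ω] [Algebra Q Ω] [IsScalarTower F Q Ω]
  [DifferentialAlgebra F Q] [DifferentialAlgebra F Ω] [DifferentialAlgebra Q Ω] [IsAlgClosed Q]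

omit [DifferentialAlgebra F Ω] in
theorem exists_finset_forall_algebraMap_mem_paramField {P : IntermediateField F Ω}
    (hP : P.LinearDisjoint Q) (hPd : IsDiffStable P) (hPfg : P.FG) {f : Ω} (hf : f ∈ constants Ω)
    (hfP : f ∈ P.toSubfield ⊔ (algebraMap Q Ω).fieldRange) :
    ∃ t : Finset Q, IsDiffStable (IntermediateField.adjoin F (t : Set Q)) ∧
      (∀ x ∈ t, ∃ Z : ParamExt F Q, algebraMap Q Z.carrier x ∈ Z.paramField) ∧
      f ∈ P.toSubfield ⊔
        (IntermediateField.adjoin F (t : Set Q)).toSubfield.map (algebraMap Q Ω) := by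
  classical
  obtain ⟨ι, _, ρ, v, i₀, hv, hρ, hvd, hfv⟩ := exists_isUniqueSolution_of_mem_sup hP hPd hf hfP
  let X : ParamExt F Q := ⟨⟨Ω⟩, P, hPfg, hPd, hP⟩
  obtain ⟨Z, hZ⟩ := exists_algebraMap_mem_paramField (X := X) hρ hv
  refine ⟨Finset.univ.image v, ?_⟩
  rw [Finset.coe_image, Finset.coe_univ, Set.image_univ]
  refine ⟨hvd, ?_, hfv⟩
  simpa using fun i => ⟨Z, hZ i⟩

theorem exists_paramExt_subset_sup {M : IntermediateField F Ω} (hM : M.LinearDisjoint Q)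
    (hMd : IsDiffStable M) {s : Set Ω} (hs : s.Finite) (hsC : s ⊆ constants Ω)
    (hsM : s ⊆ (M.toSubfield ⊔ (algebraMap Q Ω).fieldRange : Subfield Ω)) :
    ∃ (t : Finset Q) (Z : ParamExt F Q), IsDiffStable (IntermediateField.adjoin F (t : Set Q)) ∧
      (∀ x ∈ t, algebraMap Q Z.carrier x ∈ Z.paramField) ∧ s ⊆ (M.toSubfield ⊔
        (IntermediateField.adjoin F (t : Set Q)).toSubfield.map (algebraMap Q Ω) : Subfield Ω) := by
  classical
  obtain ⟨P, hPM, hP, hPd, hsP⟩ := exists_fg_isDiffStable_subset_sup hM hMd hs hsC hsM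
  choose t htd htZ hft using fun f : s => exists_finset_forall_algebraMap_mem_paramField
    (hM.of_le_left hPM) hPd hP (hsC f.2) (hsP f.2)
  have := hs.fintype
  let u := Finset.univ.biUnion t
  have htu (f : s) : (t f : Set Q) ⊆ u :=
    Finset.coe_subset.mpr (Finset.subset_biUnion_of_mem t (Finset.mem_univ f))
  let X : ParamExt F Q := ⟨⟨Ω⟩, P, hP, hPd, hM.of_le_left hPM⟩
  obtain ⟨Z, hZ⟩ := X.exists_algebraMap_mem_of_finset u fun x hx => by
    obtain ⟨f, -, hf⟩ := Finset.mem_biUnion.mp hx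
    exact htZ f x hf
  refine ⟨u, Z, isDiffStable_adjoin fun x hx => ?_, hZ, fun f hf => ?_⟩
  · obtain ⟨f, -, hf⟩ := Finset.mem_biUnion.mp hx
    exact IntermediateField.adjoin.mono F _ _ (htu f)
      (htd f x (IntermediateField.subset_adjoin F _ hf))
  · refine (sup_le_sup (show P.toSubfield ≤ M.toSubfield from hPM)
      ((Subfield.gc_map_comap _).monotone_l ?_) : _ ≤ _ ⊔ _) (hft ⟨f, hf⟩)
    exact IntermediateField.adjoin.mono F _ _ (htu ⟨f, hf⟩)

end Parameters

section StronglyNormalEmbedding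

theorem isAlgClosed_constants {k N : Type u} [Field k] [Field N] [Differential k] [Differential N]
    [Algebra k N] [DifferentialAlgebra k N] [IsAlgClosed (constants k)]
    (h : (constants N : Set N) ⊆ Set.range (algebraMap k N)) : IsAlgClosed (constants N) := by
  let f : constants k →+* constants N :=
    (algebraMap k N).restrict (constants k) (constants N)
      fun _ => (isDiffHom_algebraMap k N).map_mem_constants
  refine .of_ringEquiv _ _ (RingEquiv.ofBijective f ⟨f.injective, fun ⟨c, hc⟩ => ?_⟩)
  obtain ⟨a, rfl⟩ := h hc
  refine ⟨⟨a, (algebraMap k N).injective ?_⟩, rfl⟩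
  rw [← deriv_algebraMap, map_zero]
  exact hc

variable {k : Type u} [Field k]

theorem map_diffHomField_le {A N N' : Type u} [CommRing A] [Field N] [Field N'] [Algebra k A]
    [Algebra k N] [Algebra k N'] [Differential A] [Differential N] [Differential N']
    {f : N →ₐ[k] N'} (hf : IsDiffHom f.toRingHom) :
    (diffHomField k A N).map f ≤ diffHomField k A N' := by
  rw [diffHomField, IntermediateField.adjoin_map, IntermediateField.adjoin_le_iff]
  rintro _ ⟨_, ⟨φ, hφ, x, rfl⟩, rfl⟩
  exact apply_mem_diffHomField (φ := f.comp φ) (hf.comp hφ) x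

/-- The field `L` embeds over `k` into a strongly normal extension of `k`, compatibly with the
derivation of `Q`. Compatibility is phrased so that `L` need not be stable under the derivation. -/
def EmbedsStronglyNormal {Q : Type u} [Field Q] [Differential Q] [Algebra k Q] [Differential k]
    (L : IntermediateField k Q) : Prop :=
  ∃ (E : Type u) (_ : Field E) (_ : Differential E) (_ : Algebra k E) (φ : L →ₐ[k] E),
    DifferentialAlgebra k E ∧ IsStronglyNormal k E ∧ ∀ x y : L, (y : Q) = (x : Q)′ → φ y = (φ x)′

variable {Q Ω : Type u} [Field Q] [Field Ω] [Differential k] [Differential Q] [Differential Ω]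
  [Algebra k Q] [IsAlgClosed Q] [DifferentialAlgebra k Q]

theorem ControlledSubalgebra.embedsStronglyNormal [CharZero k] [IsAlgClosed (constants k)]
    (hC : (constants Q : Set Q) ⊆ Set.range (algebraMap k Q)) (S : ControlledSubalgebra k Q) :
    letI := differentialOfStable S.subalgebra S.isDiffStable_subalgebra
    EmbedsStronglyNormal (diffHomField k S.subalgebra Q) := by
  let _ := differentialOfStable S.subalgebra S.isDiffStable_subalgebra
  have := S.finiteDimensional
  have : Algebra.FiniteType S.base S.subalgebra := S.subalgebra.fg_iff_finiteType.mp S.fg_subalgebra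
  have : Algebra.FiniteType k S.subalgebra := .trans (S := S.base) inferInstance inferInstance
  obtain ⟨N, N₀, hN₀, hAN₀, hN⟩ := S.exists_absorbs
  have : DifferentialAlgebra k N.carrier := differentialAlgebra_trans k Q N.carrier
  have : CharZero N.carrier := charZero_of_injective_algebraMap (algebraMap k N.carrier).injective
  have hNC : (constants N.carrier : Set N.carrier) ⊆ Set.range (algebraMap k N.carrier) := by
    intro c hc
    obtain ⟨q, rfl⟩ := hN hc
    have hq : q ∈ constants Q := (algebraMap Q N.carrier).injective <| by
      rw [← deriv_algebraMap, map_zero]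
      exact hc
    obtain ⟨a, rfl⟩ := hC hq
    exact ⟨a, IsScalarTower.algebraMap_apply k Q N.carrier a⟩
  have := isAlgClosed_constants hNC
  let _ := differentialOfStable _ (isDiffStable_diffHomField k S.subalgebra N.carrier)
  let f := IsScalarTower.toAlgHom k Q N.carrier
  have hf : IsDiffHom f.toRingHom := isDiffHom_algebraMap Q N.carrier
  let φ := (f.comp (diffHomField k S.subalgebra Q).val).codRestrict
    (diffHomField k S.subalgebra N.carrier).toSubalgebra fun x =>
      map_diffHomField_le hf ⟨x, x.2, rfl⟩
  exact ⟨diffHomField k S.subalgebra N.carrier, inferInstance, inferInstance, inferInstance, φ,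
    ⟨fun a => Subtype.ext (deriv_algebraMap a)⟩, hAN₀.isStronglyNormal_diffHomField hN₀ hNC,
    fun x y hxy => Subtype.ext <| (congrArg f hxy).trans (hf x)⟩

theorem exists_embedsStronglyNormal_subset_sup [CharZero k] [IsAlgClosed (constants k)]
    {F : IntermediateField k Q} [Normal k F]
    [Differential F] [DifferentialAlgebra F Q] [Algebra Q Ω] [DifferentialAlgebra F Ω]
    [DifferentialAlgebra Q Ω]
    (hC : (constants Q : Set Q) ⊆ Set.range (algebraMap k Q)) {M : IntermediateField F Ω}
    (hM : M.LinearDisjoint Q) (hMd : IsDiffStable M) {s : Set Ω} (hs : s.Finite)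
    (hsC : s ⊆ constants Ω) (hsM : s ⊆ (M.toSubfield ⊔ (algebraMap Q Ω).fieldRange : Subfield Ω)) :
    ∃ L : IntermediateField k Q, IsDiffStable L ∧ EmbedsStronglyNormal L ∧
      (∀ σ : Q →ₐ[k] Q, IsDiffHom σ.toRingHom → L.map σ ≤ L) ∧
      s ⊆ (M.toSubfield ⊔ L.toSubfield.map (algebraMap Q Ω) : Subfield Ω) := by
  obtain ⟨t, Z, htd, htZ, hst⟩ := exists_paramExt_subset_sup hM hMd hs hsC hsM
  have hF : IsDiffStable F := fun x hx =>
    (deriv_algebraMap (B := Q) (⟨x, hx⟩ : F)).symm ▸ Subtype.property _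
  obtain ⟨S, htS⟩ := exists_controlledSubalgebra hF Z htd htZ
  let _ := differentialOfStable S.subalgebra S.isDiffStable_subalgebra
  refine ⟨diffHomField k S.subalgebra Q, isDiffStable_diffHomField k S.subalgebra Q,
    S.embedsStronglyNormal hC, fun σ hσ => map_diffHomField_le hσ, ?_⟩
  refine hst.trans (sup_le le_sup_left ?_ : _ ≤ M.toSubfield ⊔ _)
  refine Subfield.map_le_iff_le_comap.mpr (Subfield.closure_le.mpr
    (Set.union_subset ?_ fun x hx => ?_))
  · rintro _ ⟨a, rfl⟩
    refine (le_sup_left : M.toSubfield ≤ _) ?_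
    rw [← IsScalarTower.algebraMap_apply]
    exact M.algebraMap_mem a
  · exact (le_sup_right : _ ≤ M.toSubfield ⊔ _) ⟨x, apply_mem_diffHomField
      (φ := S.subalgebra.val.restrictScalars k) (fun _ => rfl) ⟨x, htS hx⟩, rfl⟩

end StronglyNormalEmbedding

section Algebraicity

theorem isDiffStable_algebraicClosure (K Ω : Type*) [Field K] [CharZero K] [Field Ω]
    [Differential K] [Differential Ω] [Algebra K Ω] [DifferentialAlgebra K Ω] :
    IsDiffStable (algebraicClosure K Ω) := by
  intro x hx
  let B := IntermediateField.adjoin K {x}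
  have : FiniteDimensional K B := IntermediateField.adjoin.finiteDimensional hx
  let y : B := ⟨x, IntermediateField.mem_adjoin_simple_self K x⟩
  have hy : x′ = algebraMap B Ω y′ := by rw [← deriv_algebraMap]; rfl
  rw [hy, mem_algebraicClosure_iff]
  exact (Algebra.IsAlgebraic.isAlgebraic y′).algebraMap

theorem algebraicIndependent_of_forall_mem_constants {ι M Ω : Type*} [Field M] [Differential M]
    [Field Ω] [Differential Ω] [Algebra M Ω] [DifferentialAlgebra M Ω] {c : ι → Ω}
    (hc : ∀ i, (c i)′ = 0) (h : AlgebraicIndependent (constants M) c) :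
    AlgebraicIndependent M c := by
  have hmon (m : ι →₀ ℕ) : (m.prod fun i e => c i ^ e)′ = 0 :=
    prod_mem (S := constants Ω) fun i _ => pow_mem (hc i) _
  have hmonomial (R : Type _) [CommSemiring R] [Algebra R Ω] :
      (MvPolynomial.aeval c).toLinearMap ∘ MvPolynomial.basisMonomials ι R =
        fun m => m.prod fun i e => c i ^ e :=
    funext fun m => by simp [MvPolynomial.aeval_monomial]
  have hli := (MvPolynomial.basisMonomials ι (constants M)).linearIndependent.map'
    (MvPolynomial.aeval c).toLinearMap (LinearMap.ker_eq_bot.mpr h)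
  refine LinearMap.injective_of_linearIndependent (f := (MvPolynomial.aeval c).toLinearMap)
    (MvPolynomial.basisMonomials ι M).span_eq ?_
  rw [hmonomial, linearIndependent_iff_finset_linearIndependent] at hli ⊢
  exact fun s => linearIndependent_of_forall_mem_constants (fun m => hmon m) (hli s)

theorem constants_subset_range_of_isAlgebraic {k K Q : Type u} [Field k] [Field K] [Field Q]
    [Differential k] [Differential K] [Differential Q] [Algebra k K] [Algebra K Q] [Algebra k Q]
    [IsScalarTower k K Q] [DifferentialAlgebra k K] [DifferentialAlgebra K Q]
    [Algebra.IsAlgebraic K Q] [IsAlgClosed (constants k)]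
    (h : (constants K : Set K) ⊆ Set.range (algebraMap k K)) :
    (constants Q : Set Q) ⊆ Set.range (algebraMap k Q) := by
  intro c hc
  have := isAlgClosed_constants h
  have hc' : IsAlgebraic (constants K) c := by
    by_contra htr
    have hind := algebraicIndependent_of_forall_mem_constants (M := K) (c := fun _ : Unit => c)
      (fun _ => hc) (algebraicIndependent_unique_type_iff.mpr htr)
    exact algebraicIndependent_unique_type_iff.mp hind (Algebra.IsAlgebraic.isAlgebraic c)
  obtain ⟨⟨d, hd⟩, rfl⟩ := mem_range_algebraMap_of_isAlgebraic hc'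
  obtain ⟨a, rfl⟩ := h hd
  exact ⟨a, IsScalarTower.algebraMap_apply k K Q a⟩

theorem isAlgebraic_comap_of_forall_algEquiv_mem {k K Q : Type*} [Field k] [Field K] [Field Q]
    [Algebra k K] [Algebra K Q] [Algebra k Q] [IsScalarTower k K Q] [Normal K Q]
    {L : IntermediateField k Q} (hL : ∀ (σ : Q ≃ₐ[K] Q), ∀ x ∈ L, σ x ∈ L) {x : Q} (hx : x ∈ L) :
    IsAlgebraic (L.comap (IsScalarTower.toAlgHom k K Q)) x := by
  let p := minpoly K x
  have hmonic : p.Monic := minpoly.monic (Normal.isIntegral ‹_› x)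
  have hsplits : (p.map (algebraMap K Q)).Splits := Normal.splits ‹_› x
  have hlifts : p.map (algebraMap K Q) ∈ Polynomial.lifts (algebraMap L Q) := by
    rw [hsplits.eq_prod_roots_of_monic (hmonic.map _)]
    refine multiset_prod_mem _ fun q hq => ?_
    obtain ⟨y, hy, rfl⟩ := Multiset.mem_map.mp hq
    obtain ⟨σ, rfl⟩ := minpoly.exists_algEquiv_of_root' (Algebra.IsAlgebraic.isAlgebraic x)
      ((Polynomial.mem_aroots'.mp hy).2)
    exact ⟨.X - .C ⟨σ x, hL σ x hx⟩, by simp⟩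
  have hcoeff : p ∈ Polynomial.lifts
      (algebraMap (L.comap (IsScalarTower.toAlgHom k K Q)) K) := by
    rw [Polynomial.lifts_iff_coeff_lifts] at hlifts ⊢
    intro n
    obtain ⟨z, hz⟩ := hlifts n
    refine ⟨⟨p.coeff n, ?_⟩, rfl⟩
    rw [Polynomial.coeff_map] at hz
    change algebraMap K Q (p.coeff n) ∈ L
    exact hz ▸ z.2
  obtain ⟨q, hq⟩ := hcoeff
  have hq' : q.map (algebraMap _ K) = p := hq
  refine ⟨q, fun hq₀ => hmonic.ne_zero (by rw [← hq', hq₀, Polynomial.map_zero]), ?_⟩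
  rw [← Polynomial.aeval_map_algebraMap K, hq', minpoly.aeval]

theorem card_le_trdeg_of_mem_closure {k L M Ω : Type u} [Field k] [Field L] [Field M] [Field Ω]
    [Algebra k L] [Algebra k M] [Algebra k Ω] [Algebra L Ω] [Algebra M Ω] [IsScalarTower k L Ω]
    [IsScalarTower k M Ω] {n : ℕ} {f : Fin n → Ω} (hf : AlgebraicIndependent M f)
    (h : ∀ i, f i ∈ Subfield.closure {x | IsAlgebraic M x ∨ IsAlgebraic L x}) :
    (n : Cardinal) ≤ Algebra.trdeg k L := by
  obtain ⟨B, hB⟩ := exists_isTranscendenceBasis k L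
  let B' : Set Ω := algebraMap L Ω '' B
  let N := IntermediateField.adjoin M B'
  have hBN : (Algebra.adjoin k (Set.range ((↑) : B → L))).map (IsScalarTower.toAlgHom k L Ω) ≤
      N.toSubalgebra.restrictScalars k := by
    rw [AlgHom.map_adjoin, Subtype.range_coe]
    exact Algebra.adjoin_le (IntermediateField.subset_adjoin M B')
  let φ : Algebra.adjoin k (Set.range ((↑) : B → L)) →+* N :=
    ((algebraMap L Ω).comp (algebraMap _ L)).codRestrict N fun z => hBN ⟨z, z.2, rfl⟩
  have hφ : Function.Injective φ := fun a b h =>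
    Subtype.ext ((algebraMap L Ω).injective (congrArg Subtype.val h))
  have := hB.isAlgebraic
  have hle : Subfield.closure {x | IsAlgebraic M x ∨ IsAlgebraic L x} ≤
      (algebraicClosure N Ω).toSubfield := by
    refine Subfield.closure_le.mpr fun x hx => mem_algebraicClosure_iff.mpr ?_
    obtain hx | hx := hx
    · exact hx.tower_top N
    · exact (hx.restrictScalars (Algebra.adjoin k (Set.range ((↑) : B → L)))).ringHom_of_comp_eq φ
        (RingHom.id Ω) hφ rfl
  have hclosure : Set.range f ⊆ (AlgebraicIndependent.matroid M Ω).closure B' := by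
    rintro _ ⟨i, rfl⟩
    rw [AlgebraicIndependent.matroid_closure_eq]
    exact IntermediateField.isAlgebraic_adjoin_iff.mp (mem_algebraicClosure_iff.mp (hle (h i)))
  calc (n : Cardinal) = Cardinal.mk (Set.range f) := by
        simpa using (Cardinal.mk_range_eq_of_injective hf.injective).symm
    _ ≤ (AlgebraicIndependent.matroid M Ω).cRk B' := by
        rw [← Matroid.cRk_closure]
        exact Matroid.Indep.cardinalMk_le_cRk_of_subset
          ((algebraicIndependent_subtype_range hf.injective).mpr hf) hclosure
    _ ≤ Cardinal.mk B' := Matroid.cRk_le_cardinalMk _ _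
    _ ≤ Cardinal.mk B := Cardinal.mk_image_le
    _ = Algebra.trdeg k L := hB.cardinalMk_eq_trdeg

end Algebraicity

section Descent

/-- The relative algebraic closure of `M` in `Ω`, as an extension of an algebraic extension `F`
of the field `k ⊆ M`. -/
def algebraicClosureOver (k F M Ω : Type*) [Field k] [Field F] [Field M] [Field Ω] [Algebra k F]
    [Algebra k M] [Algebra k Ω] [Algebra F Ω] [Algebra M Ω] [IsScalarTower k F Ω]
    [IsScalarTower k M Ω] [Algebra.IsAlgebraic k F] : IntermediateField F Ω :=
  (algebraicClosure M Ω).toSubfield.toIntermediateField fun x => mem_algebraicClosure_iff.mpr <|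
    ((Algebra.IsAlgebraic.isAlgebraic (R := k) x).algebraMap (A := Ω)).tower_top M

theorem linearDisjoint_algebraicClosureOver {k F K M Q Ω : Type*} [Field k] [Field F] [Field K]
    [Field M] [Field Q] [Field Ω] [Algebra k F] [Algebra k K] [Algebra k M] [Algebra k Q]
    [Algebra k Ω] [Algebra F Q] [Algebra F Ω] [Algebra K Q] [Algebra K Ω] [Algebra M Ω]
    [Algebra Q Ω] [IsScalarTower k F Q] [IsScalarTower k F Ω] [IsScalarTower k K Q]
    [IsScalarTower k M Ω] [IsScalarTower F Q Ω] [IsScalarTower K Q Ω] [Algebra.IsAlgebraic k F]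
    [Algebra.IsAlgebraic K Q] [IsAlgClosed F]
    (hfree : ∀ s : Set K, AlgebraicIndependent k ((↑) : s → K) →
      AlgebraicIndependent M fun x : s => algebraMap K Ω x) :
    (algebraicClosureOver k F M Ω).LinearDisjoint Q := by
  obtain ⟨s, hs⟩ := exists_isTranscendenceBasis k K
  have hsQ : IsTranscendenceBasis F (algebraMap K Q ∘ ((↑) : s → K)) :=
    (Algebra.IsAlgebraic.isTranscendenceBasis_iff k F).mp (hs.algebraMap_comp)
  have hsM : AlgebraicIndependent (algebraicClosure M Ω)
      (algebraMap Q Ω ∘ algebraMap K Q ∘ ((↑) : s → K)) := by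
    rw [← Function.comp_assoc, ← RingHom.coe_comp, ← IsScalarTower.algebraMap_eq]
    exact (hfree s hs.1).algebraicClosure
  exact linearDisjoint_of_algebraicIndependent hsQ hsM

theorem EmbedsStronglyNormal.comap {k K Q : Type u} [Field k] [Field K] [Field Q]
    [Differential k] [Differential K] [Differential Q] [Algebra k K] [Algebra k Q]
    {L : IntermediateField k Q} (hL : EmbedsStronglyNormal L) {g : K →ₐ[k] Q}
    (hg : IsDiffHom g.toRingHom) : EmbedsStronglyNormal (L.comap g) := by
  obtain ⟨E, _, _, _, φ, hE, hsn, hφ⟩ := hL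
  let g' : L.comap g →ₐ[k] L := (g.comp (L.comap g).val).codRestrict L.toSubalgebra fun x => x.2
  exact ⟨E, _, _, _, φ.comp g', hE, hsn, fun x y hxy =>
    hφ (g' x) (g' y) ((congrArg g hxy).trans (hg x))⟩

theorem IsDiffStable.comap {k K Q : Type*} [Field k] [Field K] [Field Q]
    [Differential K] [Differential Q] [Algebra k K] [Algebra k Q]
    {L : IntermediateField k Q} (hL : IsDiffStable L) {g : K →ₐ[k] Q}
    (hg : IsDiffHom g.toRingHom) : IsDiffStable (L.comap g) := fun x hx => by
  change g x′ ∈ L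
  exact (hg x).symm ▸ hL _ hx

variable {k K M Q Ω : Type u} [Field k] [Field K] [Field M] [Field Q] [Field Ω] [Differential k]
  [Differential K] [Differential M] [Differential Q] [Differential Ω] [Algebra k K] [Algebra k M]
  [Algebra k Ω] [Algebra K Ω] [Algebra M Ω] [IsScalarTower k K Ω] [IsScalarTower k M Ω]
  [DifferentialAlgebra k K] [DifferentialAlgebra K Ω] [DifferentialAlgebra M Ω] [CharZero k]
  [IsAlgClosed (constants k)]

omit [DifferentialAlgebra K Ω] in
theorem exists_map_le_embedsStronglyNormal_subset_sup [Algebra k Q] [Algebra K Q] [Algebra Q Ω]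
    [IsScalarTower k K Q] [IsScalarTower K Q Ω] [DifferentialAlgebra K Q]
    [DifferentialAlgebra Q Ω] [IsAlgClosure K Q]
    (hK : (constants K : Set K) ⊆ Set.range (algebraMap k K))
    (hfree : ∀ s : Set K, AlgebraicIndependent k ((↑) : s → K) →
      AlgebraicIndependent M fun x : s => algebraMap K Ω x)
    {s : Set Ω} (hs : s.Finite) (hsC : s ⊆ constants Ω)
    (hsM : s ⊆ ((algebraMap M Ω).fieldRange ⊔ (algebraMap K Ω).fieldRange : Subfield Ω)) :
    ∃ L : IntermediateField k Q, IsDiffStable L ∧ EmbedsStronglyNormal L ∧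
      (∀ σ : Q ≃ₐ[K] Q, ∀ x ∈ L, σ x ∈ L) ∧
      s ⊆ ((algebraicClosure M Ω).toSubfield ⊔ L.toSubfield.map (algebraMap Q Ω) : Subfield Ω) := by
  have : CharZero K := charZero_of_injective_algebraMap (algebraMap k K).injective
  have : CharZero M := charZero_of_injective_algebraMap (algebraMap k M).injective
  have : DifferentialAlgebra k Q := differentialAlgebra_trans k K Q
  have : IsAlgClosed Q := IsAlgClosure.isAlgClosed K
  have : Algebra.IsAlgebraic K Q := IsAlgClosure.isAlgebraic
  have : IsScalarTower k Q Ω := .of_algebraMap_eq fun x => by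
    rw [IsScalarTower.algebraMap_apply k K Ω, IsScalarTower.algebraMap_apply k K Q,
      ← IsScalarTower.algebraMap_apply K Q Ω]
  let F := algebraicClosure k Q
  let _ : Differential F := differentialOfStable F (isDiffStable_algebraicClosure k Q)
  have : DifferentialAlgebra F Q := ⟨fun _ => rfl⟩
  have : DifferentialAlgebra F Ω := differentialAlgebra_trans F Q Ω
  have : IsAlgClosed F := IsAlgClosure.isAlgClosed k
  have : Normal k F := inferInstance
  have hM : (algebraMap M Ω).fieldRange ≤ (algebraicClosureOver k F M Ω).toSubfield := by
    rintro _ ⟨x, rfl⟩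
    exact (algebraicClosure M Ω).algebraMap_mem x
  have hKQ : (algebraMap K Ω).fieldRange ≤ (algebraMap Q Ω).fieldRange := by
    rintro _ ⟨x, rfl⟩
    exact ⟨algebraMap K Q x, (IsScalarTower.algebraMap_apply K Q Ω x).symm⟩
  obtain ⟨L, hLd, hL, hLσ, hsL⟩ := exists_embedsStronglyNormal_subset_sup
    (constants_subset_range_of_isAlgebraic (Q := Q) hK)
    (linearDisjoint_algebraicClosureOver (F := F) (Q := Q) hfree)
    (isDiffStable_algebraicClosure M Ω) hs hsC (hsM.trans (sup_le_sup hM hKQ))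
  exact ⟨L, hLd, hL, fun σ x hx => hLσ (σ.toAlgHom.restrictScalars k)
    (Differential.algEquiv_deriv' σ) ⟨x, hx, rfl⟩, hsL⟩

theorem exists_embedsStronglyNormal_of_algebraicIndependent [IsAlgClosed Ω]
    (hK : (constants K : Set K) ⊆ Set.range (algebraMap k K))
    (hfree : ∀ s : Set K, AlgebraicIndependent k ((↑) : s → K) →
      AlgebraicIndependent M fun x : s => algebraMap K Ω x) {n : ℕ} {f : Fin n → Ω}
    (hf : ∀ i, (f i)′ = 0)
    (hfKM : ∀ i, f i ∈ (algebraMap M Ω).fieldRange ⊔ (algebraMap K Ω).fieldRange)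
    (hind : AlgebraicIndependent (constants M) f) :
    ∃ L : IntermediateField k K, IsDiffStable L ∧ (n : Cardinal) ≤ Algebra.trdeg k L ∧
      EmbedsStronglyNormal L := by
  have : CharZero K := charZero_of_injective_algebraMap (algebraMap k K).injective
  let Q := algebraicClosure K Ω
  let _ : Differential Q := differentialOfStable Q (isDiffStable_algebraicClosure K Ω)
  have : DifferentialAlgebra Q Ω := ⟨fun _ => rfl⟩
  have : DifferentialAlgebra K Q := ⟨fun x => Subtype.ext (deriv_algebraMap x)⟩
  obtain ⟨L, hLd, hL, hLσ, hfL⟩ := exists_map_le_embedsStronglyNormal_subset_sup (Q := Q) hK hfree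
    (Set.finite_range f) (Set.range_subset_iff.mpr hf) (Set.range_subset_iff.mpr hfKM)
  let g := IsScalarTower.toAlgHom k K Q
  have hg : IsDiffHom g.toRingHom := isDiffHom_algebraMap K Q
  refine ⟨L.comap g, hLd.comap hg, ?_, hL.comap hg⟩
  refine card_le_trdeg_of_mem_closure (algebraicIndependent_of_forall_mem_constants hf hind)
    fun i => (sup_le (fun x hx => ?_) ?_ : _ ≤ Subfield.closure _) (hfL ⟨i, rfl⟩)
  · exact Subfield.subset_closure (.inl (mem_algebraicClosure_iff.mp hx))
  · rintro _ ⟨y, hy, rfl⟩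
    exact Subfield.subset_closure
      (.inr (isAlgebraic_comap_of_forall_algEquiv_mem hLσ hy).algebraMap)

end Descent

section Bundled

variable {E : Type u} [Field E]

theorem algebraicIndependent_of_freeOver {k K M : Subfield E} (h : FreeOver k K M) {ι : Type*}
    {x : ι → E} (hxK : ∀ i, x i ∈ K) (hx : AlgebraicIndependent k x) :
    AlgebraicIndependent M x := by
  refine algebraicIndependent_of_finite_type fun t ht => ?_
  have hxt : AlgebraicIndependent k fun i : t => x i := hx.comp _ Subtype.val_injective
  have := ht.to_subtype
  obtain ⟨s, hs⟩ := (Set.finite_range fun i : t => x i).exists_finset_coe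
  have hsM := h s (by rw [hs]; rintro _ ⟨i, rfl⟩; exact hxK i)
  rw [hs, algebraicIndependent_subtype_range hxt.injective,
    algebraicIndependent_subtype_range hxt.injective] at hsM
  exact hsM hxt

theorem exists_algebraicIndependent_of_le_trdegOf {k K : Subfield E} {n : ℕ}
    (h : (n : Cardinal) ≤ trdegOf k K) :
    ∃ f : Fin n → E, (∀ i, f i ∈ K) ∧ AlgebraicIndependent k f := by
  cases n with
  | zero => exact ⟨Fin.elim0, fun i => i.elim0,
      algebraicIndependent_empty_type_iff.mpr (algebraMap k E).injective⟩
  | succ m =>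
    have hm : (m : Cardinal) < trdegOf k K := lt_of_lt_of_le (by exact_mod_cast m.lt_succ_self) h
    obtain ⟨⟨s, hsK, hs⟩, hms⟩ := exists_lt_of_lt_ciSup' hm
    have hcard : Cardinal.lift.{u} (Cardinal.mk (Fin (m + 1))) ≤
        Cardinal.lift.{0} (Cardinal.mk s) := by
      simpa using Order.succ_le_of_lt hms
    obtain ⟨g⟩ := Cardinal.lift_mk_le'.mp hcard
    exact ⟨fun i => g i, fun i => hsK (g i).2, hs.comp g g.injective⟩

theorem trdeg_le_trdegOf {k S : Subfield E} {L : Type u} [Field L] [Algebra k L] (φ : L →ₐ[k] E)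
    (hφ : ∀ x, φ x ∈ S) : Algebra.trdeg k L ≤ trdegOf k S := by
  obtain ⟨s, hs⟩ := exists_isTranscendenceBasis k L
  have hsE : AlgebraicIndependent k fun x : s => φ x := hs.1.map' φ.injective
  rw [← hs.cardinalMk_eq_trdeg, ← Cardinal.mk_range_eq _ hsE.injective]
  exact le_ciSup (f := fun t : {t : Set E // t ⊆ (S : Set E) ∧
      AlgebraicIndependent k ((↑) : t → E)} => Cardinal.mk t.1) Cardinal.bddAbove_of_small
    ⟨Set.range fun x : s => φ x, Set.range_subset_iff.mpr fun x => hφ x,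
      (algebraicIndependent_subtype_range hsE.injective).mpr hsE⟩

/-- The derivation of a bundled differential field, in unbundled form. -/
abbrev differentialOfDFld (F : DFld.{u}) : Differential F.carrier :=
  ⟨Derivation.mk' (AddMonoidHom.mk' F.deriv F.deriv_add).toIntLinearMap fun a b => by
    simp only [AddMonoidHom.coe_toIntLinearMap, AddMonoidHom.mk'_apply, F.deriv_mul, smul_eq_mul]
    ring⟩

/-- A differential field of characteristic zero, in bundled form. -/
abbrev dFldOfDifferential (F : Type u) [Field F] [CharZero F] [Differential F] : DFld.{u} where
  carrier := F
  deriv := Differential.deriv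
  deriv_add := map_add _
  deriv_mul a b := by
    rw [Derivation.leibniz, smul_eq_mul, smul_eq_mul]
    ring

variable {k : Type u} [Field k] [Differential k] [Differential E] [Algebra k E]

theorem IsStronglyNormal.isSN [DifferentialAlgebra k E] (h : IsStronglyNormal k E) :
    IsSN (fun x : E => x′) (algebraMap k E).fieldRange := by
  refine ⟨?_, ?_, fun x hx => h.constants_subset hx, fun T ι σ hι hσ hισ x => ?_⟩
  · rintro _ ⟨a, rfl⟩
    exact ⟨a′, (deriv_algebraMap a).symm⟩
  · obtain ⟨s, hs⟩ := h.fg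
    exact ⟨s, congrArg IntermediateField.toSubfield hs⟩
  · let _ := differentialOfDFld T
    refine (sup_le ?_ fun c hc => ?_ : _ ≤ Subfield.closure _)
      (h.apply_mem T.carrier ι σ hι hσ (fun a => hισ _ ⟨a, rfl⟩) x)
    · rintro _ ⟨y, rfl⟩
      exact Subfield.subset_closure (.inl ⟨y, rfl⟩)
    · exact Subfield.subset_closure (.inr hc)

theorem EmbedsStronglyNormal.exists_isSN [CharZero k] {L : IntermediateField k E}
    (h : EmbedsStronglyNormal L) :
    ∃ (F : DFld.{u}) (φ : L →+* F.carrier),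
      (∀ x y : L, (y : E) = (x : E)′ → φ y = F.deriv (φ x)) ∧
      IsSN F.deriv (φ.comp (algebraMap k L)).fieldRange := by
  obtain ⟨F, _, _, _, φ, _, hF, hφ⟩ := h
  have : CharZero F := charZero_of_injective_algebraMap (algebraMap k F).injective
  refine ⟨dFldOfDifferential F, φ, hφ, ?_⟩
  rw [φ.comp_algebraMap]
  exact hF.isSN

end Bundled

section Constants

variable {E : Type u} [Field E] [Differential E]

/-- The identification of the constants of a differential subfield with its constants inside the
ambient differential field. -/
def constantsEquiv (k : Subfield E) [Differential k] [DifferentialAlgebra k E] :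
    constants k ≃+* constantsOf (Differential.deriv (R := E)) k where
  toFun x := ⟨x, x.1.2, (deriv_algebraMap (B := E) x.1).trans (congrArg _ x.2)⟩
  invFun x := ⟨⟨x, x.2.1⟩, (algebraMap k E).injective <|
    (deriv_algebraMap _).symm.trans <| x.2.2.trans (map_zero _).symm⟩
  map_mul' _ _ := rfl
  map_add' _ _ := rfl

theorem constants_subset_range_of_constantsOf_eq {k K : Subfield E} [Differential K]
    [DifferentialAlgebra K E] [Algebra k K] [IsScalarTower k K E]
    (h : constantsOf (Differential.deriv (R := E)) K = constantsOf Differential.deriv k) :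
    (constants K : Set K) ⊆ Set.range (algebraMap k K) := fun c hc =>
  have hck := h.le (constantsEquiv K ⟨c, hc⟩).2
  ⟨⟨c, hck.1⟩, Subtype.ext (IsScalarTower.algebraMap_apply k K E ⟨c, hck.1⟩).symm⟩

theorem algebraicIndependent_constants {M : Subfield E} [Differential M] [DifferentialAlgebra M E]
    {ι : Type*} {x : ι → E}
    (hx : AlgebraicIndependent (constantsOf (Differential.deriv (R := E)) M) x) :
    AlgebraicIndependent (constants M) x :=
  AlgebraicIndependent.ringHom_of_comp_eq (constantsEquiv M).symm (RingHom.id E) hx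
    (constantsEquiv M).symm.surjective Function.injective_id rfl

end Constants

section Map

variable {k K E : Type u} [Field k] [Field K] [Field E] [Differential K] [Differential E]
  [Algebra k K] [Algebra k E] {L : IntermediateField k K} {f : K →ₐ[k] E}

theorem EmbedsStronglyNormal.map [Differential k] (hL : EmbedsStronglyNormal L)
    (hf : IsDiffHom f.toRingHom) : EmbedsStronglyNormal (L.map f) := by
  obtain ⟨F, _, _, _, φ, hF, hsn, hφ⟩ := hL
  refine ⟨F, _, _, _, φ.comp (L.equivMap f).symm.toAlgHom, hF, hsn, fun x y hxy => hφ _ _ ?_⟩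
  obtain ⟨x, rfl⟩ := (L.equivMap f).surjective x
  obtain ⟨y, rfl⟩ := (L.equivMap f).surjective y
  change ((L.equivMap f).symm (L.equivMap f y) : K) = (((L.equivMap f).symm (L.equivMap f x))′ : K)
  rw [AlgEquiv.symm_apply_apply, AlgEquiv.symm_apply_apply]
  exact f.injective (hxy.trans (hf x).symm)

end Map

section Subfields

variable {E : Type u} [Field E] [CharZero E] [Differential E] {k K M : Subfield E}
  [Differential k] [Differential K] [Differential M] [DifferentialAlgebra K E]
  [DifferentialAlgebra M E] [Algebra k K] [Algebra k M] [IsScalarTower k K E] [IsScalarTower k M E]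

theorem exists_embedsStronglyNormal_of_freeOver [DifferentialAlgebra k K]
    [IsAlgClosed (constants k)]
    (hK : (constants K : Set K) ⊆ Set.range (algebraMap k K)) (hfree : FreeOver k K M) {n : ℕ}
    (hn : n ≤ trdegOf (constantsOf (Differential.deriv (R := E)) M)
      (constantsOf Differential.deriv (K ⊔ M))) :
    ∃ L : IntermediateField k E, L.toSubfield ≤ K ∧ IsDiffStable L ∧
      n ≤ trdegOf k L.toSubfield ∧ EmbedsStronglyNormal L := by
  let Ω := AlgebraicClosure E
  have : Algebra.FormallyEtale E Ω := .of_isSeparable E Ω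
  obtain ⟨_, _⟩ := exists_differential_of_formallyEtale E Ω
  have : DifferentialAlgebra K Ω := differentialAlgebra_trans K E Ω
  have : DifferentialAlgebra M Ω := differentialAlgebra_trans M E Ω
  obtain ⟨f, hfKM, hf⟩ := exists_algebraicIndependent_of_le_trdegOf hn
  have hKM : K ⊔ M ≤ ((algebraMap M Ω).fieldRange ⊔ (algebraMap K Ω).fieldRange).comap
      (algebraMap E Ω) :=
    sup_le (fun x hx => (le_sup_right : _ ≤ (algebraMap M Ω).fieldRange ⊔ _) ⟨⟨x, hx⟩, rfl⟩)
      fun x hx => (le_sup_left : (algebraMap M Ω).fieldRange ≤ _) ⟨⟨x, hx⟩, rfl⟩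
  have hfreeΩ (s : Set K) (hs : AlgebraicIndependent k ((↑) : s → K)) :
      AlgebraicIndependent M fun x : s => algebraMap K Ω x :=
    have hsE := hs.map' (f := IsScalarTower.toAlgHom k K E) (algebraMap K E).injective
    (algebraicIndependent_of_freeOver hfree (fun x => x.1.2) hsE).map'
      (f := IsScalarTower.toAlgHom M E Ω) (algebraMap E Ω).injective
  obtain ⟨L, hLd, hnL, hL⟩ := exists_embedsStronglyNormal_of_algebraicIndependent hK hfreeΩ
    (f := algebraMap E Ω ∘ f)
    (fun i => (deriv_algebraMap _).trans ((congrArg _ (hfKM i).2).trans (map_zero _)))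
    (fun i => hKM (hfKM i).1)
    ((algebraicIndependent_constants hf).map' (f := IsScalarTower.toAlgHom _ E Ω)
      (algebraMap E Ω).injective)
  let g := IsScalarTower.toAlgHom k K E
  have hg : IsDiffHom g.toRingHom := isDiffHom_algebraMap K E
  refine ⟨L.map g, ?_, hLd.map hg,
    hnL.trans (trdeg_le_trdegOf (g.comp L.val) fun x => ⟨x, x.2, rfl⟩), hL.map hg⟩
  rintro _ ⟨x, -, rfl⟩
  exact x.2

end Subfields

end DiffField

open DiffField in
theorem stmt11_general {E : Type u} [Field E] [CharZero E] (D : Derivation ℤ E E)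
    (k K M : Subfield E)
    (hk : ∀ x ∈ k, D x ∈ k) (hKd : ∀ x ∈ K, D x ∈ K) (hMd : ∀ x ∈ M, D x ∈ M)
    (hkK : k ≤ K) (hkM : k ≤ M)
    (hC : IsAlgClosed ↥(constantsOf D k))
    (hfree : FreeOver k K M)
    (l : ℕ)
    (htd : (l : Cardinal) ≤ trdegOf (constantsOf D M) (constantsOf D (K ⊔ M))) :
    constantsOf D K ≠ constantsOf D k ∨
    ∃ L : Subfield E, k ≤ L ∧ L ≤ K ∧ (∀ x ∈ L, D x ∈ L) ∧
      (l : Cardinal) ≤ trdegOf k L ∧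
      ∃ (F : DFld.{u}) (ψ : ↥L →+* F.carrier),
        (∀ (x : E) (hx : x ∈ L) (hx' : D x ∈ L), ψ ⟨D x, hx'⟩ = F.deriv (ψ ⟨x, hx⟩)) ∧
        IsSN F.deriv (Subfield.map ψ (Subfield.comap L.subtype k)) := by
  refine or_iff_not_imp_left.mpr fun hCK => ?_
  let _ : Differential E := ⟨D⟩
  let _ := differentialOfStable k hk
  let _ := differentialOfStable K hKd
  let _ := differentialOfStable M hMd
  let _ : Algebra k K := (Subfield.inclusion hkK).toAlgebra
  let _ : Algebra k M := (Subfield.inclusion hkM).toAlgebra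
  have : DifferentialAlgebra k E := ⟨fun _ => rfl⟩
  have : DifferentialAlgebra K E := ⟨fun _ => rfl⟩
  have : DifferentialAlgebra M E := ⟨fun _ => rfl⟩
  have : DifferentialAlgebra k K := ⟨fun _ => rfl⟩
  have : IsScalarTower k K E := .of_algebraMap_eq fun _ => rfl
  have : IsScalarTower k M E := .of_algebraMap_eq fun _ => rfl
  have : IsAlgClosed (constants k) := .of_ringEquiv _ _ (constantsEquiv k).symm
  obtain ⟨L, hLK, hLd, hlL, hL⟩ := exists_embedsStronglyNormal_of_freeOver
    (constants_subset_range_of_constantsOf_eq (not_not.mp hCK)) hfree htd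
  obtain ⟨F, ψ, hψ, hF⟩ := hL.exists_isSN
  have hkL : (ψ.comp (algebraMap k L)).fieldRange =
      Subfield.map ψ (Subfield.comap L.toSubfield.subtype k) := by
    rw [← RingHom.map_fieldRange]
    refine congrArg _ (le_antisymm ?_ fun x hx => ⟨⟨x, hx⟩, rfl⟩)
    rintro _ ⟨a, rfl⟩
    exact a.2
  exact ⟨L.toSubfield, fun x hx => L.algebraMap_mem ⟨x, hx⟩, hLK, hLd, hlL, F, ψ,
    fun x hx hx' => hψ ⟨x, hx⟩ ⟨D x, hx'⟩ rfl, hkL ▸ hF⟩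

/-- (Extension of Rosenlicht's result.) Let `K`, `M` be finitely generated
differential subfields of a common differential field extension of `k`, free over `k`. If
`trdeg(C_{KM}|C_M) = l ≥ 1`, then either `C_K ≠ C`, or `K` contains a differential subfield
`L` over `k` of transcendence degree at least `l` that embeds differentially over `k` into a
strongly normal extension of `k`. -/
theorem stmt11 {E : Type u} [Field E] [CharZero E] (D : Derivation ℤ E E)
    (k K M : Subfield E)
    (hk : ∀ x ∈ k, D x ∈ k) (hKd : ∀ x ∈ K, D x ∈ K) (hMd : ∀ x ∈ M, D x ∈ M)
    (hkK : k ≤ K) (hkM : k ≤ M)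
    (hC : IsAlgClosed ↥(constantsOf D k))
    (hKfg : ∃ s : Finset E, diffGen (⇑D) k ↑s = K)
    (hMfg : ∃ s : Finset E, diffGen (⇑D) k ↑s = M)
    (hfree : FreeOver k K M)
    (l : ℕ) (hl : 1 ≤ l)
    (htd : trdegOf (constantsOf D M) (constantsOf D (K ⊔ M)) = l) :
    constantsOf D K ≠ constantsOf D k ∨
    ∃ L : Subfield E, k ≤ L ∧ L ≤ K ∧ (∀ x ∈ L, D x ∈ L) ∧
      (l : Cardinal) ≤ trdegOf k L ∧
      ∃ (F : DFld.{u}) (ψ : ↥L →+* F.carrier),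
        (∀ (x : E) (hx : x ∈ L) (hx' : D x ∈ L), ψ ⟨D x, hx'⟩ = F.deriv (ψ ⟨x, hx⟩)) ∧
        IsSN F.deriv (Subfield.map ψ (Subfield.comap L.subtype k)) :=
  stmt11_general D k K M hk hKd hMd hkK hkM hC hfree l htd.ge
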